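/- arXiv:math-ph/9905008 — 2 statements merged into one kernel-verified Lean document; each statement's English description precedes it below -/
import Mathlib

section
/- Let α ∈ (0,1) be an irrational bounded density number and let λ ∈ ℝ \ {0}. Then there exist constants C > 0 and μ > 0 such that ‖M(λ,E,w)‖ ≤ C·|w|^μ for every word w ∈ W_α and every E in the spectrum of H_{λ,α,θ'} for some θ' ∈ [0,1). -/
open scoped Classical

noncomputable section

/-- The Sturmian potential `v_{α,θ}(n) = χ_{[1-α,1)}(nα + θ mod 1)`. -/
def sturmian (α θ : ℝ) (n : ℤ) : ℝ :=
  if Int.fract (n * α + θ) ∈ Set.Ico (1 - α) 1 then 1 else 0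

/-- Iterates of the Gauss map, starting at `α`. -/
def cfGauss (α : ℝ) : ℕ → ℝ
  | 0 => α
  | n + 1 => Int.fract (cfGauss α n)⁻¹

/-- The continued fraction coefficients `a_n` of `α = [a_1, a_2, …]` (for `n ≥ 1`):
`a_1 = ⌊1/α⌋`, `a_2 = ⌊1/fract(1/α)⌋`, … . -/
def cfCoeff (α : ℝ) (n : ℕ) : ℕ := ⌊(cfGauss α (n - 1))⁻¹⌋₊

/-- The standard words, with an index shift: `sWord a n` is `s_{n-1}`.  Thus
`sWord a 0 = s_{-1} = 1`, `sWord a 1 = s_0 = 0`, `sWord a 2 = s_1 = 0^{a_1 - 1} 1`, and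
`sWord a (n+1) = s_n = s_{n-1}^{a_n} s_{n-2}` for `n ≥ 2`. -/
def sWord (a : ℕ → ℕ) : ℕ → List ℝ
  | 0 => [1]
  | 1 => [0]
  | 2 => List.replicate (a 1 - 1) (0 : ℝ) ++ [1]
  | n + 3 => (List.replicate (a (n + 2)) (sWord a (n + 2))).flatten ++ sWord a (n + 1)

/-- The `n`-th letter (for `n ≥ 1`) of the one-sided infinite word `c_α = lim s_n`:
since `|s_n| ≥ n`, it is the `n`-th letter of `s_n`. -/
def cword (α : ℝ) (n : ℕ) : ℝ := (sWord (cfCoeff α) (n + 1)).getD (n - 1) 0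

/-- `w` is a (finite) prefix of the one-sided infinite word `c_α`. -/
def IsPrefC (α : ℝ) (w : List ℝ) : Prop :=
  w = (List.range w.length).map fun i => cword α (i + 1)

/-- The one-step transfer matrix `T(λ,E,a) = [[E - λa, -1], [1, 0]]`. -/
def transferT (lam : ℝ) (E : ℂ) (a : ℝ) : Matrix (Fin 2) (Fin 2) ℂ :=
  !![E - lam * a, -1; 1, 0]

/-- The transfer matrix over a word `w = w_1 … w_n`:
`M(λ,E,w) = T(λ,E,w_n) ⋯ T(λ,E,w_1)`. -/
def transferM (lam : ℝ) (E : ℂ) : List ℝ → Matrix (Fin 2) (Fin 2) ℂ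
  | [] => 1
  | a :: w => transferM lam E w * transferT lam E a

/-- The operator norm on `ℂ²` (with the euclidean norm) of a `2 × 2` complex matrix. -/
def opNorm (A : Matrix (Fin 2) (Fin 2) ℂ) : ℝ :=
  ‖Matrix.toEuclideanCLM (𝕜 := ℂ) A‖

/-- The word `v_{α,θ}^n = v_{α,θ}(1) … v_{α,θ}(n)`. -/
def sturmianWord (α θ : ℝ) (n : ℕ) : List ℝ :=
  (List.range n).map fun k => sturmian α θ (k + 1)

/-- The set of finite nonempty subwords of a two-sided sequence `v : ℤ → ℝ`. -/
def SubZ (v : ℤ → ℝ) : Set (List ℝ) :=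
  {w | w ≠ [] ∧ ∃ k : ℤ, w = (List.range w.length).map fun i => v (k + i)}

/-- The set of finite nonempty subwords of the one-sided word `c_α` (indexed from `1`). -/
def SubC (α : ℝ) : Set (List ℝ) :=
  {w | w ≠ [] ∧ ∃ k : ℕ, 1 ≤ k ∧ w = (List.range w.length).map fun i => cword α (k + i)}

/-- `W_α`, the set of all finite nonempty subwords of the sequences `v_{α,θ}`, `θ ∈ [0,1)`. -/
def Walpha (α : ℝ) : Set (List ℝ) :=
  {w | ∃ θ ∈ Set.Ico (0 : ℝ) 1, w ∈ SubZ (sturmian α θ)}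

/-- `α` is a bounded density number: `limsup_{n→∞} (1/n) ∑_{j=1}^n a_j < ∞` for the
continued fraction coefficients `a_j` of `α`. -/
def BoundedDensity (α : ℝ) : Prop :=
  Filter.IsBoundedUnder (· ≤ ·) Filter.atTop
    (fun n : ℕ => (1 / n : ℝ) * ∑ j ∈ Finset.Icc 1 n, (cfCoeff α j : ℝ))

end

/-!
A Sturmian word codes a rotation, that is, an exchange of two intervals. Inducing the exchange on a
subinterval desubstitutes the word by `0 ↦ 0ᵇ1`, `1 ↦ 0` with `b` a continued fraction coefficient,
and replaces the pair `(A, B)` of transfer matrices of the two letters by `(B Aᵇ, A)`.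

The Fricke character of the traces is invariant under this process. Once `tr A` and `tr B` are
larger than `2` and `tr (B A)` dominates, they remain so (the pair escapes). This is an open
condition in the energy, so at an escaping energy no periodic approximant of the potential has a
nearby periodic eigenvalue, and the energy is not in the spectrum. At energies in the spectrum the
invariant therefore bounds the traces along all induced pairs.

By the Cayley-Hamilton theorem, multiplying by a letter changes a seminorm on the span of
`1, A, B, A B` by at most a factor depending on the trace bound. Desubstituting a word once costs
a number of letters linear in the continued fraction coefficient, and a word of length `n` is
exhausted after `O(log n)` steps. Bounded density makes the total number of letters `O(log n)`,
hence the norm is polynomial in `n`.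
-/

namespace Sturmian

open Filter Topology Matrix
open scoped Matrix.Norms.L2Operator

/-! ### Substitutions -/

/-- The image of a letter under the substitution `0 ↦ 0ᵇ1`, `1 ↦ 0`.  Here and below the letters
`0` and `1` are encoded by `false` and `true`. -/
def substLetter (b : ℕ) : Bool → List Bool
  | false => List.replicate b false ++ [true]
  | true => [false]

/-- The substitution `0 ↦ 0ᵇ1`, `1 ↦ 0` on words. -/
def subst (b : ℕ) (w : List Bool) : List Bool := w.flatMap (substLetter b)

/-- The composition `τ_{b 0} ∘ ⋯ ∘ τ_{b (N-1)}` of the substitutions `τ_b : 0 ↦ 0ᵇ1`, `1 ↦ 0`. -/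
def iterSubst (b : ℕ → ℕ) : ℕ → List Bool → List Bool
  | 0, w => w
  | N + 1, w => iterSubst b N (subst (b N) w)

/-- The substitution `0 ↦ 0`, `1 ↦ 01`. -/
def splitOnes (w : List Bool) : List Bool :=
  w.flatMap fun a => bif a then [false, true] else [false]

/-- The weight of a word in which `0` counts twice and `1` once; unlike the length, it grows by a
definite factor under every substitution `0 ↦ 0ᵇ1`, `1 ↦ 0` with `b ≥ 1`. -/
def weight (w : List Bool) : ℕ := w.length + w.count false

lemma exists_eq_flatMap_append {β γ : Type*} {f : β → List γ} {L : ℕ}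
    (hf : ∀ a, (f a).length ≤ L) {w : List γ} {W : List β} (h : w <+: W.flatMap f) :
    ∃ w' u, w' <+: W ∧ u.length ≤ L ∧ w = w'.flatMap f ++ u := by
  induction W generalizing w with
  | nil => exact ⟨[], [], List.nil_prefix, by simp, by simpa using h⟩
  | cons a W ih =>
    rw [List.flatMap_cons] at h
    rcases List.prefix_or_prefix_of_prefix h (List.prefix_append (f a) _) with h' | ⟨t, rfl⟩
    · exact ⟨[], w, List.nil_prefix, h'.length_le.trans (hf a), rfl⟩
    · obtain ⟨w', u, hw', hu, rfl⟩ := ih ((List.prefix_append_right_inj _).1 h)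
      exact ⟨a :: w', u, by simpa using hw', hu, by simp⟩

lemma exists_eq_append_flatMap_append {β γ : Type*} {f : β → List γ} {L : ℕ}
    (hf : ∀ a, (f a).length ≤ L) {w : List γ} {W : List β} (h : w <:+: W.flatMap f) :
    ∃ u w' u', w' <:+: W ∧ u.length ≤ L ∧ u'.length ≤ L ∧ w = u ++ w'.flatMap f ++ u' := by
  induction W with
  | nil => exact ⟨[], [], [], List.infix_rfl, by simp, by simp, by simpa using h⟩
  | cons a W ih =>
    rw [List.flatMap_cons, List.infix_append_iff] at h
    rcases h with h | h | ⟨u, v, rfl, hu, hv⟩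
    · exact ⟨w, [], [], List.nil_infix, h.length_le.trans (hf a), by simp, by simp⟩
    · obtain ⟨u, w', u', hw', hu, hu', rfl⟩ := ih h
      exact ⟨u, w', u', hw'.trans (List.suffix_cons _ _).isInfix, hu, hu', rfl⟩
    · obtain ⟨w', u', hw', hu', rfl⟩ := exists_eq_flatMap_append hf hv
      exact ⟨u, w', u', hw'.isInfix.trans (List.suffix_cons _ _).isInfix,
        hu.length_le.trans (hf a), hu', by simp⟩

lemma length_substLetter_le (b : ℕ) (a : Bool) : (substLetter b a).length ≤ b + 1 := by
  cases a <;> simp [substLetter]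

lemma length_le_length_flatMap {β γ : Type*} {f : β → List γ} (hf : ∀ a, 1 ≤ (f a).length)
    (w : List β) : w.length ≤ (w.flatMap f).length := by
  induction w with
  | nil => simp
  | cons a w ih =>
    have := hf a
    simp only [List.length_cons, List.flatMap_cons, List.length_append]
    omega

lemma length_le_length_subst (b : ℕ) (w : List Bool) : w.length ≤ (subst b w).length :=
  length_le_length_flatMap (fun a => by cases a <;> simp [substLetter]) w

lemma subst_append (b : ℕ) (u v : List Bool) : subst b (u ++ v) = subst b u ++ subst b v :=
  List.flatMap_append

lemma subst_cons (b : ℕ) (a : Bool) (w : List Bool) :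
    subst b (a :: w) = substLetter b a ++ subst b w :=
  List.flatMap_cons

lemma subst_flatten_replicate (b k : ℕ) (w : List Bool) :
    subst b (List.replicate k w).flatten = (List.replicate k (subst b w)).flatten := by
  induction k with
  | zero => rfl
  | succ k ih => rw [List.replicate_succ, List.flatten_cons, subst_append, ih,
      List.replicate_succ, List.flatten_cons]

lemma splitOnes_append (u v : List Bool) : splitOnes (u ++ v) = splitOnes u ++ splitOnes v :=
  List.flatMap_append

lemma splitOnes_subst (b : ℕ) (w : List Bool) : splitOnes (subst b w) = subst (b + 1) w := by
  have hletter (a : Bool) : splitOnes (substLetter b a) = substLetter (b + 1) a := by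
    cases a
    · simp [splitOnes, substLetter, List.flatMap_replicate, List.replicate_succ']
    · rfl
  calc splitOnes (subst b w) = w.flatMap fun a => splitOnes (substLetter b a) := List.flatMap_assoc
    _ = subst (b + 1) w := by simp only [hletter, subst]

lemma length_le_length_splitOnes (w : List Bool) : w.length ≤ (splitOnes w).length :=
  length_le_length_flatMap (fun a => by cases a <;> simp) w

lemma length_splitOnes_le (w : List Bool) : (splitOnes w).length ≤ 2 * w.length := by
  induction w with
  | nil => rfl
  | cons a w ih =>
    have hletter : (splitOnes [a]).length ≤ 2 := by cases a <;> decide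
    rw [← List.singleton_append, splitOnes_append, List.length_append, List.length_append,
      List.length_singleton]
    omega

lemma weight_cons (a : Bool) (w : List Bool) :
    weight (a :: w) = (bif a then 1 else 2) + weight w := by
  cases a <;> simp +arith [weight]

lemma weight_append (u v : List Bool) : weight (u ++ v) = weight u + weight v := by
  simp only [weight, List.length_append, List.count_append]
  ring

lemma length_le_weight (w : List Bool) : w.length ≤ weight w := Nat.le_add_right _ _

lemma weight_le (w : List Bool) : weight w ≤ 2 * w.length := by
  have := List.count_le_length (a := false) (l := w)
  simp only [weight]
  omega

lemma weight_subst {b : ℕ} (hb : 1 ≤ b) (w : List Bool) :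
    3 * weight w ≤ 2 * weight (subst b w) := by
  induction w with
  | nil => rfl
  | cons a w ih =>
    rw [weight_cons, subst_cons, weight_append]
    have : 3 * (bif a then 1 else 2) ≤ 2 * weight (substLetter b a) := by
      cases a <;> simp +arith [substLetter, weight, hb]
    omega

lemma iterSubst_append (b : ℕ → ℕ) (N : ℕ) (u v : List Bool) :
    iterSubst b N (u ++ v) = iterSubst b N u ++ iterSubst b N v := by
  induction N generalizing u v with
  | zero => rfl
  | succ N ih => simp only [iterSubst, subst_append, ih]

lemma iterSubst_succ_eq_subst (b : ℕ → ℕ) (N : ℕ) (w : List Bool) :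
    iterSubst b (N + 1) w = subst (b 0) (iterSubst (fun n => b (n + 1)) N w) := by
  induction N generalizing w with
  | zero => rfl
  | succ N ih => rw [iterSubst, ih, iterSubst]

lemma isInfix_iterSubst (b : ℕ → ℕ) (N : ℕ) {u v : List Bool} (h : u <:+: v) :
    iterSubst b N u <:+: iterSubst b N v := by
  obtain ⟨s, t, rfl⟩ := h
  simp only [iterSubst_append]
  exact ⟨_, _, rfl⟩

lemma iterSubst_replicate (b : ℕ → ℕ) (N k : ℕ) :
    iterSubst b N (List.replicate k false) =
      (List.replicate k (iterSubst b N [false])).flatten := by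
  induction k with
  | zero => simpa using iterSubst_append b N [] []
  | succ k ih =>
    rw [List.replicate_succ, ← List.singleton_append, iterSubst_append, ih, List.replicate_succ,
      List.flatten_cons]

lemma weight_iterSubst {b : ℕ → ℕ} (hb : ∀ n, 1 ≤ b n) (N : ℕ) (w : List Bool) :
    3 ^ N * weight w ≤ 2 ^ N * weight (iterSubst b N w) := by
  induction N generalizing w with
  | zero => simp [iterSubst]
  | succ N ih =>
    calc 3 ^ (N + 1) * weight w = 3 ^ N * (3 * weight w) := by ring
      _ ≤ 3 ^ N * (2 * weight (subst (b N) w)) := Nat.mul_le_mul_left _ (weight_subst (hb N) w)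
      _ = 2 * (3 ^ N * weight (subst (b N) w)) := by ring
      _ ≤ 2 * (2 ^ N * weight (iterSubst b N (subst (b N) w))) := Nat.mul_le_mul_left _ (ih _)
      _ = 2 ^ (N + 1) * weight (iterSubst b (N + 1) w) := by rw [iterSubst]; ring

lemma tendsto_length_iterSubst {b : ℕ → ℕ} (hb : ∀ n, 1 ≤ b n) :
    Tendsto (fun N => (iterSubst b N [false]).length) atTop atTop := by
  have hpow : Tendsto (fun N : ℕ => (3 / 2 : ℝ) ^ N) atTop atTop :=
    tendsto_pow_atTop_atTop_of_one_lt (by norm_num)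
  refine tendsto_natCast_atTop_iff.1 (tendsto_atTop_mono (fun N => ?_) hpow)
  have h₁ : (3 ^ N * 2 : ℝ) ≤ 2 ^ N * weight (iterSubst b N [false]) := by
    exact_mod_cast weight_iterSubst hb N [false]
  have h₂ : (weight (iterSubst b N [false]) : ℝ) ≤ 2 * (iterSubst b N [false]).length := by
    exact_mod_cast weight_le _
  rw [div_pow, div_le_iff₀ (by positivity)]
  nlinarith [pow_pos (two_pos : (0 : ℝ) < 2) N]

/-! ### Codings of two-interval exchanges -/

/-- The word `w` is the coding of the orbit of `x` under the exchange `x ↦ x + q` on `[0, p)`,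
`x ↦ x - p` on `[p, p + q)` of two intervals, the letter `0` standing for the first of them. -/
def IsCoding (p q : ℝ) : ℝ → List Bool → Prop
  | _, [] => True
  | x, false :: w => x < p ∧ IsCoding p q (x + q) w
  | x, true :: w => p ≤ x ∧ IsCoding p q (x - p) w

/-- The orbit of `x` under the exchange of two intervals of lengths `p` and `q` avoids the
endpoints of the intervals. -/
def IsGeneric (p q x : ℝ) : Prop := ∀ m n : ℤ, x ≠ m * p + n * q

/-- The language of the exchange of two intervals of lengths `p` and `q`.  Restricting to generic
points makes it an open condition on `(p, q)`. -/
def Lang (p q : ℝ) (w : List Bool) : Prop :=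
  ∃ x, 0 < x ∧ x < p + q ∧ IsGeneric p q x ∧ IsCoding p q x w

lemma IsGeneric.add {p q x : ℝ} (h : IsGeneric p q x) (m n : ℤ) :
    IsGeneric p q (x + (m * p + n * q)) := by
  intro k l hkl
  apply h (k - m) (l - n)
  push_cast
  linarith

lemma IsGeneric.add_right {p q x : ℝ} (h : IsGeneric p q x) : IsGeneric p q (x + q) := by
  simpa using h.add 0 1

lemma IsGeneric.sub_left {p q x : ℝ} (h : IsGeneric p q x) : IsGeneric p q (x - p) := by
  simpa [sub_eq_add_neg] using h.add (-1) 0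

lemma IsGeneric.induced {p q x : ℝ} (h : IsGeneric p q x) (b : ℕ) :
    IsGeneric q (p - b * q) (p - b * q + q - x) := by
  intro m n hmn
  apply h (1 - n) (1 - b - m + n * b)
  push_cast
  linarith

lemma IsGeneric.ne_sub_mul {p q x : ℝ} (h : IsGeneric p q x) (b : ℕ) : x ≠ p - b * q := by
  simpa [sub_eq_add_neg] using h 1 (-b)

lemma dense_setOf_isGeneric (p q : ℝ) : Dense {x | IsGeneric p q x} := by
  have hcount : (Set.range fun z : ℤ × ℤ => (z.1 : ℝ) * p + z.2 * q).Countable :=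
    Set.countable_range _
  refine (hcount.dense_compl ℝ).mono ?_
  intro x hx m n hmn
  exact hx ⟨(m, n), hmn.symm⟩

lemma IsCoding.of_append {p q x : ℝ} {u v : List Bool} (h : IsCoding p q x (u ++ v)) :
    IsCoding p q x u := by
  induction u generalizing x with
  | nil => trivial
  | cons a u ih => cases a <;> exact ⟨h.1, ih h.2⟩

lemma Lang.of_append_right {p q : ℝ} (hp : 0 ≤ p) (hq : 0 ≤ q) {u v : List Bool}
    (h : Lang p q (u ++ v)) : Lang p q v := by
  induction u with
  | nil => exact h
  | cons a u ih =>
    obtain ⟨x, h₀, h₁, hgen, hcod⟩ := h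
    cases a
    · exact ih ⟨x + q, by linarith, by linarith [hcod.1], hgen.add_right, hcod.2⟩
    · have hx : x - p ≠ 0 := by simpa using hgen.sub_left 0 0
      have hpx : p ≤ x := hcod.1
      exact ih ⟨x - p, lt_of_le_of_ne (by linarith) hx.symm, by linarith, hgen.sub_left, hcod.2⟩

lemma Lang.of_isInfix {p q : ℝ} (hp : 0 ≤ p) (hq : 0 ≤ q) {u v : List Bool} (h : Lang p q v)
    (huv : u <:+: v) : Lang p q u := by
  obtain ⟨s, t, rfl⟩ := huv
  rw [List.append_assoc] at h
  obtain ⟨x, h₀, h₁, hgen, hcod⟩ := h.of_append_right hp hq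
  exact ⟨x, h₀, h₁, hgen, hcod.of_append⟩

lemma Lang.eq_replicate {p : ℝ} {w : List Bool} (h : Lang p 0 w) :
    w = List.replicate w.length false := by
  obtain ⟨x, -, hx, -, hcod⟩ := h
  rw [add_zero] at hx
  rw [List.eq_replicate_iff]
  refine ⟨rfl, ?_⟩
  induction w with
  | nil => simp
  | cons a w ih =>
    cases a
    · simpa using ih (by simpa using hcod.2)
    · exact absurd hcod.1 hx.not_ge

-- Genericity makes all the inequalities of a coding strict.
lemma IsCoding.eventually_nhds {p q x : ℝ} {w : List Bool} (h : IsCoding p q x w)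
    (hgen : IsGeneric p q x) :
    ∀ᶠ z : (ℝ × ℝ) × ℝ in 𝓝 ((p, q), x), IsCoding z.1.1 z.1.2 z.2 w := by
  induction w generalizing x with
  | nil => exact Eventually.of_forall fun _ => trivial
  | cons a w ih =>
    cases a
    · have htail : ContinuousAt (fun z : (ℝ × ℝ) × ℝ => (z.1, z.2 + z.1.2)) ((p, q), x) := by
        fun_prop
      exact ((continuousAt_snd.eventually_lt (by fun_prop) h.1).and
        (htail.eventually (ih h.2 hgen.add_right)))
    · have htail : ContinuousAt (fun z : (ℝ × ℝ) × ℝ => (z.1, z.2 - z.1.1)) ((p, q), x) := by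
        fun_prop
      have hpx : p < x := lt_of_le_of_ne h.1 (by simpa using (hgen 1 0).symm)
      have hlt : ∀ᶠ z : (ℝ × ℝ) × ℝ in 𝓝 ((p, q), x), z.1.1 < z.2 :=
        ContinuousAt.eventually_lt (f := fun z : (ℝ × ℝ) × ℝ => z.1.1) (by fun_prop)
          continuousAt_snd hpx
      exact (hlt.mono fun _ => le_of_lt).and (htail.eventually (ih h.2 hgen.sub_left))

lemma Lang.eventually_nhds {p q : ℝ} {w : List Bool} (h : Lang p q w) :
    ∀ᶠ v : ℝ × ℝ in 𝓝 (p, q), Lang v.1 v.2 w := by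
  obtain ⟨x, h₀, h₁, hgen, hcod⟩ := h
  have hpos : ∀ᶠ z : (ℝ × ℝ) × ℝ in 𝓝 ((p, q), x), 0 < z.2 ∧ z.2 < z.1.1 + z.1.2 :=
    (continuousAt_const.eventually_lt continuousAt_snd h₀).and
      (continuousAt_snd.eventually_lt (by fun_prop) h₁)
  filter_upwards [((hcod.eventually_nhds hgen).and hpos).curry_nhds] with v hv
  obtain ⟨y, hygen, hycod, hy₀, hy₁⟩ :=
    (dense_setOf_isGeneric v.1 v.2).inter_nhds_nonempty hv
  exact ⟨y, hy₀, hy₁, hygen, hycod⟩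

lemma IsCoding.eventually_nhdsGT {p q x : ℝ} {w : List Bool} (h : IsCoding p q x w) :
    ∀ᶠ y in 𝓝[>] x, IsCoding p q y w := by
  induction w generalizing x with
  | nil => exact Eventually.of_forall fun _ => trivial
  | cons a w ih =>
    cases a
    · have htail := ih h.2
      rw [← map_add_right_nhdsGT, eventually_map] at htail
      exact ((eventually_lt_nhds h.1).filter_mono nhdsWithin_le_nhds).and htail
    · have htail := ih h.2
      rw [sub_eq_add_neg, ← map_add_right_nhdsGT, eventually_map] at htail
      filter_upwards [self_mem_nhdsWithin, htail] with y hy hcod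
      exact ⟨h.1.trans (le_of_lt hy), by rwa [sub_eq_add_neg]⟩

lemma IsCoding.lang {p q x : ℝ} {w : List Bool} (h : IsCoding p q x w) (h₀ : 0 ≤ x)
    (h₁ : x < p + q) : Lang p q w := by
  have hright : ∀ᶠ y in 𝓝[>] x, 0 < y ∧ y < p + q ∧ IsCoding p q y w := by
    filter_upwards [self_mem_nhdsWithin, h.eventually_nhdsGT,
      (eventually_lt_nhds h₁).filter_mono nhdsWithin_le_nhds] with y hxy hcod hy
    exact ⟨h₀.trans_lt hxy, hy, hcod⟩
  obtain ⟨u, hxu, hu⟩ := mem_nhdsGT_iff_exists_Ioo_subset.1 hright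
  obtain ⟨y, hygen, hy⟩ := (dense_setOf_isGeneric p q).exists_between hxu
  obtain ⟨hy₀, hy₁, hycod⟩ := hu hy
  exact ⟨y, hy₀, hy₁, hygen, hycod⟩

lemma Lang.splitOnes {p q : ℝ} (hp : 0 ≤ p) (hq : 0 ≤ q) {w : List Bool} (h : Lang p q w) :
    Lang (p + q) q (splitOnes w) := by
  obtain ⟨x, h₀, h₁, hgen, hcod⟩ := h
  have hgen' : IsGeneric (p + q) q x := fun m n hmn => hgen m (m + n) (by push_cast; linarith)
  refine ⟨x, h₀, by linarith, hgen', ?_⟩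
  clear h₀ hgen hgen'
  induction w generalizing x with
  | nil => trivial
  | cons a w ih =>
    cases a
    · exact ⟨h₁, ih _ (by linarith [hcod.1]) hcod.2⟩
    · refine ⟨h₁, ?_, ?_⟩
      · linarith [hcod.1]
      · rw [add_sub_add_right_eq_sub]
        exact ih _ (by linarith) hcod.2

/-! ### Desubstitution -/

-- A point of `(p - bq, p - bq + q)` spends `b` further steps in the first interval, then one step
-- in the second, and comes back to `y - (p - bq)`.
lemma IsCoding.prefix_block {p q : ℝ} (hq : 0 ≤ q) (b : ℕ) {y : ℝ} {w : List Bool}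
    (h₁ : p - b * q ≤ y) (h₂ : y < p - b * q + q) (h : IsCoding p q y w) :
    w <+: substLetter b false ∨
      ∃ w', w = substLetter b false ++ w' ∧ IsCoding p q (y - (p - b * q)) w' := by
  induction b generalizing y w with
  | zero =>
    simp only [CharP.cast_eq_zero, zero_mul, sub_zero] at h₁ h₂ ⊢
    rcases w with _ | ⟨_ | _, w⟩
    · exact .inl List.nil_prefix
    · exact absurd h.1 h₁.not_gt
    · exact .inr ⟨w, rfl, h.2⟩
  | succ b ih =>
    push_cast at h₁ h₂ ⊢
    have hbq : 0 ≤ b * q := by positivity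
    rcases w with _ | ⟨_ | _, w⟩
    · exact .inl List.nil_prefix
    · rcases ih (by linarith) (by linarith) h.2 with hw | ⟨w', rfl, hw'⟩
      · exact .inl (by simpa [substLetter, List.replicate_succ] using hw)
      · refine .inr ⟨w', by simp [substLetter, List.replicate_succ], ?_⟩
        convert hw' using 1
        ring
    · linarith [h.1]

lemma IsCoding.exists_prefix_subst {p q : ℝ} (hq : 0 ≤ q) {b : ℕ} (hpq : b * q ≤ p) {y : ℝ}
    {w : List Bool} (h₁ : y < p - b * q + q) (hgen : IsGeneric p q y) (h : IsCoding p q y w) :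
    ∃ W, w <+: subst b W ∧ IsCoding q (p - b * q) (p - b * q + q - y) W := by
  induction hn : w.length using Nat.strong_induction_on generalizing w y with
  | _ n ih =>
  have hbq : 0 ≤ b * q := by positivity
  rcases (hgen.ne_sub_mul b).lt_or_gt with hy | hy
  · rcases w with _ | ⟨_ | _, w⟩
    · exact ⟨[], List.nil_prefix, trivial⟩
    · obtain ⟨W, hW, hcod⟩ :=
        ih w.length (by simp [← hn]) (by linarith) hgen.add_right h.2 rfl
      refine ⟨true :: W, by simpa [subst_cons, substLetter] using hW, by linarith, ?_⟩
      rwa [sub_sub]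
    · linarith [h.1]
  · rcases h.prefix_block hq b hy.le h₁ with hw | ⟨w', rfl, hw'⟩
    · exact ⟨[false], by simpa [subst] using hw, by linarith, trivial⟩
    · have hgen' : IsGeneric p q (y - (p - b * q)) := by
        convert hgen.add (-1) b using 1
        push_cast
        ring
      obtain ⟨W, hW, hcod⟩ :=
        ih w'.length (by simp +arith [← hn, substLetter]) (by linarith) hgen' hw' rfl
      refine ⟨false :: W, ?_, by linarith, ?_⟩
      · rwa [subst_cons, List.prefix_append_right_inj]
      · convert hcod using 1
        ring

-- Prepending letters `0` moves the initial point into the domain of the induced exchange.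
lemma IsCoding.exists_suffix {p q : ℝ} (hq : 0 ≤ q) {b : ℕ} (hpq : b * q ≤ p) {n : ℕ} (hn : n ≤ b)
    {x : ℝ} {w : List Bool} (h₀ : 0 < x) (h₁ : x < p - b * q + q + n * q)
    (hgen : IsGeneric p q x) (h : IsCoding p q x w) :
    ∃ y v, 0 < y ∧ y < p - b * q + q ∧ IsGeneric p q y ∧ IsCoding p q y v ∧ w <:+ v := by
  induction n generalizing x w with
  | zero => exact ⟨x, w, h₀, by simpa using h₁, hgen, h, List.suffix_rfl⟩
  | succ n ih =>
    push_cast at h₁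
    rcases lt_or_ge x (p - b * q + q) with hx | hx
    · exact ⟨x, w, h₀, hx, hgen, h, List.suffix_rfl⟩
    have hnb : (n + 1) * q ≤ b * q := by gcongr; exact_mod_cast hn
    have hgen' : IsGeneric p q (x - q) := by simpa [sub_eq_add_neg] using hgen.add 0 (-1)
    have hne : x - q ≠ 0 := by simpa using hgen' 0 0
    obtain ⟨y, v, hy₀, hy₁, hygen, hcod, hv⟩ :=
      ih (by omega) (w := false :: w) (lt_of_le_of_ne (by linarith) hne.symm) (by linarith) hgen'
        ⟨by linarith, by simpa using h⟩
    exact ⟨y, v, hy₀, hy₁, hygen, hcod, (List.suffix_cons _ _).trans hv⟩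

lemma Lang.exists_infix_subst {p q : ℝ} (hq : 0 ≤ q) {b : ℕ} (hpq : b * q ≤ p) {w : List Bool}
    (h : Lang p q w) : ∃ W, w <:+: subst b W ∧ Lang q (p - b * q) W := by
  obtain ⟨x, h₀, h₁, hgen, hcod⟩ := h
  obtain ⟨y, v, hy₀, hy₁, hygen, hycod, hwv⟩ :=
    hcod.exists_suffix hq hpq le_rfl h₀ (by linarith) hgen
  obtain ⟨W, hvW, hW⟩ := hycod.exists_prefix_subst hq hpq hy₁ hygen
  exact ⟨W, hwv.isInfix.trans hvW.isInfix, _, by linarith, by linarith, hygen.induced b, hW⟩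

lemma Lang.exists_eq_subst {p q : ℝ} (hq : 0 ≤ q) {b : ℕ} (hpq : b * q ≤ p) {w : List Bool}
    (h : Lang p q w) : ∃ u w' u', Lang q (p - b * q) w' ∧ u.length ≤ b + 1 ∧ u'.length ≤ b + 1 ∧
      w = u ++ subst b w' ++ u' := by
  obtain ⟨W, hwW, hW⟩ := h.exists_infix_subst hq hpq
  obtain ⟨u, w', u', hw', hu, hu', rfl⟩ :=
    exists_eq_append_flatMap_append (length_substLetter_le b) hwW
  exact ⟨u, w', u', hW.of_isInfix hq (by linarith) hw', hu, hu', rfl⟩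

/-! ### Iterated inducing and rational approximation -/

/-- `(r n, r (n + 1))` are the lengths of the exchange obtained from `(r 0, r 1)` by `n` steps of
inducing, the `n`-th of which is described by the substitution `0 ↦ 0ᵇ1`, `1 ↦ 0` with
`b = b n`. -/
structure InducedLengths (b : ℕ → ℕ) (r : ℕ → ℝ) : Prop where
  pos : ∀ n, 0 < r n
  eq_add : ∀ n, r n = b n * r (n + 1) + r (n + 2)

/-- The lengths of the exchange from which `N` steps of inducing with parameters
`b 0, …, b (N - 1)` produce the lengths `v`. -/
def liftLengths (b : ℕ → ℕ) : ℕ → ℝ × ℝ → ℝ × ℝ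
  | 0, v => v
  | N + 1, v => liftLengths b N (b N * v.1 + v.2, v.1)

namespace InducedLengths

variable {b : ℕ → ℕ} {r : ℕ → ℝ}

lemma mul_le (h : InducedLengths b r) (n : ℕ) : b n * r (n + 1) ≤ r n := by
  linarith [h.eq_add n, h.pos (n + 2)]

lemma sub_eq (h : InducedLengths b r) (n : ℕ) : r n - b n * r (n + 1) = r (n + 2) := by
  linarith [h.eq_add n]

lemma succ (h : InducedLengths b r) :
    InducedLengths (fun n => b (n + 1)) (fun n => r (n + 1)) :=
  ⟨fun n => h.pos (n + 1), fun n => h.eq_add (n + 1)⟩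

lemma tendsto_zero (h : InducedLengths b r) (hb : ∀ n, 1 ≤ b n) : Tendsto r atTop (𝓝 0) := by
  have hadd (n : ℕ) : r (n + 1) + r (n + 2) ≤ r n := by
    have : (1 : ℝ) ≤ b n := by exact_mod_cast hb n
    nlinarith [h.eq_add n, h.pos (n + 1)]
  have hanti : Antitone r :=
    antitone_nat_of_succ_le fun n => by linarith [hadd n, h.pos (n + 2)]
  have hbdd : BddBelow (Set.range r) := ⟨0, by rintro _ ⟨n, rfl⟩; exact (h.pos n).le⟩
  have hlim := tendsto_atTop_ciInf hanti hbdd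
  have hle : (⨅ n, r n) + ⨅ n, r n ≤ ⨅ n, r n :=
    le_of_tendsto_of_tendsto' ((hlim.comp (tendsto_add_atTop_nat 1)).add
      (hlim.comp (tendsto_add_atTop_nat 2))) hlim hadd
  have hnonneg : 0 ≤ ⨅ n, r n := le_ciInf fun n => (h.pos n).le
  rwa [show ⨅ n, r n = 0 by linarith] at hlim

end InducedLengths

lemma liftLengths_smul (b : ℕ → ℕ) (N : ℕ) (c : ℝ) (v : ℝ × ℝ) :
    liftLengths b N (c • v) = c • liftLengths b N v := by
  induction N generalizing v with
  | zero => rfl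
  | succ N ih =>
    rw [liftLengths, liftLengths, ← ih]
    congr 1
    ext <;> simp
    ring

lemma sum_le_sum_liftLengths {b : ℕ → ℕ} (hb : ∀ n, 1 ≤ b n) (N : ℕ) {v : ℝ × ℝ} (h₁ : 0 ≤ v.1)
    (h₂ : 0 ≤ v.2) : v.1 + v.2 ≤ (liftLengths b N v).1 + (liftLengths b N v).2 := by
  induction N generalizing v with
  | zero => rfl
  | succ N ih =>
    have hb' : (1 : ℝ) ≤ b N := by exact_mod_cast hb N
    refine le_trans ?_ (ih (v := (b N * v.1 + v.2, v.1)) (by positivity) h₁)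
    dsimp only
    nlinarith

lemma InducedLengths.abs_cross_liftLengths {b : ℕ → ℕ} {r : ℕ → ℝ} (h : InducedLengths b r)
    (N : ℕ) (v : ℝ × ℝ) :
    |(liftLengths b N v).1 * r 1 - (liftLengths b N v).2 * r 0| =
      |v.1 * r (N + 1) - v.2 * r N| := by
  induction N generalizing v with
  | zero => rfl
  | succ N ih =>
    rw [liftLengths, ih, h.eq_add N, ← abs_neg]
    congr 1
    ring

-- Inducing is linear with determinant `±1`, so the direction `(1, 0)` lifts to a direction which
-- converges to that of `(r 0, r 1)`; the scalar `c` normalises the sum of the two lengths.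
lemma InducedLengths.exists_abs_liftLengths_sub_le {b : ℕ → ℕ} {r : ℕ → ℝ}
    (h : InducedLengths b r) (hb : ∀ n, 1 ≤ b n) (N : ℕ) :
    ∃ c, 0 ≤ c ∧ |(liftLengths b N (c, 0)).1 - r 0| ≤ r (N + 1) ∧
      |(liftLengths b N (c, 0)).2 - r 1| ≤ r (N + 1) := by
  set v := liftLengths b N (1, 0)
  have hsum : 0 < r 0 + r 1 := add_pos (h.pos 0) (h.pos 1)
  have hv₁ : 1 ≤ v.1 + v.2 := by
    simpa using sum_le_sum_liftLengths hb N (v := (1, 0)) zero_le_one le_rfl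
  set c := (r 0 + r 1) / (v.1 + v.2) with hc
  have hcpos : 0 ≤ c := by positivity
  have hcv : c * v.1 + c * v.2 = r 0 + r 1 := by rw [hc]; field_simp
  have hlift : liftLengths b N (c, 0) = (c * v.1, c * v.2) := by
    simpa [Prod.ext_iff] using liftLengths_smul b N c (1, 0)
  have hcross := h.abs_cross_liftLengths N (c, 0)
  rw [hlift, zero_mul, sub_zero, abs_of_nonneg (mul_nonneg hcpos (h.pos _).le)] at hcross
  have hnear : |c * v.1 - r 0| ≤ r (N + 1) := by
    refine le_of_mul_le_mul_right ?_ hsum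
    calc |c * v.1 - r 0| * (r 0 + r 1) = |(c * v.1 - r 0) * (r 0 + r 1)| := by
          rw [abs_mul, abs_of_pos hsum]
      _ = |c * v.1 * r 1 - c * v.2 * r 0| := by congr 1; linear_combination r 0 * hcv
      _ = c * r (N + 1) := hcross
      _ ≤ (r 0 + r 1) * r (N + 1) := by
          refine mul_le_mul_of_nonneg_right ?_ (h.pos _).le
          rw [← hcv, ← mul_add]
          exact le_mul_of_one_le_right hcpos hv₁
      _ = r (N + 1) * (r 0 + r 1) := mul_comm _ _
  refine ⟨c, hcpos, by rwa [hlift], ?_⟩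
  rw [hlift, show c * v.2 - r 1 = -(c * v.1 - r 0) by linarith, abs_neg]
  exact hnear

lemma Lang.exists_isInfix_iterSubst {b : ℕ → ℕ} {N : ℕ} {v : ℝ × ℝ} (h₁ : 0 ≤ v.1) (h₂ : 0 ≤ v.2)
    {w : List Bool} (h : Lang (liftLengths b N v).1 (liftLengths b N v).2 w) :
    ∃ W, w <:+: iterSubst b N W ∧ Lang v.1 v.2 W := by
  induction N generalizing v with
  | zero => exact ⟨w, List.infix_rfl, h⟩
  | succ N ih =>
    obtain ⟨W', hw, hW'⟩ := ih (v := (b N * v.1 + v.2, v.1)) (by positivity) h₁ h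
    obtain ⟨W, hW, hlang⟩ := hW'.exists_infix_subst h₁ (b := b N) (by simpa using h₂)
    exact ⟨W, hw.trans (isInfix_iterSubst b N hW), by simpa using hlang⟩

lemma Lang.eventually_isInfix_iterSubst_replicate {b : ℕ → ℕ} {r : ℕ → ℝ}
    (hr : InducedLengths b r) (hb : ∀ n, 1 ≤ b n) {w : List Bool} (h : Lang (r 0) (r 1) w) :
    ∀ᶠ N in atTop, ∃ k, w <:+: iterSubst b N (List.replicate k false) := by
  choose c hc hc₁ hc₂ using hr.exists_abs_liftLengths_sub_le hb
  have hr₀ := (hr.tendsto_zero hb).comp (tendsto_add_atTop_nat 1)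
  have hlim : Tendsto (fun N => liftLengths b N (c N, 0)) atTop (𝓝 (r 0, r 1)) :=
    (tendsto_sub_nhds_zero_iff.1 (squeeze_zero_norm hc₁ hr₀)).prodMk_nhds
      (tendsto_sub_nhds_zero_iff.1 (squeeze_zero_norm hc₂ hr₀))
  filter_upwards [hlim.eventually h.eventually_nhds] with N hN
  obtain ⟨W, hwW, hW⟩ := hN.exists_isInfix_iterSubst (hc N) le_rfl
  exact ⟨W.length, hW.eq_replicate ▸ hwW⟩

/-! ### Sturmian sequences -/

/-- The factor `v_k v_{k+1} … v_{k+n-1}` of a two-sided sequence. -/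
def factor {β : Type*} (v : ℤ → β) (k : ℤ) (n : ℕ) : List β :=
  (List.range n).map fun i : ℕ => v (k + i)

/-- The letters `0` and `1` as real numbers. -/
def letterValue (a : Bool) : ℝ := bif a then 1 else 0

lemma length_factor {β : Type*} (v : ℤ → β) (k : ℤ) (n : ℕ) : (factor v k n).length = n := by
  simp [factor]

lemma factor_succ {β : Type*} (v : ℤ → β) (k : ℤ) (n : ℕ) :
    factor v k (n + 1) = v k :: factor v (k + 1) n := by
  simp only [factor, List.range_succ_eq_map, List.map_cons, List.map_map]
  congr 1
  · simp
  · refine List.map_congr_left fun i _ => ?_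
    simp only [Function.comp_apply]
    push_cast
    congr 1
    ring

lemma exists_isCoding_factor_sturmian {α : ℝ} (hα : α ∈ Set.Ioo (0 : ℝ) 1) (θ : ℝ) (k : ℤ)
    (n : ℕ) : ∃ w, IsCoding (1 - α) α (Int.fract (k * α + θ)) w ∧
      factor (sturmian α θ) k n = w.map letterValue := by
  induction n generalizing k with
  | zero => exact ⟨[], trivial, rfl⟩
  | succ n ih =>
    obtain ⟨w, hw, hfactor⟩ := ih (k + 1)
    set x := Int.fract (k * α + θ) with hx
    have hx₀ : 0 ≤ x := Int.fract_nonneg _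
    have hx₁ : x < 1 := Int.fract_lt_one _
    have hnext : Int.fract ((k + 1 : ℤ) * α + θ) = Int.fract (x + α) := by
      rw [show ((k + 1 : ℤ) : ℝ) * α + θ = x + α + ⌊k * α + θ⌋ by
        rw [hx, Int.fract]; push_cast; ring, Int.fract_add_intCast]
    rcases lt_or_ge x (1 - α) with hlt | hge
    · have hcod : Int.fract (x + α) = x + α :=
        Int.fract_eq_self.2 ⟨by linarith [hα.1], by linarith⟩
      refine ⟨false :: w, ⟨hlt, by rwa [← hcod, ← hnext]⟩, ?_⟩
      rw [factor_succ, hfactor, List.map_cons, sturmian, if_neg fun h => h.1.not_gt hlt]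
      rfl
    · have hcod : Int.fract (x + α) = x - (1 - α) := by
        rw [Int.fract_eq_iff]
        exact ⟨by linarith, by linarith [hα.2], 1, by push_cast; ring⟩
      refine ⟨true :: w, ⟨hge, by rwa [← hcod, ← hnext]⟩, ?_⟩
      rw [factor_succ, hfactor, List.map_cons, sturmian, if_pos ⟨hge, hx₁⟩]
      rfl

lemma exists_lang_factor_sturmian {α : ℝ} (hα : α ∈ Set.Ioo (0 : ℝ) 1) (θ : ℝ) (k : ℤ) (n : ℕ) :
    ∃ w, Lang (1 - α) α w ∧ factor (sturmian α θ) k n = w.map letterValue := by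
  obtain ⟨w, hw, hfactor⟩ := exists_isCoding_factor_sturmian hα θ k n
  exact ⟨w, hw.lang (Int.fract_nonneg _) (by simpa using Int.fract_lt_one _), hfactor⟩

lemma exists_lang_of_mem_Walpha {α : ℝ} (hα : α ∈ Set.Ioo (0 : ℝ) 1) {w : List ℝ}
    (hw : w ∈ Walpha α) : ∃ u, Lang (1 - α) α u ∧ w = u.map letterValue := by
  obtain ⟨θ, -, -, k, hwk⟩ := hw
  have hfactor : w = factor (sturmian α θ) k w.length := by
    rw [factor]
    convert hwk using 1
    simp only [List.bind_eq_flatMap, List.pure_def, ← List.map_eq_flatMap, List.map_map]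
    rfl
  rw [hfactor]
  exact exists_lang_factor_sturmian hα θ k w.length

/-! ### The continued fraction expansion -/

lemma cfGauss_irrational {α : ℝ} (hirr : Irrational α) (n : ℕ) : Irrational (cfGauss α n) := by
  induction n with
  | zero => exact hirr
  | succ n ih => exact ih.inv.sub_intCast _

lemma cfGauss_mem_Ioo {α : ℝ} (hirr : Irrational α) (hα : α ∈ Set.Ioo (0 : ℝ) 1) (n : ℕ) :
    cfGauss α n ∈ Set.Ioo (0 : ℝ) 1 := by
  cases n with
  | zero => exact hα
  | succ n =>
    exact ⟨(Int.fract_nonneg _).lt_of_ne (cfGauss_irrational hirr (n + 1)).ne_zero.symm,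
      Int.fract_lt_one _⟩

lemma one_le_cfCoeff_succ {α : ℝ} (hirr : Irrational α) (hα : α ∈ Set.Ioo (0 : ℝ) 1) (n : ℕ) :
    1 ≤ cfCoeff α (n + 1) := by
  obtain ⟨h₀, h₁⟩ := cfGauss_mem_Ioo hirr hα n
  exact (Nat.one_le_floor_iff _).2 ((one_le_inv₀ h₀).2 h₁.le)

lemma inducedLengths_cfGauss {α : ℝ} (hirr : Irrational α) (hα : α ∈ Set.Ioo (0 : ℝ) 1) :
    InducedLengths (fun n => cfCoeff α (n + 1)) (fun n => ∏ i ∈ Finset.range n, cfGauss α i) where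
  pos n := Finset.prod_pos fun i _ => (cfGauss_mem_Ioo hirr hα i).1
  eq_add n := by
    have hg : 0 < cfGauss α n := (cfGauss_mem_Ioo hirr hα n).1
    have hfract : cfCoeff α (n + 1) + cfGauss α (n + 1) = (cfGauss α n)⁻¹ := by
      rw [cfCoeff, Nat.add_sub_cancel, cfGauss, natCast_floor_eq_intCast_floor (by positivity)]
      exact Int.floor_add_fract _
    simp only [Finset.prod_range_succ]
    field_simp at hfract
    linear_combination -(∏ i ∈ Finset.range n, cfGauss α i) * hfract

/-! ### Products along words -/

section WordProd

variable {M : Type*} [Monoid M]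

/-- The product over a word, with factors `p.1` for the letter `0` and `p.2` for the letter `1`.
As for transfer matrices, later letters contribute factors further to the left. -/
def wordProd (p : M × M) : List Bool → M
  | [] => 1
  | a :: w => wordProd p w * (bif a then p.2 else p.1)

/-- The products over the images of the letters `0` and `1` under the substitution `0 ↦ 0ᵇ1`,
`1 ↦ 0`. -/
def induce (b : ℕ) (p : M × M) : M × M := (p.2 * p.1 ^ b, p.1)

/-- The products over the images of the letters `0` and `1` under the iterated substitution
`iterSubst b n`. -/
def inducedPair (b : ℕ → ℕ) (p : M × M) : ℕ → M × M
  | 0 => p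
  | n + 1 => induce (b n) (inducedPair b p n)

lemma wordProd_append (p : M × M) (u v : List Bool) :
    wordProd p (u ++ v) = wordProd p v * wordProd p u := by
  induction u with
  | nil => simp [wordProd]
  | cons a u ih => simp [wordProd, ih, mul_assoc]

lemma wordProd_replicate_false (p : M × M) (n : ℕ) :
    wordProd p (List.replicate n false) = p.1 ^ n := by
  induction n with
  | zero => simp [wordProd]
  | succ n ih => simp [List.replicate_succ, wordProd, ih, pow_succ]

lemma wordProd_subst (p : M × M) (b : ℕ) (w : List Bool) :
    wordProd p (subst b w) = wordProd (induce b p) w := by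
  induction w with
  | nil => rfl
  | cons a w ih =>
    have hletter : wordProd p (substLetter b a) =
        bif a then (induce b p).2 else (induce b p).1 := by
      cases a
      · simp [substLetter, wordProd_append, wordProd_replicate_false, wordProd, induce]
      · simp [substLetter, wordProd, induce]
    rw [subst_cons, wordProd_append, ih, hletter, wordProd]

lemma wordProd_iterSubst (b : ℕ → ℕ) (p : M × M) (n : ℕ) (w : List Bool) :
    wordProd p (iterSubst b n w) = wordProd (inducedPair b p n) w := by
  induction n generalizing w with
  | zero => rfl
  | succ n ih => rw [iterSubst, ih, wordProd_subst, inducedPair]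

end WordProd

/-! ### Trace dynamics -/

section TraceRecurrence

variable {𝕜 : Type*} [NormedField 𝕜] {x : 𝕜} {y : ℕ → 𝕜}

/-- The Fricke character `x² + y² + z² - xyz - 4`, which for `x = tr A`, `y = tr B`, `z = tr (BA)`
is two less than the trace of the commutator of the unimodular matrices `A` and `B`. -/
def fricke {R : Type*} [CommRing R] (x y z : R) : R := x ^ 2 + y ^ 2 + z ^ 2 - x * y * z - 4

lemma fricke_recurrence {R : Type*} [CommRing R] {x : R} {y : ℕ → R}
    (hy : ∀ j, y (j + 2) = x * y (j + 1) - y j) (j : ℕ) :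
    fricke x (y j) (y (j + 1)) = fricke x (y 0) (y 1) := by
  induction j with
  | zero => rfl
  | succ j ih =>
    rw [← ih, hy]
    simp only [fricke]
    ring

lemma norm_le_of_fricke {x y z : 𝕜} (hy : ‖y‖ ≤ 2) (hz : ‖z‖ ≤ 2) :
    ‖x‖ ≤ ‖fricke x y z + 4‖ + 8 := by
  have hsq : x * x = fricke x y z + 4 - y * y - z * z + x * (y * z) := by
    simp only [fricke]
    ring
  have hle : ‖x‖ * ‖x‖ ≤ ‖fricke x y z + 4‖ + ‖y‖ * ‖y‖ + ‖z‖ * ‖z‖ + ‖x‖ * (‖y‖ * ‖z‖) := by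
    rw [← norm_mul, hsq]
    refine (norm_add_le _ _).trans ?_
    have h₁ := norm_sub_le (fricke x y z + 4 - y * y) (z * z)
    have h₂ := norm_sub_le (fricke x y z + 4) (y * y)
    simp only [norm_mul] at h₁ h₂ ⊢
    linarith
  by_contra! hlt
  have hyz : ‖y‖ * ‖z‖ ≤ 2 * 2 := by gcongr
  have hyy : ‖y‖ * ‖y‖ ≤ 2 * 2 := by gcongr
  have hzz : ‖z‖ * ‖z‖ ≤ 2 * 2 := by gcongr
  nlinarith [norm_nonneg x, norm_nonneg (fricke x y z + 4)]

-- In the recurrence `y (j + 2) = x * y (j + 1) - y j` with `2 < ‖x‖`, the first term is dominant as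
-- soon as it exceeds the second one, and it stays dominant.
lemma mul_norm_lt_of_norm_lt (hy : ∀ j, y (j + 2) = x * y (j + 1) - y j) (hx : 2 < ‖x‖) {j : ℕ}
    (h₁ : 2 < ‖y (j + 1)‖) (h : ‖y j‖ < ‖y (j + 1)‖) : ‖x‖ * ‖y (j + 1)‖ < 2 * ‖y (j + 2)‖ := by
  have hsub := norm_sub_norm_le (x * y (j + 1)) (y j)
  rw [← hy, norm_mul] at hsub
  nlinarith

lemma escape_recurrence (hy : ∀ j, y (j + 2) = x * y (j + 1) - y j) (hx : 2 < ‖x‖) {i j : ℕ}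
    (hij : i ≤ j) (h : 2 < ‖y i‖ ∧ ‖x‖ * ‖y i‖ < 2 * ‖y (i + 1)‖) :
    2 < ‖y j‖ ∧ ‖x‖ * ‖y j‖ < 2 * ‖y (j + 1)‖ := by
  induction j, hij using Nat.le_induction with
  | base => exact h
  | succ j _ ih =>
    have hlt : ‖y j‖ < ‖y (j + 1)‖ := by nlinarith [norm_nonneg (y j)]
    exact ⟨ih.1.trans hlt, mul_norm_lt_of_norm_lt hy hx (ih.1.trans hlt) hlt⟩

lemma norm_le_two_of_not_escape (hy : ∀ j, y (j + 2) = x * y (j + 1) - y j) (hx : 2 < ‖x‖)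
    (h₀ : ‖y 0‖ ≤ 2) {n : ℕ} (hn : ¬ (2 < ‖y n‖ ∧ ‖x‖ * ‖y n‖ < 2 * ‖y (n + 1)‖)) {j : ℕ}
    (hj : j ≤ n) : ‖y j‖ ≤ 2 := by
  induction j with
  | zero => exact h₀
  | succ j ih =>
    by_contra! hlt
    exact hn (escape_recurrence hy hx hj
      ⟨hlt, mul_norm_lt_of_norm_lt hy hx hlt ((ih (by omega)).trans_lt hlt)⟩)

end TraceRecurrence

section CayleyHamilton

variable {R : Type*} [CommRing R] {A B : Matrix (Fin 2) (Fin 2) R}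

lemma mul_self_of_det_eq_one (hA : A.det = 1) : A * A = A.trace • A - 1 := by
  nontriviality R
  have h := A.aeval_self_charpoly
  simp only [charpoly_fin_two, hA, map_add, map_sub, map_mul, map_pow, Polynomial.aeval_X,
    Polynomial.aeval_C, map_one, ← Algebra.smul_def] at h
  rw [← pow_two, ← sub_eq_zero, ← h]
  abel

lemma mul_eq_polarization (A B : Matrix (Fin 2) (Fin 2) R) :
    B * A = ((B * A).trace - A.trace * B.trace) • 1 + B.trace • A + A.trace • B - A * B := by
  ext i j
  fin_cases i <;> fin_cases j <;> simp [Matrix.mul_apply, trace_fin_two] <;> ring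

lemma mul_mul_self_of_det_eq_one (hB : B.det = 1) :
    B * (A * B) = A - A.trace • 1 + (B * A).trace • B := by
  have h := congrArg (· * B) (mul_eq_polarization A B)
  simp only [sub_mul, add_mul, smul_mul_assoc, one_mul, mul_assoc, mul_self_of_det_eq_one hB,
    mul_sub, mul_smul_comm, mul_one] at h
  rw [h]
  module

/-- The traces `tr (B * A ^ j)` for a pair `p = (A, B)`. -/
def traceSeq (p : Matrix (Fin 2) (Fin 2) R × Matrix (Fin 2) (Fin 2) R) (j : ℕ) : R :=
  (p.2 * p.1 ^ j).trace

variable {p : Matrix (Fin 2) (Fin 2) R × Matrix (Fin 2) (Fin 2) R}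

lemma traceSeq_zero : traceSeq p 0 = p.2.trace := by simp [traceSeq]

lemma traceSeq_one : traceSeq p 1 = (p.2 * p.1).trace := by simp [traceSeq]

lemma traceSeq_add_two (hp : p.1.det = 1) (j : ℕ) :
    traceSeq p (j + 2) = p.1.trace * traceSeq p (j + 1) - traceSeq p j := by
  rw [traceSeq, pow_add, pow_two, mul_self_of_det_eq_one hp]
  simp [traceSeq, mul_sub, pow_succ]

lemma traceSeq_induce_one (b : ℕ) : traceSeq (induce b p) 1 = traceSeq p (b + 1) := by
  rw [traceSeq_one, induce, trace_mul_comm, mul_assoc, ← pow_succ, traceSeq]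

lemma det_inducedPair (b : ℕ → ℕ) (h₁ : p.1.det = 1) (h₂ : p.2.det = 1) (n : ℕ) :
    (inducedPair b p n).1.det = 1 ∧ (inducedPair b p n).2.det = 1 := by
  induction n with
  | zero => exact ⟨h₁, h₂⟩
  | succ n ih => simp [inducedPair, induce, ih]

lemma fricke_inducedPair (b : ℕ → ℕ) (h₁ : p.1.det = 1) (h₂ : p.2.det = 1) (n : ℕ) :
    fricke (inducedPair b p n).1.trace (inducedPair b p n).2.trace
        (traceSeq (inducedPair b p n) 1) =
      fricke p.1.trace p.2.trace (traceSeq p 1) := by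
  induction n with
  | zero => rfl
  | succ n ih =>
    rw [inducedPair, traceSeq_induce_one, ← ih, ← traceSeq_zero (p := inducedPair b p n),
      ← fricke_recurrence (traceSeq_add_two (det_inducedPair b h₁ h₂ n).1) (b n)]
    simp only [induce, fricke, traceSeq]
    ring

end CayleyHamilton

section Escape

variable {𝕜 : Type*} [NormedField 𝕜] {p : Matrix (Fin 2) (Fin 2) 𝕜 × Matrix (Fin 2) (Fin 2) 𝕜}
  {b : ℕ → ℕ}

/-- The condition on a pair of matrices under which the traces along its induced pairs never return
to the disk of radius two. -/
def Escapes (p : Matrix (Fin 2) (Fin 2) 𝕜 × Matrix (Fin 2) (Fin 2) 𝕜) : Prop :=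
  2 < ‖p.1.trace‖ ∧ 2 < ‖p.2.trace‖ ∧ ‖p.1.trace‖ * ‖p.2.trace‖ < 2 * ‖traceSeq p 1‖

/-- Bounds on a pair `(A, B)` of unimodular matrices controlling the structure constants of the
algebra spanned by `1`, `A`, `B`, `A * B`. -/
structure TraceBounded (K : ℝ) (p : Matrix (Fin 2) (Fin 2) 𝕜 × Matrix (Fin 2) (Fin 2) 𝕜) :
    Prop where
  det_fst : p.1.det = 1
  det_snd : p.2.det = 1
  trace_fst : ‖p.1.trace‖ ≤ K
  trace_snd : ‖p.2.trace‖ ≤ K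
  trace_mul : ‖(p.2 * p.1).trace‖ ≤ K

lemma escapes_induce_iff (b : ℕ) : Escapes (induce b p) ↔ 2 < ‖p.1.trace‖ ∧
    2 < ‖traceSeq p b‖ ∧ ‖p.1.trace‖ * ‖traceSeq p b‖ < 2 * ‖traceSeq p (b + 1)‖ := by
  rw [Escapes, traceSeq_induce_one, mul_comm, and_left_comm]
  rfl

lemma Escapes.induce (hp : p.1.det = 1) (h : Escapes p) (b : ℕ) : Escapes (induce b p) := by
  obtain ⟨hx, hy⟩ := h
  rw [← traceSeq_zero] at hy
  exact (escapes_induce_iff b).2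
    ⟨hx, escape_recurrence (traceSeq_add_two hp) hx (Nat.zero_le b) hy⟩

lemma Escapes.inducedPair_of_le (h₁ : p.1.det = 1) (h₂ : p.2.det = 1) {m n : ℕ} (hmn : m ≤ n)
    (h : Escapes (inducedPair b p m)) : Escapes (inducedPair b p n) := by
  induction n, hmn using Nat.le_induction with
  | base => exact h
  | succ n _ ih => exact ih.induce (det_inducedPair b h₁ h₂ n).1 (b n)

lemma norm_traceSeq_le_two (hp : p.1.det = 1) {b : ℕ} (hesc : ¬ Escapes (induce b p))
    (hx : 2 < ‖p.1.trace‖) (hy : ‖p.2.trace‖ ≤ 2) {j : ℕ} (hj : j ≤ b) : ‖traceSeq p j‖ ≤ 2 :=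
  norm_le_two_of_not_escape (traceSeq_add_two hp) hx (by rwa [traceSeq_zero])
    (fun h => hesc ((escapes_induce_iff b).2 ⟨hx, h⟩)) hj

section NoEscape

variable (h₁ : p.1.det = 1) (h₂ : p.2.det = 1) (hp : ‖p.2.trace‖ ≤ 2)
  (hesc : ∀ n, ¬ Escapes (inducedPair b p n))

include h₁ h₂ hp hesc

lemma norm_trace_snd_inducedPair_le_two {n : ℕ} (hx : 2 < ‖(inducedPair b p n).1.trace‖) :
    ‖(inducedPair b p n).2.trace‖ ≤ 2 := by
  induction n with
  | zero => exact hp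
  | succ n ih =>
    by_contra! hy
    exact hx.not_ge
      (norm_traceSeq_le_two (det_inducedPair b h₁ h₂ n).1 (hesc (n + 1)) hy (ih hy) le_rfl)

lemma norm_traceSeq_inducedPair_le_two {n : ℕ} (hx : 2 < ‖(inducedPair b p n).1.trace‖) {j : ℕ}
    (hj : j ≤ b n) : ‖traceSeq (inducedPair b p n) j‖ ≤ 2 :=
  norm_traceSeq_le_two (det_inducedPair b h₁ h₂ n).1 (hesc (n + 1)) hx
    (norm_trace_snd_inducedPair_le_two h₁ h₂ hp hesc hx) hj

variable (hb : ∀ n, 1 ≤ b n) {K : ℝ} (hK : ‖fricke p.1.trace p.2.trace (traceSeq p 1) + 4‖ + 8 ≤ K)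

include hb hK

lemma norm_trace_fst_inducedPair_le (n : ℕ) : ‖(inducedPair b p n).1.trace‖ ≤ K := by
  rcases le_or_gt ‖(inducedPair b p n).1.trace‖ 2 with hx | hx
  · linarith [norm_nonneg (fricke p.1.trace p.2.trace (traceSeq p 1) + 4)]
  · rw [← fricke_inducedPair b h₁ h₂ n] at hK
    exact (norm_le_of_fricke (norm_trace_snd_inducedPair_le_two h₁ h₂ hp hesc hx)
      (norm_traceSeq_inducedPair_le_two h₁ h₂ hp hesc hx (hb n))).trans hK

lemma norm_traceSeq_one_inducedPair_le (n : ℕ) :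
    ‖traceSeq (inducedPair b p n) 1‖ ≤ 2 * K + 2 := by
  have hK₀ : 8 ≤ K := by linarith [norm_nonneg (fricke p.1.trace p.2.trace (traceSeq p 1) + 4)]
  rcases lt_or_ge 2 ‖(inducedPair b p n).1.trace‖ with hx | hx
  · linarith [norm_traceSeq_inducedPair_le_two h₁ h₂ hp hesc hx (hb n)]
  rcases le_or_gt ‖(inducedPair b p n).2.trace‖ 2 with hy | hy
  · have hsymm (x y z : 𝕜) : fricke x y z = fricke z x y := by simp only [fricke]; ring
    rw [← fricke_inducedPair b h₁ h₂ n, hsymm] at hK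
    linarith [norm_le_of_fricke hx hy |>.trans hK]
  obtain _ | m := n
  · exact absurd hp hy.not_ge
  obtain ⟨c, hc⟩ := Nat.exists_eq_add_of_le' (hb m)
  have hx := norm_trace_fst_inducedPair_le h₁ h₂ hp hesc hb hK m
  have hsmall {j : ℕ} (hj : j ≤ b m) : ‖traceSeq (inducedPair b p m) j‖ ≤ 2 :=
    norm_traceSeq_inducedPair_le_two h₁ h₂ hp hesc hy hj
  rw [inducedPair, traceSeq_induce_one, hc, traceSeq_add_two (det_inducedPair b h₁ h₂ m).1]
  calc _ ≤ ‖(inducedPair b p m).1.trace‖ * ‖traceSeq (inducedPair b p m) (c + 1)‖ +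
        ‖traceSeq (inducedPair b p m) c‖ := (norm_sub_le _ _).trans_eq (by rw [norm_mul])
    _ ≤ K * 2 + 2 := by
        gcongr
        · exact hsmall hc.ge
        · exact hsmall (by omega)
    _ = 2 * K + 2 := by ring

lemma traceBounded_inducedPair (n : ℕ) : TraceBounded (2 * K + 2) (inducedPair b p n) where
  det_fst := (det_inducedPair b h₁ h₂ n).1
  det_snd := (det_inducedPair b h₁ h₂ n).2
  trace_fst := by
    linarith [norm_trace_fst_inducedPair_le h₁ h₂ hp hesc hb hK n, norm_nonneg (p.2.trace),
      norm_nonneg (fricke p.1.trace p.2.trace (traceSeq p 1) + 4)]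
  trace_snd := by
    have hK₀ : 8 ≤ K := by linarith [norm_nonneg (fricke p.1.trace p.2.trace (traceSeq p 1) + 4)]
    obtain _ | m := n
    · exact hp.trans (by linarith)
    · exact (norm_trace_fst_inducedPair_le h₁ h₂ hp hesc hb hK m).trans (by linarith)
  trace_mul := traceSeq_one (p := inducedPair b p n) ▸
    norm_traceSeq_one_inducedPair_le h₁ h₂ hp hesc hb hK n

end NoEscape

end Escape

/-! ### Growth of products along the words of the language -/

section Growth

variable {𝕜 : Type*} [NormedField 𝕜] {K M : ℝ} {ν : Seminorm 𝕜 (Matrix (Fin 2) (Fin 2) 𝕜)}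
  {p : Matrix (Fin 2) (Fin 2) 𝕜 × Matrix (Fin 2) (Fin 2) 𝕜}

/-- The words whose products `1`, `A`, `B`, `A * B` along a pair `(A, B)` of unimodular matrices
span the algebra generated by that pair. -/
def shortWords : List (List Bool) := [[], [false], [true], [true, false]]

/-- The seminorm `ν` is bounded by `M` on the products `1`, `A`, `B`, `A * B` for `p = (A, B)`. -/
def BoundedOnShortWords (ν : Seminorm 𝕜 (Matrix (Fin 2) (Fin 2) 𝕜)) (M : ℝ)
    (p : Matrix (Fin 2) (Fin 2) 𝕜 × Matrix (Fin 2) (Fin 2) 𝕜) : Prop :=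
  ∀ s ∈ shortWords, ν (wordProd p s) ≤ M

lemma boundedOnShortWords_iff : BoundedOnShortWords ν M p ↔
    ν 1 ≤ M ∧ ν p.1 ≤ M ∧ ν p.2 ≤ M ∧ ν (p.1 * p.2) ≤ M := by
  simp [BoundedOnShortWords, shortWords, wordProd]

lemma BoundedOnShortWords.comp_mulRight_fst (hν : BoundedOnShortWords ν M p)
    (hp : TraceBounded K p) :
    BoundedOnShortWords (ν.comp (LinearMap.mulRight 𝕜 p.1)) ((K + 2) ^ 2 * M) p := by
  obtain ⟨A, B⟩ := p
  obtain ⟨hA, -, hx, hy, hz⟩ := hp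
  obtain ⟨h1, hνA, hνB, hνAB⟩ := boundedOnShortWords_iff.1 hν
  have hK : 0 ≤ K := (norm_nonneg _).trans hx
  have hM : 0 ≤ M := (apply_nonneg ν _).trans h1
  have hsmul {c : 𝕜} {X : Matrix (Fin 2) (Fin 2) 𝕜} {k : ℝ} (hc : ‖c‖ ≤ k) (hX : ν X ≤ M) :
      ν (c • X) ≤ k * M := by
    rw [map_smul_eq_mul]
    exact mul_le_mul hc hX (apply_nonneg ν _) ((norm_nonneg c).trans hc)
  have hxy : ‖(B * A).trace - A.trace * B.trace‖ ≤ K + K * K :=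
    (norm_sub_le _ _).trans (add_le_add hz ((norm_mul _ _).trans_le
      (mul_le_mul hx hy (norm_nonneg _) hK)))
  have hAA : ν (A * A) ≤ K * M + M := by
    rw [mul_self_of_det_eq_one hA]
    exact (map_sub_le_add ν _ _).trans (add_le_add (hsmul hx hνA) h1)
  have hBA : ν (B * A) ≤ (K + K * K) * M + K * M + K * M + M := by
    rw [mul_eq_polarization]
    refine (map_sub_le_add ν _ _).trans (add_le_add ?_ hνAB)
    refine (map_add_le_add ν _ _).trans (add_le_add ?_ (hsmul hx hνB))
    exact (map_add_le_add ν _ _).trans (add_le_add (hsmul hxy h1) (hsmul hy hνA))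
  have hABA : ν (A * B * A) ≤ M + K * M + K * M := by
    rw [mul_assoc, mul_mul_self_of_det_eq_one hA, trace_mul_comm]
    refine (map_add_le_add ν _ _).trans (add_le_add ?_ (hsmul hz hνA))
    exact (map_sub_le_add ν _ _).trans (add_le_add hνB (hsmul hy h1))
  have hKM : 0 ≤ K * M := mul_nonneg hK hM
  have hKKM : 0 ≤ K * K * M := mul_nonneg (mul_nonneg hK hK) hM
  rw [boundedOnShortWords_iff]
  simp only [Seminorm.comp_apply, LinearMap.mulRight_apply, one_mul]
  exact ⟨by linarith, by linarith, by linarith, by linarith⟩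

lemma BoundedOnShortWords.comp_mulRight_snd (hν : BoundedOnShortWords ν M p)
    (hp : TraceBounded K p) :
    BoundedOnShortWords (ν.comp (LinearMap.mulRight 𝕜 p.2)) ((K + 2) ^ 2 * M) p := by
  obtain ⟨A, B⟩ := p
  obtain ⟨-, hB, -, hy, -⟩ := hp
  obtain ⟨h1, hνA, hνB, hνAB⟩ := boundedOnShortWords_iff.1 hν
  have hK : 0 ≤ K := (norm_nonneg _).trans hy
  have hM : 0 ≤ M := (apply_nonneg ν _).trans h1
  have hsmul {X : Matrix (Fin 2) (Fin 2) 𝕜} (hX : ν X ≤ M) : ν (B.trace • X) ≤ K * M := by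
    rw [map_smul_eq_mul]
    exact mul_le_mul hy hX (apply_nonneg ν _) hK
  have hBB : ν (B * B) ≤ K * M + M := by
    rw [mul_self_of_det_eq_one hB]
    exact (map_sub_le_add ν _ _).trans (add_le_add (hsmul hνB) h1)
  have hABB : ν (A * B * B) ≤ K * M + M := by
    rw [mul_assoc, mul_self_of_det_eq_one hB, mul_sub, mul_smul_comm, mul_one]
    exact (map_sub_le_add ν _ _).trans (add_le_add (hsmul hνAB) hνA)
  have hKM : 0 ≤ K * M := mul_nonneg hK hM
  have hKKM : 0 ≤ K * K * M := mul_nonneg (mul_nonneg hK hK) hM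
  rw [boundedOnShortWords_iff]
  simp only [Seminorm.comp_apply, LinearMap.mulRight_apply, one_mul]
  exact ⟨by linarith, by linarith, by linarith, by linarith⟩

lemma BoundedOnShortWords.wordProd_le (hν : BoundedOnShortWords ν M p) (hp : TraceBounded K p)
    (w : List Bool) : ν (wordProd p w) ≤ (K + 2) ^ (2 * w.length) * M := by
  induction w generalizing ν M with
  | nil => simpa [wordProd] using (boundedOnShortWords_iff.1 hν).1
  | cons a w ih =>
    rw [List.length_cons, mul_add_one, pow_add, mul_assoc]
    cases a
    · exact ih (hν.comp_mulRight_fst hp)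
    · exact ih (hν.comp_mulRight_snd hp)

lemma length_subst_le_of_mem_shortWords (b : ℕ) {s : List Bool} (hs : s ∈ shortWords) :
    (subst b s).length ≤ b + 2 := by
  simp only [shortWords, List.mem_cons, List.not_mem_nil, or_false] at hs
  rcases hs with rfl | rfl | rfl | rfl <;> simp [subst, substLetter]

lemma wordProd_append_subst_append {N : Type*} [Monoid N] (q : N × N) (b : ℕ) (u v u' : List Bool) :
    wordProd q (u ++ subst b v ++ u') =
      wordProd q u' * (wordProd (induce b q) v * wordProd q u) := by
  rw [wordProd_append, wordProd_append, wordProd_subst]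

lemma BoundedOnShortWords.comp_mul_induce (hν : BoundedOnShortWords ν M p) (hp : TraceBounded K p)
    {b : ℕ} {u u' : List Bool} (hu : u.length ≤ b + 1) (hu' : u'.length ≤ b + 1) :
    BoundedOnShortWords
      (ν.comp (LinearMap.mulLeft 𝕜 (wordProd p u') ∘ₗ LinearMap.mulRight 𝕜 (wordProd p u)))
      ((K + 2) ^ (2 * (3 * b + 4)) * M) (induce b p) := by
  intro s hs
  have hlen : (u ++ subst b s ++ u').length ≤ 3 * b + 4 := by
    have := length_subst_le_of_mem_shortWords b hs
    simp only [List.length_append]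
    omega
  have hK : 0 ≤ K := (norm_nonneg _).trans hp.trace_fst
  have hM : 0 ≤ M := (apply_nonneg ν _).trans (boundedOnShortWords_iff.1 hν).1
  calc _ = ν (wordProd p (u ++ subst b s ++ u')) := by rw [wordProd_append_subst_append]; rfl
    _ ≤ (K + 2) ^ (2 * (u ++ subst b s ++ u').length) * M := hν.wordProd_le hp _
    _ ≤ (K + 2) ^ (2 * (3 * b + 4)) * M := by
        gcongr
        linarith

-- The induced matrices are in general not bounded, so the seminorm is pulled back along inducing
-- instead of being evaluated on them; this costs a factor depending only on `b n`.
lemma BoundedOnShortWords.wordProd_inducedPair_le {b : ℕ → ℕ} {r : ℕ → ℝ} {k n : ℕ} {w : List Bool}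
    (hν : BoundedOnShortWords ν M (inducedPair b p n)) (hr : InducedLengths b r)
    (hb : ∀ n, 1 ≤ b n) (hp : ∀ n, TraceBounded K (inducedPair b p n))
    (hw : Lang (r n) (r (n + 1)) w) (hk : weight w * 2 ^ k < 3 ^ k) :
    ν (wordProd (inducedPair b p n) w) ≤
      (K + 2) ^ (2 * ∑ j ∈ Finset.range k, (3 * b (n + j) + 4)) * M := by
  induction k generalizing n w ν M with
  | zero =>
    have hw₀ : w.length = 0 := by
      have := length_le_weight w
      simp only [pow_zero, mul_one] at hk
      omega
    rw [List.eq_nil_of_length_eq_zero hw₀]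
    simpa using hν.wordProd_le (hp n) []
  | succ k ih =>
    obtain ⟨u, w', u', hw', hu, hu', rfl⟩ := hw.exists_eq_subst (hr.pos _).le (hr.mul_le n)
    rw [hr.sub_eq] at hw'
    have hk' : weight w' * 2 ^ k < 3 ^ k := by
      rw [weight_append, weight_append, pow_succ, pow_succ] at hk
      nlinarith [weight_subst (hb n) w', Nat.zero_le (weight u * 2 ^ k),
        Nat.zero_le (weight u' * 2 ^ k), pow_pos (two_pos (α := ℕ)) k]
    have hle := ih (hν.comp_mul_induce (hp n) hu hu') hw' hk'
    rw [wordProd_append_subst_append]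
    refine hle.trans_eq ?_
    rw [Finset.sum_range_succ', ← mul_assoc, ← pow_add, ← mul_add]
    simp only [add_zero, add_right_comm n 1, add_assoc n]

end Growth

/-! ### Schrödinger operators on the line and on a cycle -/

section InnerProductSpace

variable {V : Type*} [NormedAddCommGroup V] [InnerProductSpace ℂ V]

-- Bounded below and normal is invertible: `T† T = T T†` is coercive.
lemma notMem_spectrum_of_le_norm_apply_sub_smul [CompleteSpace V] {H : V →L[ℂ] V}
    (hH : IsSelfAdjoint H) {E : ℂ} {δ : ℝ} (hδ : 0 < δ)
    (h : ∀ u, δ * ‖u‖ ≤ ‖H u - E • u‖) : E ∉ spectrum ℂ H := by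
  rw [spectrum.notMem_iff]
  set T : V →L[ℂ] V := algebraMap ℂ _ E - H
  have hT (u : V) : δ * ‖u‖ ≤ ‖T u‖ := by
    simpa [T, Algebra.algebraMap_eq_smul_one, norm_sub_rev] using h u
  have hcomm : Commute (star T) T := by
    have hstar : star T = algebraMap ℂ _ (star E) - H := by
      rw [star_sub, hH.star_eq, algebraMap_star_comm]
    rw [hstar]
    exact .sub_left (Algebra.commute_algebraMap_left _ _)
      (.sub_right (Algebra.commute_algebraMap_right _ _) (.refl H))
  have hunit : IsUnit (star T * T) := by
    refine ContinuousLinearMap.isUnit_of_forall_le_norm_inner_map _ (c := (δ ^ 2).toNNReal)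
      (Real.toNNReal_pos.2 (by positivity)) fun u => ?_
    have hinner : inner ℂ ((star T * T) u) u = inner ℂ (T u) (T u) :=
      ContinuousLinearMap.adjoint_inner_left T u (T u)
    rw [hinner, inner_self_eq_norm_sq_to_K, norm_pow, RCLike.norm_ofReal, abs_norm,
      Real.coe_toNNReal _ (by positivity), mul_comm, ← mul_pow]
    exact pow_le_pow_left₀ (by positivity) (hT u) 2
  exact (hcomm.isUnit_mul_iff.1 hunit).2

lemma le_norm_apply_sub_smul_of_isSymmetric [FiniteDimensional ℂ V] {T : V →ₗ[ℂ] V}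
    (hT : T.IsSymmetric) {E : ℂ} {δ : ℝ} (hδ : 0 ≤ δ)
    (h : ∀ E', Module.End.HasEigenvalue T E' → δ ≤ ‖E' - E‖) (φ : V) :
    δ * ‖φ‖ ≤ ‖T φ - E • φ‖ := by
  set B := hT.eigenvectorBasis (n := Module.finrank ℂ V) rfl
  set ev := hT.eigenvalues (n := Module.finrank ℂ V) rfl
  have hcoord (i) : inner ℂ (B i) (T φ - E • φ) = ((ev i : ℂ) - E) * inner ℂ (B i) φ := by
    have hi : T (B i) = (ev i : ℂ) • B i := hT.apply_eigenvectorBasis rfl i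
    rw [inner_sub_right, ← hT, hi, inner_smul_left, inner_smul_right, Complex.conj_ofReal, sub_mul]
  refine le_of_sq_le_sq ?_ (norm_nonneg _)
  rw [mul_pow, ← B.sum_sq_norm_inner_right, ← B.sum_sq_norm_inner_right, Finset.mul_sum]
  refine Finset.sum_le_sum fun i _ => ?_
  rw [hcoord, norm_mul, mul_pow]
  gcongr
  exact h _ (hT.hasEigenvalue_eigenvalues rfl i)

end InnerProductSpace

/-- The Hilbert space `ℓ²(ℤ)`. -/
noncomputable abbrev L2Z := lp (fun _ : ℤ => ℂ) 2

/-- The bounded operator `H` on `ℓ²(ℤ)` is the discrete Schrödinger operator with potential `V`. -/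
def IsSchrodinger (H : L2Z →L[ℂ] L2Z) (V : ℤ → ℝ) : Prop :=
  ∀ (u : L2Z) (n : ℤ), H u n = u (n + 1) + u (n - 1) + (V n : ℂ) * u n

section Line

variable {H : L2Z →L[ℂ] L2Z} {V : ℤ → ℝ}

lemma IsSchrodinger.apply_single (hH : IsSchrodinger H V) (n : ℤ) (a : ℂ) :
    H (lp.single 2 n a) =
      lp.single 2 (n + 1) a + lp.single 2 (n - 1) a + lp.single 2 n ((V n : ℂ) * a) := by
  ext m
  have hsucc : m + 1 = n ↔ m = n - 1 := by omega
  have hpred : m - 1 = n ↔ m = n + 1 := by omega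
  rw [hH]
  simp only [lp.coeFn_add, Pi.add_apply, lp.single_apply, Pi.single_apply, hsucc, hpred, mul_ite,
    mul_zero]
  rw [add_comm (ite (m = n - 1) a 0)]
  congr 1
  split_ifs with h
  · rw [h]
  · rfl

lemma IsSchrodinger.isSelfAdjoint (hH : IsSchrodinger H V) : IsSelfAdjoint H := by
  rw [ContinuousLinearMap.isSelfAdjoint_iff']
  ext u n
  have hcoord (m : ℤ) (f : L2Z) : inner ℂ (lp.single 2 m (1 : ℂ)) f = f m := by
    simpa using lp.inner_single_left (𝕜 := ℂ) m 1 f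
  rw [← hcoord, ContinuousLinearMap.adjoint_inner_right, hH.apply_single, hH]
  simp [inner_add_left, lp.inner_single_left, mul_comm]

lemma le_norm_apply_sub_smul_of_finite_support (H : L2Z →L[ℂ] L2Z) (E : ℂ) (δ : ℝ)
    (h : ∀ (u : L2Z) (L : ℕ), (∀ n : ℤ, L < n.natAbs → u n = 0) → δ * ‖u‖ ≤ ‖H u - E • u‖)
    (u : L2Z) : δ * ‖u‖ ≤ ‖H u - E • u‖ := by
  have hclosed : IsClosed {u : L2Z | δ * ‖u‖ ≤ ‖H u - E • u‖} :=
    isClosed_le (by fun_prop) (by fun_prop)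
  refine hclosed.mem_of_tendsto (lp.hasSum_single (p := 2) (by norm_num) u)
    (Eventually.of_forall fun s => h _ (∑ n ∈ s, n.natAbs) fun n hn => ?_)
  rw [lp.coeFn_sum, Finset.sum_apply]
  refine Finset.sum_eq_zero fun i hi => lp.single_apply_ne 2 i _ ?_
  rintro rfl
  have := Finset.single_le_sum (f := Int.natAbs) (fun _ _ => Nat.zero_le _) hi
  omega

end Line

section Transfer

variable {lam : ℝ} {E : ℂ}

lemma det_transferT (lam : ℝ) (E : ℂ) (a : ℝ) : (transferT lam E a).det = 1 := by
  simp [transferT, det_fin_two]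

lemma det_transferM (lam : ℝ) (E : ℂ) (w : List ℝ) : (transferM lam E w).det = 1 := by
  induction w with
  | nil => simp [transferM]
  | cons a w ih => simp [transferM, ih, det_transferT]

lemma transferM_mulVec_of_solution {V : ℤ → ℝ} {ψ : ℤ → ℂ}
    (hψ : ∀ n, ψ (n + 1) + ψ (n - 1) + (lam * V n : ℝ) * ψ n = E * ψ n) (k : ℤ) (n : ℕ) :
    transferM lam E (factor V k n) *ᵥ ![ψ k, ψ (k - 1)] = ![ψ (k + n), ψ (k + n - 1)] := by
  induction n generalizing k with
  | zero => simp [factor, transferM]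
  | succ n ih =>
    have hstep : transferT lam E (V k) *ᵥ ![ψ k, ψ (k - 1)] = ![ψ (k + 1), ψ k] := by
      have := hψ k
      push_cast at this
      ext i
      fin_cases i <;> simp [transferT, mulVec, dotProduct, Fin.sum_univ_two]
      linear_combination -this
    have hnext := ih (k + 1)
    rw [add_sub_cancel_right] at hnext
    rw [factor_succ, transferM, ← mulVec_mulVec, hstep, hnext]
    push_cast
    rw [add_right_comm k 1 (n : ℤ), add_assoc k]

lemma trace_eq_two_of_mulVec_eq {R : Type*} [CommRing R] [IsDomain R]
    {A : Matrix (Fin 2) (Fin 2) R} (hA : A.det = 1) {x : Fin 2 → R} (hx : x ≠ 0)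
    (hAx : A *ᵥ x = x) : A.trace = 2 := by
  have hdet : (A - 1).det = 0 :=
    exists_mulVec_eq_zero_iff.1 ⟨x, hx, by rw [sub_mulVec, hAx, one_mulVec, sub_self]⟩
  rw [det_fin_two] at hA hdet
  simp only [Matrix.sub_apply, one_apply_eq, ne_eq, zero_ne_one, one_ne_zero, not_false_eq_true,
    one_apply_ne, sub_zero] at hdet
  rw [trace_fin_two]
  linear_combination hA - hdet

end Transfer

section Cycle

variable {N : ℕ}

/-- The discrete Schrödinger operator with potential `W` on the cycle `ℤ/Nℤ`. -/
noncomputable def cyclicSchrodinger (W : ZMod N → ℝ) :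
    EuclideanSpace ℂ (ZMod N) →ₗ[ℂ] EuclideanSpace ℂ (ZMod N) where
  toFun φ := WithLp.toLp 2 fun j => φ (j + 1) + φ (j - 1) + (W j : ℂ) * φ j
  map_add' φ ψ := by ext j; simp; ring
  map_smul' c φ := by ext j; simp; ring

lemma cyclicSchrodinger_apply (W : ZMod N → ℝ) (φ : EuclideanSpace ℂ (ZMod N)) (j : ZMod N) :
    cyclicSchrodinger W φ j = φ (j + 1) + φ (j - 1) + (W j : ℂ) * φ j := rfl

variable [NeZero N]

lemma isSymmetric_cyclicSchrodinger (W : ZMod N → ℝ) : (cyclicSchrodinger W).IsSymmetric := by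
  intro φ ψ
  have hsucc : ∑ j, inner ℂ (φ (j + 1)) (ψ j) = ∑ j, inner ℂ (φ j) (ψ (j - 1)) :=
    Fintype.sum_equiv (Equiv.addRight 1) _ _ fun j => by simp
  have hpred : ∑ j, inner ℂ (φ (j - 1)) (ψ j) = ∑ j, inner ℂ (φ j) (ψ (j + 1)) :=
    Fintype.sum_equiv (Equiv.subRight 1) _ _ fun j => by simp
  have hpot (j : ZMod N) : inner ℂ ((W j : ℂ) * φ j) (ψ j) = inner ℂ (φ j) ((W j : ℂ) * ψ j) := by
    simp [mul_assoc, mul_left_comm]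
  simp only [PiLp.inner_apply, cyclicSchrodinger_apply, inner_add_left, inner_add_right,
    Finset.sum_add_distrib, hsucc, hpred, hpot]
  ring

lemma trace_transferM_of_hasEigenvalue {lam : ℝ} {E : ℂ} {W : ZMod N → ℝ}
    (h : Module.End.HasEigenvalue (cyclicSchrodinger fun j => lam * W j) E) (c : ℤ) :
    (transferM lam E (factor (fun n : ℤ => W n) c N)).trace = 2 := by
  obtain ⟨φ, hφ⟩ := h.exists_hasEigenvector
  have heq (j : ZMod N) : φ (j + 1) + φ (j - 1) + (lam * W j : ℝ) * φ j = E * φ j := by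
    simpa [cyclicSchrodinger_apply] using
      congrArg (fun f : EuclideanSpace ℂ (ZMod N) => f j) hφ.apply_eq_smul
  have hsol := transferM_mulVec_of_solution (lam := lam) (E := E) (V := fun n => W n)
    (ψ := fun n : ℤ => φ n) (fun n => by simpa using heq n) c N
  refine trace_eq_two_of_mulVec_eq (det_transferM _ _ _) (fun h0 => hφ.2 ?_)
    (hsol.trans (by push_cast; simp))
  -- A solution vanishing at two consecutive sites vanishes identically.
  have hzero (n : ℕ) : φ ((c : ZMod N) + n) = 0 ∧ φ ((c : ZMod N) + n - 1) = 0 := by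
    induction n with
    | zero => exact ⟨by simpa using congrFun h0 0, by simpa using congrFun h0 1⟩
    | succ n ih =>
      have := heq (c + n)
      rw [ih.1, ih.2] at this
      push_cast
      rw [← add_assoc, add_sub_cancel_right]
      exact ⟨by simpa using this, ih.1⟩
  ext j
  simpa using (hzero (j - c).val).1

end Cycle

/-! ### Periodic approximation -/

section Periodic

variable {N : ℕ} [NeZero N]

lemma getElem?_flatten_replicate {β : Type*} (S : List β) {t i : ℕ}
    (hi : i < (List.replicate t S).flatten.length) :
    (List.replicate t S).flatten[i]? = S[i % S.length]? := by
  induction t generalizing i with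
  | zero => exact absurd hi (Nat.not_lt_zero i)
  | succ t ih =>
    rw [List.replicate_succ, List.flatten_cons] at hi ⊢
    rw [List.length_append] at hi
    rcases lt_or_ge i S.length with h | h
    · rw [List.getElem?_append_left h, Nat.mod_eq_of_lt h]
    · rw [List.getElem?_append_right h, ih (by omega), ← Nat.mod_eq_sub_mod h]

lemma exists_eq_factor_zmod {β : Type*} {v : ℤ → β} {k : ℤ} {m t : ℕ} {S : List β}
    [NeZero S.length] (h : factor v k m <:+: (List.replicate t S).flatten) :
    ∃ (W : ZMod S.length → β) (c : ℤ), factor (fun n : ℤ => W n) c S.length = S ∧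
      ∀ n, k ≤ n → n < k + m → W n = v n := by
  obtain ⟨s, s', hs⟩ := h
  refine ⟨fun j => S[(j - (k - s.length : ℤ)).val]'(ZMod.val_lt _), k - s.length, ?_,
    fun n hkn hnm => ?_⟩
  · refine List.ext_getElem (length_factor _ _ _) fun i _ hi => ?_
    simp only [factor, List.getElem_map, List.getElem_range]
    congr 1
    rw [← Int.cast_sub, add_sub_cancel_left, Int.cast_natCast, ZMod.val_natCast_of_lt hi]
  · obtain ⟨i, rfl⟩ : ∃ i : ℕ, n = k + i := ⟨(n - k).toNat, by omega⟩
    have hi : i < (factor v k m).length := by rw [length_factor]; omega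
    have hval : (((k + i : ℤ) : ZMod S.length) - (k - s.length : ℤ)).val =
        (s.length + i) % S.length := by
      rw [← Int.cast_sub, show k + i - (k - s.length) = ((s.length + i : ℕ) : ℤ) by push_cast; ring,
        Int.cast_natCast, ZMod.val_natCast]
    have hlen : s.length + i < (List.replicate t S).flatten.length := by
      rw [← hs]; simp only [List.length_append]; omega
    simp only [hval]
    refine Option.some_injective _ ?_
    rw [← List.getElem?_eq_getElem, ← getElem?_flatten_replicate S hlen, ← hs, List.append_assoc,
      List.getElem?_append_right (by omega), Nat.add_sub_cancel_left,
      List.getElem?_append_left hi, List.getElem?_eq_getElem hi]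
    simp [factor]

lemma apply_valMinAbs_intCast {f : ℤ → ℂ} {L : ℕ} (hf : ∀ n : ℤ, L < n.natAbs → f n = 0)
    (hN : 2 * L + 3 ≤ N) {m : ℤ} (hm : 2 * m.natAbs ≤ N + 2) :
    f (m : ZMod N).valMinAbs = f m := by
  by_cases hlow : m * 2 ≤ -N
  · rw [(ZMod.valMinAbs_spec (m : ZMod N) (m + N)).2 ⟨by simp, by constructor <;> omega⟩,
      hf m (by omega), hf _ (by omega)]
  by_cases hhigh : N < m * 2
  · rw [(ZMod.valMinAbs_spec (m : ZMod N) (m - N)).2 ⟨by simp, by constructor <;> omega⟩,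
      hf m (by omega), hf _ (by omega)]
  · rw [(ZMod.valMinAbs_spec (m : ZMod N) m).2 ⟨rfl, by constructor <;> omega⟩]

/-- The values of `f : ℤ → ℂ` at the representatives of `ℤ/Nℤ` of least absolute value. -/
noncomputable def wrap (N : ℕ) (f : ℤ → ℂ) : EuclideanSpace ℂ (ZMod N) :=
  WithLp.toLp 2 fun j => f j.valMinAbs

lemma norm_wrap {f : L2Z} (hf : ∀ n : ℤ, N ≤ 2 * n.natAbs → f n = 0) : ‖wrap N f‖ = ‖f‖ := by
  have hsum : HasSum (fun n => ‖f n‖ ^ 2) (‖f‖ ^ 2) := by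
    simpa using lp.hasSum_norm (p := 2) (by norm_num) f
  have hsupp : ∀ n ∉ Set.range (ZMod.valMinAbs : ZMod N → ℤ), ‖f n‖ ^ 2 = 0 := by
    intro n hn
    have hle : N ≤ 2 * n.natAbs := by
      by_contra! hlt
      exact hn ⟨n, (ZMod.valMinAbs_spec _ n).2 ⟨rfl, by constructor <;> omega⟩⟩
    rw [hf n hle, norm_zero, zero_pow two_ne_zero]
  rw [← ZMod.injective_valMinAbs.hasSum_iff hsupp] at hsum
  refine (pow_left_inj₀ (norm_nonneg _) (norm_nonneg _) two_ne_zero).1 ?_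
  rw [EuclideanSpace.norm_sq_eq]
  exact (hasSum_fintype _).unique hsum

-- On the support of `u` the potentials `V` and `W` agree, so wrapping `u` around the cycle turns
-- `H u - E u` into the corresponding vector of the cyclic operator.
lemma IsSchrodinger.norm_cyclicSchrodinger_wrap {H : L2Z →L[ℂ] L2Z} {V : ℤ → ℝ}
    (hH : IsSchrodinger H V) {W : ZMod N → ℝ} {L : ℕ} (hN : 2 * L + 3 ≤ N)
    (hW : ∀ n : ℤ, n.natAbs ≤ L → W n = V n) {u : L2Z} (hu : ∀ n : ℤ, L < n.natAbs → u n = 0)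
    (E : ℂ) : ‖cyclicSchrodinger W (wrap N u) - E • wrap N u‖ = ‖H u - E • u‖ := by
  have hsub (n : ℤ) : (H u - E • u) n = u (n + 1) + u (n - 1) + V n * u n - E * u n := by
    rw [← hH u n]; rfl
  have hwrap : cyclicSchrodinger W (wrap N u) - E • wrap N u = wrap N (H u - E • u : L2Z) := by
    ext j
    set n := j.valMinAbs
    have hj : (n : ZMod N) = j := ZMod.coe_valMinAbs j
    have hn : n.natAbs ≤ N / 2 := ZMod.natAbs_valMinAbs_le j
    have hsucc : u (j + 1).valMinAbs = u (n + 1) := by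
      rw [← apply_valMinAbs_intCast hu hN (m := n + 1) (by omega), Int.cast_add, hj, Int.cast_one]
    have hpred : u (j - 1).valMinAbs = u (n - 1) := by
      rw [← apply_valMinAbs_intCast hu hN (m := n - 1) (by omega), Int.cast_sub, hj, Int.cast_one]
    have hpot : (W j : ℂ) * u n = V n * u n := by
      by_cases h : n.natAbs ≤ L
      · rw [← hW n h, hj]
      · rw [hu n (not_le.1 h), mul_zero, mul_zero]
    change u (j + 1).valMinAbs + u (j - 1).valMinAbs + W j * u n - E * u n = (H u - E • u) n
    rw [hsub, hsucc, hpred, hpot]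
  rw [hwrap, norm_wrap fun n hn => ?_]
  rw [hsub, hu n (by omega), hu (n + 1) (by omega), hu (n - 1) (by omega)]
  ring

lemma IsSchrodinger.notMem_spectrum_of_periodic {H : L2Z →L[ℂ] L2Z} {lam : ℝ} {v : ℤ → ℝ}
    (hH : IsSchrodinger H fun n => lam * v n) {E : ℂ} {δ : ℝ} (hδ : 0 < δ)
    (h : ∀ L : ℕ, ∃ (S : List ℝ) (t : ℕ), 2 * L + 3 ≤ S.length ∧
      factor v (-L) (2 * L + 1) <:+: (List.replicate t S).flatten ∧
      ∀ E', ‖E' - E‖ < δ → (transferM lam E' S).trace ≠ 2) :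
    E ∉ spectrum ℂ H := by
  refine notMem_spectrum_of_le_norm_apply_sub_smul hH.isSelfAdjoint hδ
    (le_norm_apply_sub_smul_of_finite_support H E δ fun u L hu => ?_)
  obtain ⟨S, t, hlen, hinfix, htrace⟩ := h L
  have : NeZero S.length := ⟨by omega⟩
  obtain ⟨W, c, hS, hW⟩ := exists_eq_factor_zmod hinfix
  have hagree (n : ℤ) (hn : n.natAbs ≤ L) : lam * W n = lam * v n := by
    rw [hW n (by omega) (by omega)]
  rw [← hH.norm_cyclicSchrodinger_wrap (W := fun j => lam * W j) hlen hagree hu E,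
    ← norm_wrap (N := S.length) fun n hn => hu n (by omega)]
  refine le_norm_apply_sub_smul_of_isSymmetric (isSymmetric_cyclicSchrodinger _) hδ.le
    (fun E' hE' => ?_) _
  by_contra! hlt
  exact htrace E' hlt (hS ▸ trace_transferM_of_hasEigenvalue hE' c)

end Periodic

/-! ### Sturmian Schrödinger operators -/

/-- A period of the `N`-th periodic approximant of the words read off the exchange of intervals of
lengths `r 0 - r 1` and `r 1`, where `InducedLengths b r`.  The first parameter is lowered by one
because this exchange is not yet subdivided by `splitOnes`. -/
def periodWord (b : ℕ → ℕ) (N : ℕ) : List Bool :=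
  subst (b 0 - 1) (iterSubst (fun n => b (n + 1)) N [false])

lemma splitOnes_periodWord {b : ℕ → ℕ} (hb : 1 ≤ b 0) (N : ℕ) :
    splitOnes (periodWord b N) = iterSubst b (N + 1) [false] := by
  rw [periodWord, splitOnes_subst, Nat.sub_add_cancel hb, iterSubst_succ_eq_subst]

lemma tendsto_length_periodWord {b : ℕ → ℕ} (hb : ∀ n, 1 ≤ b n) :
    Tendsto (fun N => (periodWord b N).length) atTop atTop :=
  tendsto_atTop_mono (fun _ => length_le_length_subst _ _)
    (tendsto_length_iterSubst fun n => hb (n + 1))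

lemma Lang.eventually_isInfix_flatten_periodWord {b : ℕ → ℕ} {r : ℕ → ℝ}
    (hr : InducedLengths b r) (hb : ∀ n, 1 ≤ b n) {w : List Bool} (h : Lang (r 0 - r 1) (r 1) w) :
    ∀ᶠ N in atTop, ∃ t, w <:+: (List.replicate t (periodWord b N)).flatten := by
  have hlen := hr.eq_add 0
  have hsub : ((b 0 - 1 : ℕ) : ℝ) * r 1 = r 0 - r 1 - r 2 := by
    rw [Nat.cast_sub (hb 0), hlen]; push_cast; ring
  obtain ⟨W, hwW, hW⟩ := h.exists_infix_subst (hr.pos 1).le (b := b 0 - 1)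
    (by linarith [hr.pos 2])
  rw [hsub, sub_sub_cancel] at hW
  filter_upwards [hW.eventually_isInfix_iterSubst_replicate hr.succ fun n => hb (n + 1)]
    with N ⟨t, ht⟩
  rw [iterSubst_replicate] at ht
  exact ⟨t, hwW.trans ((ht.flatMap _).trans (subst_flatten_replicate _ _ _ ▸ List.infix_rfl))⟩

section TransferPair

/-- The transfer matrices, at energy `E`, for the letter `0` and for the change from `0` to `1`;
over a word `w` the transfer matrix is the `wordProd` of this pair over `splitOnes w`. -/
noncomputable def transferPair (lam : ℝ) (E : ℂ) :
    Matrix (Fin 2) (Fin 2) ℂ × Matrix (Fin 2) (Fin 2) ℂ :=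
  (transferT lam E 0, !![1, -lam; 0, 1])

lemma transferM_map_letterValue (lam : ℝ) (E : ℂ) (w : List Bool) :
    transferM lam E (w.map letterValue) = wordProd (transferPair lam E) (splitOnes w) := by
  induction w with
  | nil => rfl
  | cons a w ih =>
    have hletter : transferT lam E (letterValue a) =
        wordProd (transferPair lam E) (splitOnes [a]) := by
      cases a <;> simp [letterValue, splitOnes, wordProd, transferPair, transferT, sub_eq_add_neg]
    rw [List.map_cons, transferM, ih, hletter, ← wordProd_append, ← splitOnes_append,
      List.singleton_append]

lemma det_transferPair_fst (lam : ℝ) (E : ℂ) : (transferPair lam E).1.det = 1 :=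
  det_transferT lam E 0

lemma det_transferPair_snd (lam : ℝ) (E : ℂ) : (transferPair lam E).2.det = 1 := by
  simp [transferPair, det_fin_two]

lemma trace_transferPair_fst (lam : ℝ) (E : ℂ) : (transferPair lam E).1.trace = E := by
  simp [transferPair, transferT, trace_fin_two]

lemma trace_transferPair_snd (lam : ℝ) (E : ℂ) : (transferPair lam E).2.trace = 2 := by
  simp [transferPair, trace_fin_two, one_add_one_eq_two]

lemma traceSeq_transferPair_one (lam : ℝ) (E : ℂ) : traceSeq (transferPair lam E) 1 = E - lam := by
  simp [traceSeq, transferPair, transferT, trace_fin_two, sub_eq_add_neg]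

lemma fricke_transferPair (lam : ℝ) (E : ℂ) :
    fricke (transferPair lam E).1.trace (transferPair lam E).2.trace
      (traceSeq (transferPair lam E) 1) = lam ^ 2 := by
  rw [trace_transferPair_fst, trace_transferPair_snd, traceSeq_transferPair_one, fricke]
  ring

lemma trace_transferM_periodWord (lam : ℝ) (E : ℂ) {b : ℕ → ℕ} (hb : 1 ≤ b 0) (N : ℕ) :
    (transferM lam E ((periodWord b N).map letterValue)).trace =
      (inducedPair b (transferPair lam E) (N + 1)).1.trace := by
  rw [transferM_map_letterValue, splitOnes_periodWord hb, wordProd_iterSubst]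
  simp [wordProd]

lemma continuous_inducedPair {X M : Type*} [TopologicalSpace X] [TopologicalSpace M] [Monoid M]
    [ContinuousMul M] (b : ℕ → ℕ) {p : X → M × M} (hp : Continuous p) (n : ℕ) :
    Continuous fun x => inducedPair b (p x) n := by
  induction n with
  | zero => exact hp
  | succ n ih => exact (ih.snd.mul (ih.fst.pow _)).prodMk ih.fst

lemma continuous_transferPair (lam : ℝ) : Continuous (transferPair lam) := by
  refine Continuous.prodMk (continuous_matrix fun i j => ?_) continuous_const
  fin_cases i <;> fin_cases j
  exacts [continuous_id.sub continuous_const, continuous_const, continuous_const, continuous_const]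

lemma isOpen_setOf_escapes_inducedPair (b : ℕ → ℕ) (lam : ℝ) (n : ℕ) :
    IsOpen {E : ℂ | Escapes (inducedPair b (transferPair lam E) n)} := by
  have hcont := continuous_inducedPair b (continuous_transferPair lam) n
  have h₁ := hcont.fst.matrix_trace.norm
  have h₂ := hcont.snd.matrix_trace.norm
  have h₃ := (hcont.snd.mul (hcont.fst.pow 1)).matrix_trace.norm
  exact (isOpen_lt continuous_const h₁).inter ((isOpen_lt continuous_const h₂).inter
    (isOpen_lt (h₁.mul h₂) (h₃.const_mul 2)))

end TransferPair

-- Escape is an open condition that persists under inducing, so it excludes the trace `2` for all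
-- late periodic approximants and all energies near `E`.
lemma not_escapes_of_mem_spectrum {α θ lam : ℝ} (hirr : Irrational α) (hα : α ∈ Set.Ioo (0 : ℝ) 1)
    {H : L2Z →L[ℂ] L2Z} (hH : IsSchrodinger H fun n => lam * sturmian α θ n) {E : ℂ}
    (hE : E ∈ spectrum ℂ H) (n : ℕ) :
    ¬ Escapes (inducedPair (fun n => cfCoeff α (n + 1)) (transferPair lam E) n) := by
  intro hesc
  set b : ℕ → ℕ := fun n => cfCoeff α (n + 1)
  have hb (n) : 1 ≤ b n := one_le_cfCoeff_succ hirr hα n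
  obtain ⟨δ, hδ, hball⟩ := Metric.isOpen_iff.1 (isOpen_setOf_escapes_inducedPair b lam n) E hesc
  refine hH.notMem_spectrum_of_periodic hδ (fun L => ?_) hE
  obtain ⟨w, hw, hfactor⟩ := exists_lang_factor_sturmian hα θ (-L) (2 * L + 1)
  have hw' : Lang ((∏ i ∈ Finset.range 0, cfGauss α i) - ∏ i ∈ Finset.range 1, cfGauss α i)
      (∏ i ∈ Finset.range 1, cfGauss α i) w := by simpa [cfGauss] using hw
  obtain ⟨N, ⟨t, ht⟩, hlen, hnN⟩ :=
    ((hw'.eventually_isInfix_flatten_periodWord (inducedLengths_cfGauss hirr hα) hb).and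
      (((tendsto_length_periodWord hb).eventually_ge_atTop (2 * L + 3)).and
        (eventually_ge_atTop n))).exists
  refine ⟨(periodWord b N).map letterValue, t, by simpa using hlen, ?_, fun E' hE' htrace => ?_⟩
  · simpa [hfactor, List.map_flatten] using ht.map letterValue
  · have hE'esc := Escapes.inducedPair_of_le (det_transferPair_fst lam E')
      (det_transferPair_snd lam E') (Nat.le_succ_of_le hnN)
      (hball (by rwa [Metric.mem_ball, dist_eq_norm]))
    rw [trace_transferM_periodWord lam E' (hb 0)] at htrace
    exact absurd hE'esc.1 (by rw [htrace]; simp)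

/-! ### Polynomial growth -/

lemma exists_forall_sum_cfCoeff_le {α : ℝ} (h : BoundedDensity α) :
    ∃ G, 0 ≤ G ∧ ∀ k : ℕ, ∑ j ∈ Finset.range k, (cfCoeff α (j + 1) : ℝ) ≤ G * k := by
  obtain ⟨G, hG⟩ := h.bddAbove_range
  have hmean (k : ℕ) : (1 / k : ℝ) * ∑ j ∈ Finset.Icc 1 k, (cfCoeff α j : ℝ) ≤ G :=
    hG (Set.mem_range_self k)
  refine ⟨G, by simpa using hmean 0, fun k => ?_⟩
  rw [Finset.range_eq_Ico, Finset.sum_Ico_add' (fun j => (cfCoeff α j : ℝ)) 0 k 1, zero_add,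
    Finset.Ico_add_one_right_eq_Icc]
  rcases k.eq_zero_or_pos with rfl | hk
  · simp
  · have hk' : (0 : ℝ) < k := Nat.cast_pos.2 hk
    rw [← div_le_iff₀ hk', ← one_div_mul_eq_div]
    exact hmean k

-- The exponent is `μ = G log c / log (3 / 2)`, for which `c ^ G = (3 / 2) ^ μ`.
lemma exists_rpow_mul_le_mul_rpow {c G : ℝ} (hc : 1 < c) (hG : 0 < G) :
    ∃ C > (0 : ℝ), ∃ μ > (0 : ℝ), ∀ n : ℕ, 1 ≤ n →
      ∃ k : ℕ, n * 2 ^ k < 3 ^ k ∧ c ^ (G * k) ≤ C * (n : ℝ) ^ μ := by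
  have hlog : 0 < Real.logb (3 / 2) c := Real.logb_pos (by norm_num) hc
  set μ := Real.logb (3 / 2) c * G
  refine ⟨(3 / 2) ^ μ, by positivity, μ, by positivity, fun n hn => ?_⟩
  obtain ⟨k, hkn, hnk⟩ := exists_nat_pow_near (x := (n : ℝ)) (y := 3 / 2)
    (by exact_mod_cast hn) (by norm_num)
  refine ⟨k + 1, ?_, ?_⟩
  · rw [div_pow, lt_div_iff₀ (by positivity)] at hnk
    exact_mod_cast hnk
  · calc c ^ (G * (k + 1 : ℕ)) = ((3 / 2) ^ Real.logb (3 / 2) c) ^ (G * (k + 1 : ℕ)) := by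
          rw [Real.rpow_logb (by norm_num) (by norm_num) (by linarith)]
      _ = ((3 / 2 : ℝ) ^ (k + 1)) ^ μ := by
          rw [← Real.rpow_mul (by norm_num), ← Real.rpow_natCast_mul (by norm_num)]
          congr 1
          ring
      _ ≤ ((3 / 2) * n) ^ μ := by
          rw [pow_succ']
          gcongr
      _ = (3 / 2) ^ μ * n ^ μ := Real.mul_rpow (by norm_num) (by positivity)

lemma exists_wordProd_le_mul_rpow {𝕜 : Type*} [NormedField 𝕜] {b : ℕ → ℕ} {r : ℕ → ℝ} {G K : ℝ}
    (hr : InducedLengths b r) (hb : ∀ n, 1 ≤ b n) (hG : 0 ≤ G)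
    (hbG : ∀ k : ℕ, ∑ j ∈ Finset.range k, (b j : ℝ) ≤ G * k) (hK : 0 ≤ K) :
    ∃ C > (0 : ℝ), ∃ μ > (0 : ℝ), ∀ (ν : Seminorm 𝕜 (Matrix (Fin 2) (Fin 2) 𝕜)) (M : ℝ)
      (p : Matrix (Fin 2) (Fin 2) 𝕜 × Matrix (Fin 2) (Fin 2) 𝕜), BoundedOnShortWords ν M p →
      (∀ n, TraceBounded K (inducedPair b p n)) → ∀ w, w ≠ [] → Lang (r 0) (r 1) w →
      ν (wordProd p w) ≤ C * (w.length : ℝ) ^ μ * M := by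
  obtain ⟨C, hC, μ, hμ, h⟩ := exists_rpow_mul_le_mul_rpow (c := K + 2) (G := 2 * (3 * G + 4))
    (by linarith) (by positivity)
  refine ⟨C * 2 ^ μ, by positivity, μ, hμ, fun ν M p hν hp w hne hw => ?_⟩
  have hM : 0 ≤ M := (apply_nonneg ν _).trans (boundedOnShortWords_iff.1 hν).1
  have hlen := List.length_pos_iff.2 hne
  obtain ⟨k, hk, hle⟩ := h (weight w) (hlen.trans_le (length_le_weight w))
  have hsum : ((2 * ∑ j ∈ Finset.range k, (3 * b (0 + j) + 4) : ℕ) : ℝ) ≤ 2 * (3 * G + 4) * k := by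
    push_cast
    simp only [zero_add, Finset.sum_add_distrib, ← Finset.mul_sum, Finset.sum_const,
      Finset.card_range, nsmul_eq_mul]
    linarith [hbG k]
  have hweight : (weight w : ℝ) ≤ 2 * w.length := by exact_mod_cast weight_le w
  calc ν (wordProd p w)
      ≤ (K + 2) ^ (2 * ∑ j ∈ Finset.range k, (3 * b (0 + j) + 4)) * M :=
        hν.wordProd_inducedPair_le (n := 0) hr hb hp hw hk
    _ ≤ (K + 2) ^ (2 * (3 * G + 4) * k) * M := by
        rw [← Real.rpow_natCast]
        gcongr
        linarith
    _ ≤ C * (weight w : ℝ) ^ μ * M := by gcongr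
    _ ≤ C * (2 * w.length) ^ μ * M := by gcongr
    _ = C * 2 ^ μ * (w.length : ℝ) ^ μ * M := by
        rw [Real.mul_rpow (by norm_num) (by positivity)]
        ring

lemma exists_boundedOnShortWords_transferPair (lam K : ℝ) :
    ∃ M > 0, ∀ E : ℂ, ‖E‖ ≤ K →
      BoundedOnShortWords (normSeminorm ℂ (Matrix (Fin 2) (Fin 2) ℂ)) M (transferPair lam E) := by
  have hcont := continuous_transferPair lam
  obtain ⟨M, hM⟩ := (isCompact_closedBall (0 : ℂ) K).exists_bound_of_continuousOn
    (f := fun E => ‖(1 : Matrix (Fin 2) (Fin 2) ℂ)‖ + ‖(transferPair lam E).1‖ +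
      ‖(transferPair lam E).2‖ + ‖(transferPair lam E).1 * (transferPair lam E).2‖)
    (((continuous_const.add hcont.fst.norm).add hcont.snd.norm).add
      (hcont.fst.mul hcont.snd).norm).continuousOn
  refine ⟨max M 1, by positivity, fun E hE => ?_⟩
  have hsum := (le_abs_self _).trans (hM E (by simpa using hE))
  have h₁ := norm_nonneg (1 : Matrix (Fin 2) (Fin 2) ℂ)
  have h₂ := norm_nonneg (transferPair lam E).1
  have h₃ := norm_nonneg (transferPair lam E).2
  have h₄ := norm_nonneg ((transferPair lam E).1 * (transferPair lam E).2)
  simp only [boundedOnShortWords_iff, coe_normSeminorm, le_max_iff]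
  exact ⟨.inl (by linarith), .inl (by linarith), .inl (by linarith), .inl (by linarith)⟩

lemma traceBounded_inducedPair_transferPair {b : ℕ → ℕ} (hb : ∀ n, 1 ≤ b n) {lam : ℝ} {E : ℂ}
    (hesc : ∀ n, ¬ Escapes (inducedPair b (transferPair lam E) n)) (n : ℕ) :
    TraceBounded (2 * (‖(lam ^ 2 + 4 : ℂ)‖ + 8) + 2) (inducedPair b (transferPair lam E) n) :=
  traceBounded_inducedPair (det_transferPair_fst lam E) (det_transferPair_snd lam E)
    (by simp [trace_transferPair_snd]) hesc hb (by rw [fricke_transferPair]) n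

lemma exists_norm_transferM_le {α : ℝ} (hirr : Irrational α) (hα : α ∈ Set.Ioo (0 : ℝ) 1)
    (hbd : BoundedDensity α) (lam : ℝ) :
    ∃ C > (0 : ℝ), ∃ μ > (0 : ℝ), ∀ w, w ≠ [] → Lang (1 - α) α w → ∀ E : ℂ,
      (∀ n, ¬ Escapes (inducedPair (fun n => cfCoeff α (n + 1)) (transferPair lam E) n)) →
      ‖transferM lam E (w.map letterValue)‖ ≤ C * (w.length : ℝ) ^ μ := by
  have hb (n) : 1 ≤ cfCoeff α (n + 1) := one_le_cfCoeff_succ hirr hα n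
  set K := 2 * (‖(lam ^ 2 + 4 : ℂ)‖ + 8) + 2
  obtain ⟨G, hG, hbG⟩ := exists_forall_sum_cfCoeff_le hbd
  obtain ⟨C, hC, μ, hμ, hgrowth⟩ := exists_wordProd_le_mul_rpow (𝕜 := ℂ) (K := K)
    (inducedLengths_cfGauss hirr hα) hb hG hbG (by positivity)
  obtain ⟨M, hM, hshort⟩ := exists_boundedOnShortWords_transferPair lam K
  refine ⟨C * 2 ^ μ * M, by positivity, μ, hμ, fun w hne hw E hesc => ?_⟩
  have hp := traceBounded_inducedPair_transferPair hb hesc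
  have hE : ‖E‖ ≤ K := by simpa [inducedPair, trace_transferPair_fst] using (hp 0).trace_fst
  have hsplit : Lang 1 α (splitOnes w) := by
    simpa using hw.splitOnes (by linarith [hα.2]) hα.1.le
  have hne' : splitOnes w ≠ [] :=
    List.length_pos_iff.1 ((List.length_pos_iff.2 hne).trans_le (length_le_length_splitOnes w))
  have hlen : ((splitOnes w).length : ℝ) ≤ 2 * w.length := by exact_mod_cast length_splitOnes_le w
  rw [transferM_map_letterValue]
  calc ‖wordProd (transferPair lam E) (splitOnes w)‖
      ≤ C * ((splitOnes w).length : ℝ) ^ μ * M :=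
        hgrowth _ M _ (hshort E hE) hp _ hne' (by simpa [cfGauss] using hsplit)
    _ ≤ C * (2 * w.length) ^ μ * M := by gcongr
    _ = C * 2 ^ μ * M * (w.length : ℝ) ^ μ := by
        rw [Real.mul_rpow (by norm_num) (by positivity)]
        ring

end Sturmian

theorem transfer_matrices_polynomially_bounded_on_Walpha
    (α : ℝ) (hirr : Irrational α) (hα : α ∈ Set.Ioo (0 : ℝ) 1) (hbd : BoundedDensity α)
    (lam : ℝ) (hlam : lam ≠ 0) :
    ∃ C > (0 : ℝ), ∃ μ > (0 : ℝ), ∀ w ∈ Walpha α, ∀ θ' ∈ Set.Ico (0 : ℝ) 1,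
      ∀ H : lp (fun _ : ℤ => ℂ) 2 →L[ℂ] lp (fun _ : ℤ => ℂ) 2,
        (∀ u : lp (fun _ : ℤ => ℂ) 2, ∀ n : ℤ,
      H u n = u (n + 1) + u (n - 1) + (lam * sturmian α θ' n : ℝ) * u n) →
        ∀ E ∈ spectrum ℂ H,
          opNorm (transferM lam E w) ≤ C * (w.length : ℝ) ^ μ := by
  obtain ⟨C, hC, μ, hμ, hbound⟩ := Sturmian.exists_norm_transferM_le hirr hα hbd lam
  refine ⟨C, hC, μ, hμ, fun w hw θ' _ H hH E hE => ?_⟩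
  obtain ⟨u, hu, rfl⟩ := Sturmian.exists_lang_of_mem_Walpha hα hw
  obtain ⟨-, -, hne, -⟩ := hw
  rw [opNorm, Matrix.l2_opNorm_toEuclideanCLM, List.length_map]
  exact hbound u (by simpa using hne) hu E (Sturmian.not_escapes_of_mem_spectrum hirr hα hH hE)
end

section
/- Let α ∈ (0,1) be an irrational bounded density number and let λ ∈ ℝ \ {0}. Then there exist constants C > 0 and μ > 0 such that for every E in the spectrum of H_{λ,α,θ'} for some θ' ∈ [0,1) and every nonempty prefix w of the infinite word c_α, one has ‖M(λ,E,w)‖ ≤ C·|w|^μ. -/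
open scoped Classical

/-! The transfer matrices `M_k` over the standard words satisfy `M_{k+1} = M_{k-1} M_k ^ a_k`, and
the Fricke–Vogt invariant of consecutive pairs is the constant `4 + λ²`. If the traces of one
consecutive pair satisfy a suitable escape condition, so do those of all later pairs, and the
condition is open in `E`. Now let `E` be in the spectrum. Every long standard word contains any
given window of the potential, so folding a finitely supported approximate eigenvector onto a cycle
produces energies `E'` arbitrarily close to `E` at which some `M_n` with `n` large has trace `2`.
Hence no pair escapes at `E`, and the invariant then bounds all traces in terms of `λ` alone.

For matrices in `SL₂` whose traces are bounded, the Cayley–Hamilton theorem shows that multiplying a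
combination of `1`, `A`, `B`, `A B` by a power `B ^ n` costs a factor exponential in `n`, as does
passing from one consecutive pair to the preceding one. A prefix of length below `|s_k|` therefore
has a transfer matrix of norm at most exponential in `a_1 + ⋯ + a_k`. Bounded density makes
this exponential in `k`, while `|s_k|` itself grows exponentially in `k`. -/

open Matrix

section Traces

variable {R : Type*} [CommRing R] {B : Matrix (Fin 2) (Fin 2) R}

lemma mul_self_of_det_eq_one (hB : B.det = 1) : B * B = B.trace • B - 1 := by
  nontriviality R
  have cayley_hamilton := aeval_self_charpoly B
  simp only [charpoly_fin_two, hB, map_add, map_sub, map_mul, Polynomial.aeval_X,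
    Polynomial.aeval_C, ← Algebra.smul_def, map_one, sq] at cayley_hamilton
  linear_combination (norm := noncomm_ring) cayley_hamilton

lemma mul_swap_fin_two (A B : Matrix (Fin 2) (Fin 2) R) :
    B * A = -(A * B) + A.trace • B + B.trace • A +
      ((A * B).trace - A.trace * B.trace) • (1 : Matrix (Fin 2) (Fin 2) R) := by
  ext i j
  fin_cases i <;> fin_cases j <;> simp [mul_apply, Fin.sum_univ_two, trace_fin_two] <;> ring

lemma mul_mul_self_of_det_eq_one (hB : B.det = 1) (A : Matrix (Fin 2) (Fin 2) R) :
    B * (A * B) = (A * B).trace • B - A.trace • (1 : Matrix (Fin 2) (Fin 2) R) + A := by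
  rw [← mul_assoc, mul_swap_fin_two A B]
  simp only [add_mul, neg_mul, smul_mul_assoc, one_mul, mul_assoc, mul_self_of_det_eq_one hB,
    mul_sub, mul_one, mul_smul_comm]
  module

lemma trace_mul_mul_self (hB : B.det = 1) (A : Matrix (Fin 2) (Fin 2) R) :
    (B * (A * B)).trace = B.trace * (A * B).trace - A.trace := by
  rw [mul_mul_self_of_det_eq_one hB]
  simp only [trace_add, trace_sub, trace_smul, trace_one, smul_eq_mul, Fintype.card_fin]
  push_cast
  ring

/-- The Fricke–Vogt invariant of a pair of matrices in `SL₂`, equal to `2 + tr [A, B]`. -/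
def fricke (A B : Matrix (Fin 2) (Fin 2) R) : R :=
  A.trace ^ 2 + B.trace ^ 2 + (A * B).trace ^ 2 - A.trace * B.trace * (A * B).trace

lemma fricke_comm (A B : Matrix (Fin 2) (Fin 2) R) : fricke A B = fricke B A := by
  rw [fricke, fricke, trace_mul_comm B A]
  ring

lemma fricke_mul_right (hB : B.det = 1) (A : Matrix (Fin 2) (Fin 2) R) :
    fricke B (A * B) = fricke A B := by
  rw [fricke, fricke, trace_mul_mul_self hB]
  ring

lemma fricke_mul_pow (hB : B.det = 1) (A : Matrix (Fin 2) (Fin 2) R) (n : ℕ) :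
    fricke (A * B ^ n) B = fricke A B := by
  induction n with
  | zero => rw [pow_zero, mul_one]
  | succ n ih => rw [pow_succ, ← mul_assoc, fricke_comm, fricke_mul_right hB, ih]

end Traces

section TraceGrowth

variable {𝕜 : Type*} [NormedField 𝕜] {A B : Matrix (Fin 2) (Fin 2) 𝕜}

lemma norm_trace_mul_norm_trace_le (hB : B.det = 1) (A : Matrix (Fin 2) (Fin 2) 𝕜) :
    ‖B.trace‖ * ‖(A * B).trace‖ ≤ ‖A.trace‖ + ‖(B * (A * B)).trace‖ := by
  rw [← norm_mul, sub_eq_iff_eq_add'.1 (trace_mul_mul_self hB A).symm]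
  exact norm_add_le _ _

/-- The traces of a pair `(A, B)` satisfy the condition that makes the traces along
`(A, B) ↦ (B, A * B ^ n)` grow without bound. -/
def Escaping (A B : Matrix (Fin 2) (Fin 2) 𝕜) : Prop :=
  2 < ‖B.trace‖ ∧ 2 < ‖(A * B).trace‖ ∧ ‖A.trace‖ < ‖(A * B).trace‖

lemma Escaping.mul_right (hB : B.det = 1) (h : Escaping A B) : Escaping (A * B) B := by
  obtain ⟨hb, hab, ha⟩ := h
  have key := norm_trace_mul_norm_trace_le hB A
  rw [Escaping, trace_mul_comm (A * B) B]
  refine ⟨hb, ?_, ?_⟩ <;> nlinarith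

lemma Escaping.swap_mul_right (hB : B.det = 1) (h : Escaping A B) : Escaping B (A * B) := by
  obtain ⟨hb, hab, ha⟩ := h
  have key := norm_trace_mul_norm_trace_le hB A
  refine ⟨hab, ?_, ?_⟩ <;> nlinarith

lemma Escaping.swap_mul_pow (hB : B.det = 1) (h : Escaping A B) {n : ℕ} (hn : n ≠ 0) :
    Escaping B (A * B ^ n) := by
  obtain ⟨n, rfl⟩ := Nat.exists_eq_succ_of_ne_zero hn
  have step : ∀ m, Escaping (A * B ^ m) B := fun m ↦ by
    induction m with
    | zero => rwa [pow_zero, mul_one]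
    | succ m ih => rw [pow_succ, ← mul_assoc]; exact ih.mul_right hB
  rw [pow_succ, ← mul_assoc]
  exact (step n).swap_mul_right hB

/-- The traces of `(A, B)` satisfy the condition that makes the traces grow without bound in the
backward direction `(B, A * B ^ n) ↦ (A, B)`. -/
def BackwardEscaping (A B : Matrix (Fin 2) (Fin 2) 𝕜) : Prop :=
  2 < ‖B.trace‖ ∧ 2 < ‖A.trace‖ ∧ ‖(A * B).trace‖ ≤ ‖A.trace‖

lemma BackwardEscaping.of_mul_right (hB : B.det = 1) (h : BackwardEscaping (A * B) B) :
    BackwardEscaping A B := by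
  obtain ⟨hb, hab, habb⟩ := h
  have key := norm_trace_mul_norm_trace_le hB A
  rw [trace_mul_comm (A * B) B] at habb
  refine ⟨hb, ?_, ?_⟩ <;> nlinarith

lemma BackwardEscaping.of_swap_mul_right (hB : B.det = 1) (h : BackwardEscaping B (A * B)) :
    BackwardEscaping A B := by
  obtain ⟨hab, hb, habb⟩ := h
  have key := norm_trace_mul_norm_trace_le hB A
  refine ⟨hb, ?_, ?_⟩ <;> nlinarith

lemma BackwardEscaping.of_swap_mul_pow (hB : B.det = 1) {n : ℕ} (hn : n ≠ 0)
    (h : BackwardEscaping B (A * B ^ n)) : BackwardEscaping A B := by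
  obtain ⟨n, rfl⟩ := Nat.exists_eq_succ_of_ne_zero hn
  have step : ∀ m, BackwardEscaping (A * B ^ m) B → BackwardEscaping A B := fun m hm ↦ by
    induction m with
    | zero => rwa [pow_zero, mul_one] at hm
    | succ m ih => rw [pow_succ, ← mul_assoc] at hm; exact ih (hm.of_mul_right hB)
  rw [pow_succ, ← mul_assoc] at h
  exact step n (h.of_swap_mul_right hB)

lemma norm_sq_le_of_markov (u v w : 𝕜) :
    ‖w‖ ^ 2 ≤ ‖u ^ 2 + v ^ 2 + w ^ 2 - u * v * w‖ + ‖u‖ ^ 2 + ‖v‖ ^ 2 + ‖u‖ * ‖v‖ * ‖w‖ := by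
  simp only [← norm_pow, ← norm_mul]
  calc ‖w ^ 2‖
      = ‖(u ^ 2 + v ^ 2 + w ^ 2 - u * v * w) - u ^ 2 - v ^ 2 + u * v * w‖ := by ring_nf
    _ ≤ _ := norm_add_le_of_le (norm_sub_le_of_le (norm_sub_le _ _) le_rfl) le_rfl

lemma norm_trace_le_of_not_escaping {I : ℝ} (hI : ‖fricke A B‖ ≤ I) (hE : ¬Escaping A B)
    (hT : ¬BackwardEscaping A B) : ‖B.trace‖ ≤ 6 + I := by
  have hI0 := (norm_nonneg _).trans hI
  by_contra! hb
  have hb2 : 2 < ‖B.trace‖ := by linarith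
  have ha : ‖A.trace‖ ≤ 2 := by
    by_contra! ha
    have hab : ‖A.trace‖ < ‖(A * B).trace‖ := by
      by_contra! hab
      exact hT ⟨hb2, ha, hab⟩
    exact hE ⟨hb2, ha.trans hab, hab⟩
  have hab : ‖(A * B).trace‖ ≤ 2 := by
    by_contra! hab
    exact hE ⟨hb2, hab, ha.trans_lt hab⟩
  have hsq : ‖B.trace‖ ^ 2 ≤ I + 2 ^ 2 + 2 ^ 2 + 2 * 2 * ‖B.trace‖ :=
    (norm_sq_le_of_markov A.trace (A * B).trace B.trace).trans <| by
      rw [show A.trace ^ 2 + (A * B).trace ^ 2 + B.trace ^ 2 - A.trace * (A * B).trace * B.trace =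
        fricke A B by rw [fricke]; ring]
      gcongr
  nlinarith

/-- A bound for the traces of `A`, `B` and `A * B` when the Fricke–Vogt invariant of `(A, B)` is
bounded by `I` and neither direction of the trace map escapes. -/
def traceBound (I : ℝ) : ℝ := 3 * (6 + I) ^ 2 + I

lemma le_traceBound {I : ℝ} (hI : 0 ≤ I) : 6 + I ≤ traceBound I := by
  unfold traceBound
  nlinarith

lemma norm_trace_mul_le_traceBound {I : ℝ} (hI : ‖fricke A B‖ ≤ I) (hA : ‖A.trace‖ ≤ 6 + I)
    (hB : ‖B.trace‖ ≤ 6 + I) : ‖(A * B).trace‖ ≤ traceBound I := by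
  have hI0 := (norm_nonneg _).trans hI
  by_contra! hab
  unfold traceBound at hab
  have hsq : ‖(A * B).trace‖ ^ 2 ≤
      I + (6 + I) ^ 2 + (6 + I) ^ 2 + (6 + I) * (6 + I) * ‖(A * B).trace‖ :=
    (norm_sq_le_of_markov A.trace B.trace (A * B).trace).trans <| by
      rw [← fricke]
      gcongr
  nlinarith [mul_nonneg hI0 (sq_nonneg (6 + I))]

end TraceGrowth

section Combinations

variable {𝕜 : Type*} [NormedField 𝕜] {A B A' B' X Y : Matrix (Fin 2) (Fin 2) 𝕜} {r s K : ℝ}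

/-- `X` is a linear combination of `1`, `A`, `B` and `A * B` whose coefficients have norms summing
to at most `r`. -/
def PairCombination (A B : Matrix (Fin 2) (Fin 2) 𝕜) (r : ℝ) (X : Matrix (Fin 2) (Fin 2) 𝕜) :
    Prop :=
  ∃ c₀ c₁ c₂ c₃ : 𝕜, X = c₀ • 1 + c₁ • A + c₂ • B + c₃ • (A * B) ∧
    ‖c₀‖ + ‖c₁‖ + ‖c₂‖ + ‖c₃‖ ≤ r

namespace PairCombination

lemma mono (h : PairCombination A B r X) (hrs : r ≤ s) : PairCombination A B s X := by
  obtain ⟨c₀, c₁, c₂, c₃, hX, hr⟩ := h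
  exact ⟨c₀, c₁, c₂, c₃, hX, hr.trans hrs⟩

lemma nonneg (h : PairCombination A B r X) : 0 ≤ r := by
  obtain ⟨c₀, c₁, c₂, c₃, -, hr⟩ := h
  exact le_trans (by positivity) hr

lemma one : PairCombination A B 1 1 := ⟨1, 0, 0, 0, by simp, by simp⟩

lemma left : PairCombination A B 1 A := ⟨0, 1, 0, 0, by simp, by simp⟩

lemma right : PairCombination A B 1 B := ⟨0, 0, 1, 0, by simp, by simp⟩

lemma prod : PairCombination A B 1 (A * B) := ⟨0, 0, 0, 1, by simp, by simp⟩

lemma add (hX : PairCombination A B r X) (hY : PairCombination A B s Y) :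
    PairCombination A B (r + s) (X + Y) := by
  obtain ⟨c₀, c₁, c₂, c₃, rfl, hr⟩ := hX
  obtain ⟨d₀, d₁, d₂, d₃, rfl, hs⟩ := hY
  refine ⟨c₀ + d₀, c₁ + d₁, c₂ + d₂, c₃ + d₃, by module, ?_⟩
  linarith [norm_add_le c₀ d₀, norm_add_le c₁ d₁, norm_add_le c₂ d₂, norm_add_le c₃ d₃]

lemma smul (c : 𝕜) (hX : PairCombination A B r X) :
    PairCombination A B (‖c‖ * r) (c • X) := by
  obtain ⟨c₀, c₁, c₂, c₃, rfl, hr⟩ := hX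
  refine ⟨c * c₀, c * c₁, c * c₂, c * c₃, by module, ?_⟩
  simp only [norm_mul, ← mul_add]
  gcongr

lemma map (hX : PairCombination A B r X)
    (f : Matrix (Fin 2) (Fin 2) 𝕜 →ₗ[𝕜] Matrix (Fin 2) (Fin 2) 𝕜)
    (h₀ : PairCombination A' B' s (f 1)) (h₁ : PairCombination A' B' s (f A))
    (h₂ : PairCombination A' B' s (f B)) (h₃ : PairCombination A' B' s (f (A * B))) :
    PairCombination A' B' (r * s) (f X) := by
  obtain ⟨c₀, c₁, c₂, c₃, rfl, hr⟩ := hX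
  simp only [map_add, map_smul]
  refine ((((h₀.smul c₀).add (h₁.smul c₁)).add (h₂.smul c₂)).add (h₃.smul c₃)).mono ?_
  simp only [← add_mul]
  exact mul_le_mul_of_nonneg_right hr h₀.nonneg

end PairCombination

/-- `B` lies in `SL₂` and the traces of `A`, `B` and `A * B` are bounded by `K`. -/
structure BoundedTracePair (K : ℝ) (A B : Matrix (Fin 2) (Fin 2) 𝕜) : Prop where
  det_right : B.det = 1
  norm_trace_left : ‖A.trace‖ ≤ K
  norm_trace_right : ‖B.trace‖ ≤ K
  norm_trace_mul : ‖(A * B).trace‖ ≤ K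

/-- The factor by which coefficients of combinations grow under multiplication by a matrix of a
pair with traces bounded by `K`. -/
def combinationGrowth (K : ℝ) : ℝ := 1 + 3 * K + K ^ 2

lemma one_le_combinationGrowth (hK : 0 ≤ K) : 1 ≤ combinationGrowth K := by
  unfold combinationGrowth
  nlinarith

lemma one_add_two_mul_le_combinationGrowth (hK : 0 ≤ K) : 1 + 2 * K ≤ combinationGrowth K := by
  unfold combinationGrowth
  nlinarith

namespace BoundedTracePair

lemma nonneg (h : BoundedTracePair K A B) : 0 ≤ K := (norm_nonneg _).trans h.norm_trace_left

lemma one_le_growth (h : BoundedTracePair K A B) : 1 ≤ combinationGrowth K :=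
  one_le_combinationGrowth h.nonneg

lemma combination_right (h : BoundedTracePair K A B) :
    PairCombination A B (combinationGrowth K) B :=
  PairCombination.right.mono h.one_le_growth

lemma combination_right_mul_right (h : BoundedTracePair K A B) :
    PairCombination A B (combinationGrowth K) (B * B) := by
  refine ⟨-1, 0, B.trace, 0, ?_, le_trans ?_ (one_add_two_mul_le_combinationGrowth h.nonneg)⟩
  · rw [mul_self_of_det_eq_one h.det_right]
    module
  · simp only [norm_neg, norm_one, norm_zero]
    linarith [h.norm_trace_right, h.nonneg]

lemma combination_left_mul_right_mul_right (h : BoundedTracePair K A B) :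
    PairCombination A B (combinationGrowth K) (A * B * B) := by
  refine ⟨0, -1, 0, B.trace, ?_, le_trans ?_ (one_add_two_mul_le_combinationGrowth h.nonneg)⟩
  · rw [mul_assoc, mul_self_of_det_eq_one h.det_right, mul_sub, mul_one, mul_smul_comm]
    module
  · simp only [norm_neg, norm_one, norm_zero]
    linarith [h.norm_trace_right, h.nonneg]

lemma combination_right_mul_left (h : BoundedTracePair K A B) :
    PairCombination A B (combinationGrowth K) (B * A) := by
  refine ⟨(A * B).trace - A.trace * B.trace, B.trace, A.trace, -1, ?_, ?_⟩
  · rw [mul_swap_fin_two]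
    module
  · have hAB := calc ‖(A * B).trace - A.trace * B.trace‖
        ≤ ‖(A * B).trace‖ + ‖A.trace‖ * ‖B.trace‖ :=
          norm_sub_le_of_le le_rfl (norm_mul _ _).le
      _ ≤ K + K * K := add_le_add h.norm_trace_mul
          (mul_le_mul h.norm_trace_left h.norm_trace_right (norm_nonneg _) h.nonneg)
    rw [norm_neg, norm_one, combinationGrowth]
    linarith [h.norm_trace_left, h.norm_trace_right]

lemma combination_right_mul_left_mul_right (h : BoundedTracePair K A B) :
    PairCombination A B (combinationGrowth K) (B * (A * B)) := by
  refine ⟨-A.trace, 1, (A * B).trace, 0, ?_,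
    le_trans ?_ (one_add_two_mul_le_combinationGrowth h.nonneg)⟩
  · rw [mul_mul_self_of_det_eq_one h.det_right]
    module
  · rw [norm_neg, norm_one, norm_zero]
    linarith [h.norm_trace_left, h.norm_trace_mul]

lemma combination_mul_right (h : BoundedTracePair K A B) (hX : PairCombination A B r X) :
    PairCombination A B (r * combinationGrowth K) (X * B) :=
  hX.map (LinearMap.mulRight 𝕜 B) (by simpa using h.combination_right)
    (PairCombination.prod.mono h.one_le_growth)
    h.combination_right_mul_right h.combination_left_mul_right_mul_right

lemma combination_mul_left (h : BoundedTracePair K A B) (hX : PairCombination A B r X) :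
    PairCombination A B (r * combinationGrowth K) (B * X) :=
  hX.map (LinearMap.mulLeft 𝕜 B) (by simpa using h.combination_right) h.combination_right_mul_left
    h.combination_right_mul_right h.combination_right_mul_left_mul_right

lemma combination_mul_pow (h : BoundedTracePair K A B) (hX : PairCombination A B r X) (n : ℕ) :
    PairCombination A B (r * combinationGrowth K ^ n) (X * B ^ n) := by
  induction n with
  | zero => simpa using hX
  | succ n ih =>
    rw [pow_succ, ← mul_assoc, pow_succ, ← mul_assoc]
    exact h.combination_mul_right ih

lemma combination_pow_mul (h : BoundedTracePair K A B) (hX : PairCombination A B r X) (n : ℕ) :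
    PairCombination A B (r * combinationGrowth K ^ n) (B ^ n * X) := by
  induction n with
  | zero => simpa using hX
  | succ n ih =>
    rw [pow_succ, ← mul_assoc, pow_succ' B, mul_assoc B]
    exact h.combination_mul_left ih

lemma combination_of_swap_mul_pow (h : BoundedTracePair K A B) {n : ℕ}
    (hX : PairCombination B (A * B ^ n) r X) :
    PairCombination A B (r * combinationGrowth K ^ (n + 1)) X := by
  have one_le_pow : ∀ m, 1 ≤ combinationGrowth K ^ m := fun m ↦ one_le_pow₀ h.one_le_growth
  refine hX.map LinearMap.id (PairCombination.one.mono (one_le_pow _))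
    (PairCombination.right.mono (one_le_pow _)) ?_ ?_
  · refine (h.combination_mul_pow PairCombination.left n).mono ?_
    rw [one_mul]
    exact pow_le_pow_right₀ h.one_le_growth n.le_succ
  · rw [LinearMap.id_apply, ← mul_assoc, pow_succ']
    exact h.combination_mul_pow h.combination_right_mul_left n

end BoundedTracePair

end Combinations

section TransferMatrices

variable (lam : ℝ) (E : ℂ) (a : ℕ → ℕ)

lemma transferM_append (u v : List ℝ) :
    transferM lam E (u ++ v) = transferM lam E v * transferM lam E u := by
  induction u with
  | nil => simp [transferM]
  | cons x u ih => simp [transferM, ih, mul_assoc]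

lemma transferM_flatten_replicate (u : List ℝ) (n : ℕ) :
    transferM lam E (List.replicate n u).flatten = transferM lam E u ^ n := by
  induction n with
  | zero => simp [transferM]
  | succ n ih => simp [List.replicate_succ, transferM_append, ih, pow_succ]

lemma transferM_replicate (x : ℝ) (n : ℕ) :
    transferM lam E (List.replicate n x) = transferT lam E x ^ n := by
  induction n with
  | zero => simp [transferM]
  | succ n ih => simp [List.replicate_succ, transferM, ih, pow_succ]

/-- The transfer matrices over the standard words, with the index shift of `sWord`.  The matrix at
index `0` is not the transfer matrix over the word `1` but the one for which the recursion of the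
standard words already holds at the first step. -/
def standardTransfer : ℕ → Matrix (Fin 2) (Fin 2) ℂ
  | 0 => !![1, -lam; 0, 1]
  | 1 => transferT lam E 0
  | k + 2 => standardTransfer k * standardTransfer (k + 1) ^ a (k + 1)

lemma standardTransfer_add_two (k : ℕ) : standardTransfer lam E a (k + 2) =
    standardTransfer lam E a k * standardTransfer lam E a (k + 1) ^ a (k + 1) := rfl

lemma det_standardTransfer (k : ℕ) : (standardTransfer lam E a k).det = 1 := by
  induction k using Nat.twoStepInduction with
  | zero => simp [standardTransfer]
  | one => simp [standardTransfer, transferT]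
  | more k ih₀ ih₁ => simp [standardTransfer, ih₀, ih₁]

lemma trace_standardTransfer_zero : (standardTransfer lam E a 0).trace = 2 := by
  simp [standardTransfer, trace_fin_two, one_add_one_eq_two]

lemma trace_standardTransfer_one : (standardTransfer lam E a 1).trace = E := by
  simp [standardTransfer, transferT, trace_fin_two]

lemma transferT_one :
    transferT lam E 1 = standardTransfer lam E a 0 * standardTransfer lam E a 1 := by
  simp [transferT, standardTransfer, sub_eq_add_neg]

lemma transferM_sWord {a : ℕ → ℕ} (ha : a 1 ≠ 0) (k : ℕ) :
    transferM lam E (sWord a (k + 1)) = standardTransfer lam E a (k + 1) := by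
  induction k using Nat.twoStepInduction with
  | zero => simp [standardTransfer, sWord, transferM]
  | one =>
    have hpow : standardTransfer lam E a 1 ^ a 1 =
        standardTransfer lam E a 1 * transferT lam E 0 ^ (a 1 - 1) :=
      (mul_pow_sub_one ha _).symm
    simp only [sWord, transferM_append, transferM_replicate, transferM, one_mul,
      transferT_one lam E a, standardTransfer_add_two, zero_add, hpow, mul_assoc]
  | more k ih₀ ih₁ =>
    rw [sWord, transferM_append, transferM_flatten_replicate, standardTransfer, ih₀, ih₁]

lemma fricke_standardTransfer (k : ℕ) :
    fricke (standardTransfer lam E a k) (standardTransfer lam E a (k + 1)) = 4 + (lam : ℂ) ^ 2 := by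
  induction k with
  | zero =>
    simp [fricke, standardTransfer, transferT, trace_fin_two]
    ring
  | succ k ih =>
    rw [standardTransfer_add_two, fricke_comm, fricke_mul_pow (det_standardTransfer ..), ih]

lemma not_backwardEscaping_standardTransfer {a : ℕ → ℕ} (ha : ∀ k, a (k + 1) ≠ 0) (k : ℕ) :
    ¬BackwardEscaping (standardTransfer lam E a k) (standardTransfer lam E a (k + 1)) := by
  induction k with
  | zero =>
    rintro ⟨-, h, -⟩
    rw [trace_standardTransfer_zero] at h
    norm_num at h
  | succ k ih => exact fun h ↦ ih (h.of_swap_mul_pow (det_standardTransfer ..) (ha k))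

lemma boundedTracePair_standardTransfer {a : ℕ → ℕ} (ha : ∀ k, a (k + 1) ≠ 0)
    (hE : ∀ k, ¬Escaping (standardTransfer lam E a k) (standardTransfer lam E a (k + 1))) (k : ℕ) :
    BoundedTracePair (traceBound (4 + lam ^ 2)) (standardTransfer lam E a k)
      (standardTransfer lam E a (k + 1)) := by
  have hfricke (k : ℕ) : ‖fricke (standardTransfer lam E a k) (standardTransfer lam E a (k + 1))‖ ≤
      4 + lam ^ 2 := by
    rw [fricke_standardTransfer]
    exact (norm_add_le _ _).trans_eq (by simp)
  have htrace (k : ℕ) : ‖(standardTransfer lam E a k).trace‖ ≤ 6 + (4 + lam ^ 2) := by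
    cases k with
    | zero =>
      rw [trace_standardTransfer_zero, RCLike.norm_ofNat]
      nlinarith
    | succ k =>
      exact norm_trace_le_of_not_escaping (hfricke k) (hE k)
        (not_backwardEscaping_standardTransfer lam E ha k)
  have hbound : 6 + (4 + lam ^ 2) ≤ traceBound (4 + lam ^ 2) := le_traceBound (by positivity)
  exact ⟨det_standardTransfer .., (htrace k).trans hbound, (htrace (k + 1)).trans hbound,
    norm_trace_mul_le_traceBound (hfricke k) (htrace k) (htrace (k + 1))⟩

end TransferMatrices

section Prefixes

lemma exists_eq_flatten_append_of_prefix {β : Type*} {u v w : List β} {n : ℕ}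
    (h : w <+: (List.replicate n u).flatten ++ v) :
    ∃ j ≤ n, ∃ w', w = (List.replicate j u).flatten ++ w' ∧ (w' <+: u ∨ w' <+: v) := by
  induction n generalizing w with
  | zero => exact ⟨0, le_rfl, w, by simp, Or.inr (by simpa using h)⟩
  | succ n ih =>
    rw [List.replicate_succ, List.flatten_cons, List.append_assoc] at h
    rcases List.prefix_or_prefix_of_prefix h (List.prefix_append u _) with hw | ⟨w, rfl⟩
    · exact ⟨0, n.succ.zero_le, w, by simp, Or.inl hw⟩
    · obtain ⟨j, hj, w', rfl, hw'⟩ := ih ((List.prefix_append_right_inj u).1 h)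
      exact ⟨j + 1, by lia, w', by simp [List.replicate_succ], hw'⟩

variable {lam K r : ℝ} {E : ℂ} {a : ℕ → ℕ} {w : List ℝ} {X : Matrix (Fin 2) (Fin 2) ℂ}

lemma transferM_eq_of_prefix_sWord_one_or_two (ha : a 1 ≠ 0)
    (hw : w <+: sWord a 1 ∨ w <+: sWord a 2) :
    (∃ n ≤ a 1, transferM lam E w = standardTransfer lam E a 1 ^ n) ∨
      transferM lam E w = standardTransfer lam E a 2 := by
  have hzeros {m : ℕ} (hm : m ≤ a 1) (h : w <+: List.replicate m 0) :
      ∃ n ≤ a 1, transferM lam E w = standardTransfer lam E a 1 ^ n := by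
    rw [List.prefix_replicate_iff] at h
    exact ⟨w.length, h.1.trans hm, by rw [h.2, transferM_replicate, List.length_replicate]; rfl⟩
  rcases hw with hw | hw
  · exact Or.inl (hzeros (m := 1) (Nat.one_le_iff_ne_zero.2 ha) hw)
  · rcases List.prefix_concat_iff.1 hw with rfl | hw
    · exact Or.inr (transferM_sWord lam E ha 1)
    · exact Or.inl (hzeros (Nat.sub_le _ _) hw)

lemma combination_transferM_of_prefix_sWord_one_or_two (ha : a 1 ≠ 0)
    (hpair : ∀ k,
      BoundedTracePair K (standardTransfer lam E a k) (standardTransfer lam E a (k + 1)))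
    (hw : w <+: sWord a 1 ∨ w <+: sWord a 2)
    (hX : PairCombination (standardTransfer lam E a 1) (standardTransfer lam E a 2) r X) :
    PairCombination (standardTransfer lam E a 0) (standardTransfer lam E a 1)
      (r * combinationGrowth K ^ (2 * a 1 + 1)) (transferM lam E w * X) := by
  have hr := hX.nonneg
  have hc := (hpair 0).one_le_growth
  rcases transferM_eq_of_prefix_sWord_one_or_two ha hw with ⟨n, hn, hw⟩ | hw <;> rw [hw]
  · refine ((hpair 0).combination_pow_mul ((hpair 0).combination_of_swap_mul_pow hX) n).mono ?_
    rw [mul_assoc, ← pow_add]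
    exact mul_le_mul_of_nonneg_left (pow_le_pow_right₀ hc (by lia)) hr
  · refine ((hpair 0).combination_of_swap_mul_pow ((hpair 1).combination_mul_left hX)).mono ?_
    rw [mul_assoc, ← pow_succ']
    exact mul_le_mul_of_nonneg_left (pow_le_pow_right₀ hc (by lia)) hr

lemma combination_transferM_of_prefix_sWord (ha : a 1 ≠ 0)
    (hpair : ∀ k,
      BoundedTracePair K (standardTransfer lam E a k) (standardTransfer lam E a (k + 1)))
    (k : ℕ) (hw : w <+: sWord a (k + 1) ∨ w <+: sWord a (k + 2))
    (hX :
      PairCombination (standardTransfer lam E a (k + 1)) (standardTransfer lam E a (k + 2)) r X) :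
    PairCombination (standardTransfer lam E a 0) (standardTransfer lam E a 1)
      (r * combinationGrowth K ^ ∑ j ∈ Finset.Icc 1 (k + 1), (2 * a j + 1))
      (transferM lam E w * X) := by
  induction k generalizing w r X with
  | zero =>
    simpa using combination_transferM_of_prefix_sWord_one_or_two ha hpair hw hX
  | succ k ih =>
    obtain ⟨j, hj, w', rfl, hw'⟩ : ∃ j ≤ a (k + 2), ∃ w',
        w = (List.replicate j (sWord a (k + 2))).flatten ++ w' ∧
          (w' <+: sWord a (k + 1) ∨ w' <+: sWord a (k + 2)) := by
      rcases hw with hw | hw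
      · exact ⟨0, Nat.zero_le _, w, by simp, Or.inr hw⟩
      · obtain ⟨j, hj, w', rfl, hw'⟩ := exists_eq_flatten_append_of_prefix hw
        exact ⟨j, hj, w', rfl, hw'.symm⟩
    have hX' := (hpair (k + 1)).combination_pow_mul
      ((hpair (k + 1)).combination_of_swap_mul_pow hX) j
    rw [transferM_append, transferM_flatten_replicate, transferM_sWord lam E ha, mul_assoc]
    refine (ih hw' hX').mono ?_
    have hr := hX.nonneg
    have hc := (hpair 0).one_le_growth
    rw [Finset.sum_Icc_succ_top (Nat.le_add_left 1 (k + 1)), mul_assoc, mul_assoc, ← pow_add,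
      ← pow_add]
    exact mul_le_mul_of_nonneg_left (pow_le_pow_right₀ hc (by lia)) hr

end Prefixes

section OperatorNorm

open scoped Matrix.Norms.L2Operator

lemma PairCombination.opNorm_le {A B X : Matrix (Fin 2) (Fin 2) ℂ} {r : ℝ}
    (h : PairCombination A B r X) : opNorm X ≤ r * ((1 + ‖A‖) * (1 + ‖B‖)) := by
  obtain ⟨c₀, c₁, c₂, c₃, rfl, hr⟩ := h
  have hA := norm_nonneg A
  have hB := norm_nonneg B
  have hAB := mul_nonneg hA hB
  have hle {Y : Matrix (Fin 2) (Fin 2) ℂ} (c : ℂ) (hY : ‖Y‖ ≤ (1 + ‖A‖) * (1 + ‖B‖)) :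
      ‖c • Y‖ ≤ ‖c‖ * ((1 + ‖A‖) * (1 + ‖B‖)) :=
    (norm_smul_le c Y).trans (by gcongr)
  refine le_trans ?_ (mul_le_mul_of_nonneg_right hr (by positivity))
  simp only [add_mul (_ + _ : ℝ), add_mul ‖c₀‖]
  refine norm_add_le_of_le (norm_add_le_of_le (norm_add_le_of_le (hle c₀ ?_) (hle c₁ ?_))
    (hle c₂ ?_)) (hle c₃ ((norm_mul_le A B).trans ?_))
  · rw [norm_one]
    nlinarith
  all_goals nlinarith

lemma exists_opNorm_le_of_combination (lam K : ℝ) : ∃ C > 0, ∀ (E : ℂ) (a : ℕ → ℕ) (r : ℝ) X,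
    ‖E‖ ≤ K → PairCombination (standardTransfer lam E a 0) (standardTransfer lam E a 1) r X →
      opNorm X ≤ C * r := by
  obtain ⟨D, hD⟩ := (isCompact_closedBall (0 : ℂ) K).exists_bound_of_continuousOn
    (f := fun E ↦ transferT lam E 0) (by unfold transferT; fun_prop)
  refine ⟨(1 + ‖!![(1 : ℂ), -lam; 0, 1]‖) * (1 + |D|), by positivity, fun E a r X hE hX ↦ ?_⟩
  have hr := hX.nonneg
  rw [mul_comm]
  refine hX.opNorm_le.trans ?_
  rw [standardTransfer, standardTransfer]
  gcongr
  exact (hD E (mem_closedBall_zero_iff.2 hE)).trans (le_abs_self D)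

end OperatorNorm

section ContinuedFractions

/-- The denominators of the convergents of a continued fraction with partial quotients
`a 1, a 2, …`, with an index shift: `convergentDenom a k` is usually written `q_{k-1}`, so
`q_{-1} = 0` and `q_0 = 1`. -/
def convergentDenom (a : ℕ → ℕ) : ℕ → ℕ
  | 0 => 0
  | 1 => 1
  | k + 2 => a (k + 1) * convergentDenom a (k + 1) + convergentDenom a k

/-- The numerators of the convergents, with the index shift of `convergentDenom`. -/
def convergentNum (a : ℕ → ℕ) : ℕ → ℤ
  | 0 => 1
  | 1 => 0
  | k + 2 => a (k + 1) * convergentNum a (k + 1) + convergentNum a k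

lemma convergentDenom_two (a : ℕ → ℕ) : convergentDenom a 2 = a 1 := by simp [convergentDenom]

lemma convergent_det (a : ℕ → ℕ) (k : ℕ) :
    (convergentDenom a (k + 1) : ℤ) * convergentNum a k -
      convergentDenom a k * convergentNum a (k + 1) = (-1) ^ k := by
  induction k with
  | zero => simp [convergentDenom, convergentNum]
  | succ k ih =>
    rw [convergentDenom, convergentNum, pow_succ, ← ih]
    push_cast
    ring

lemma exists_eq_add_convergents (a : ℕ → ℕ) (k : ℕ) (m l : ℤ) :
    ∃ x y : ℤ, m = x * convergentDenom a k + y * convergentDenom a (k + 1) ∧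
      l = x * convergentNum a k + y * convergentNum a (k + 1) := by
  have det := convergent_det a k
  have sign : (-1 : ℤ) ^ k * (-1) ^ k = 1 := by rw [← mul_pow]; simp
  exact ⟨(-1) ^ k * (l * convergentDenom a (k + 1) - m * convergentNum a (k + 1)),
    (-1) ^ k * (m * convergentNum a k - l * convergentDenom a k),
    by linear_combination (-(-1) ^ k * m) * det - m * sign,
    by linear_combination (-(-1) ^ k * l) * det - l * sign⟩

section Growth

variable {a : ℕ → ℕ} (ha : ∀ k, a (k + 1) ≠ 0)
include ha

lemma convergentDenom_add_le (k : ℕ) :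
    convergentDenom a (k + 1) + convergentDenom a k ≤ convergentDenom a (k + 2) := by
  rw [convergentDenom]
  gcongr
  exact Nat.le_mul_of_pos_left _ (Nat.pos_of_ne_zero (ha k))

lemma convergentDenom_mono : Monotone (convergentDenom a) := by
  refine monotone_nat_of_le_succ fun k ↦ ?_
  cases k with
  | zero => simp [convergentDenom]
  | succ k => exact (Nat.le_add_right _ _).trans (convergentDenom_add_le ha k)

lemma convergentDenom_pos (k : ℕ) : 0 < convergentDenom a (k + 1) :=
  Nat.one_pos.trans_le (convergentDenom_mono ha (Nat.le_add_left 1 k))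

lemma le_convergentDenom (k : ℕ) : k ≤ convergentDenom a (k + 1) := by
  induction k with
  | zero => exact Nat.zero_le _
  | succ k ih =>
    cases k with
    | zero => exact convergentDenom_pos ha 1
    | succ k =>
      calc k + 1 + 1 ≤ convergentDenom a (k + 2) + convergentDenom a (k + 1) :=
          Nat.add_le_add ih (convergentDenom_pos ha k)
        _ ≤ convergentDenom a (k + 3) := convergentDenom_add_le ha (k + 1)

lemma two_pow_le_convergentDenom_sq (k : ℕ) : 2 ^ k ≤ 2 * convergentDenom a (k + 1) ^ 2 := by
  induction k using Nat.twoStepInduction with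
  | zero => simp [convergentDenom]
  | one => nlinarith [convergentDenom_pos ha 1]
  | more k ih _ =>
    have add_le : convergentDenom a (k + 2) + convergentDenom a (k + 1) ≤
        convergentDenom a (k + 3) := convergentDenom_add_le ha (k + 1)
    have mono : convergentDenom a (k + 1) ≤ convergentDenom a (k + 2) :=
      convergentDenom_mono ha (Nat.le_succ _)
    calc 2 ^ (k + 2) = 4 * 2 ^ k := by ring
      _ ≤ 4 * (2 * convergentDenom a (k + 1) ^ 2) := by gcongr
      _ = 2 * (2 * convergentDenom a (k + 1)) ^ 2 := by ring
      _ ≤ 2 * convergentDenom a (k + 3) ^ 2 := by gcongr; omega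

end Growth

lemma length_sWord {a : ℕ → ℕ} (ha : a 1 ≠ 0) (k : ℕ) :
    (sWord a (k + 1)).length = convergentDenom a (k + 1) := by
  induction k using Nat.twoStepInduction with
  | zero => rfl
  | one => simp [sWord, convergentDenom]; omega
  | more k ih ih' => rw [sWord, convergentDenom, ← ih, ← ih']; simp

/-- The error `|q_{k-1} α - p_{k-1}|` of the convergents, as a product of Gauss iterates; the
index shift is that of `convergentDenom`. -/
noncomputable def approxError (α : ℝ) (k : ℕ) : ℝ := ∏ i ∈ Finset.range k, cfGauss α i

lemma approxError_zero (α : ℝ) : approxError α 0 = 1 := Finset.prod_range_zero _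

lemma approxError_one (α : ℝ) : approxError α 1 = α := Finset.prod_range_one _

section Irrational

variable {α : ℝ} (hirr : Irrational α) (hα : α ∈ Set.Ioo (0 : ℝ) 1)
include hirr

lemma irrational_cfGauss (k : ℕ) : Irrational (cfGauss α k) := by
  induction k with
  | zero => exact hirr
  | succ k ih => exact (irrational_inv_iff.2 ih).sub_intCast _

include hα

lemma cfGauss_mem_Ioo (k : ℕ) : cfGauss α k ∈ Set.Ioo (0 : ℝ) 1 := by
  cases k with
  | zero => exact hα
  | succ k =>
    exact ⟨(Int.fract_nonneg _).lt_of_ne (irrational_cfGauss hirr (k + 1)).ne_zero.symm,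
      Int.fract_lt_one _⟩

lemma cfCoeff_ne_zero (k : ℕ) : cfCoeff α (k + 1) ≠ 0 := by
  obtain ⟨pos, lt_one⟩ := cfGauss_mem_Ioo hirr hα k
  exact (Nat.floor_pos.2 (one_lt_inv_iff₀.2 ⟨pos, lt_one⟩).le).ne'

lemma approxError_pos (k : ℕ) : 0 < approxError α k :=
  Finset.prod_pos fun i _ ↦ (cfGauss_mem_Ioo hirr hα i).1

lemma approxError_succ_lt (k : ℕ) : approxError α (k + 1) < approxError α k := by
  rw [approxError, Finset.prod_range_succ]
  exact mul_lt_of_lt_one_right (approxError_pos hirr hα k) (cfGauss_mem_Ioo hirr hα k).2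

lemma approxError_add_two (k : ℕ) :
    approxError α (k + 2) = approxError α k - cfCoeff α (k + 1) * approxError α (k + 1) := by
  have pos := (cfGauss_mem_Ioo hirr hα k).1
  have floor : (cfCoeff α (k + 1) : ℝ) = ⌊(cfGauss α k)⁻¹⌋ :=
    natCast_floor_eq_intCast_floor (inv_pos.2 pos).le
  simp only [approxError, Finset.prod_range_succ]
  rw [floor, cfGauss, Int.fract]
  field_simp

lemma cfCoeff_one_mul : cfCoeff α 1 * α = 1 - approxError α 2 := by
  have := approxError_add_two hirr hα 0
  rw [zero_add, zero_add, approxError_one, approxError_zero] at this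
  linarith

lemma convergent_error (k : ℕ) :
    (convergentDenom (cfCoeff α) k : ℝ) * α - convergentNum (cfCoeff α) k =
      (-1) ^ (k + 1) * approxError α k := by
  induction k using Nat.twoStepInduction with
  | zero => simp [convergentDenom, convergentNum, approxError]
  | one => simp [convergentDenom, convergentNum, approxError_one]
  | more k ih ih' =>
    rw [approxError_add_two hirr hα, convergentDenom, convergentNum]
    push_cast
    linear_combination (cfCoeff α (k + 1) : ℝ) * ih' + ih

/-- Best approximation, one side at a time: below the next denominator, nothing beats the
convergent that lies on the opposite side of `α`. -/
lemma approxError_lt_of_lt_convergentDenom {k : ℕ} {m l : ℤ} (hm : 0 < m)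
    (hm' : m < convergentDenom (cfCoeff α) (k + 1)) (hl : 0 ≤ (-1) ^ k * (m * α - l)) :
    approxError α k < (-1) ^ k * (m * α - l) := by
  obtain ⟨x, y, rfl, rfl⟩ := exists_eq_add_convergents (cfCoeff α) k m l
  have error := convergent_error hirr hα k
  have error' := convergent_error hirr hα (k + 1)
  have pos := approxError_pos hirr hα k
  have pos' := approxError_pos hirr hα (k + 1)
  set Q := convergentDenom (cfCoeff α) k
  set Q' := convergentDenom (cfCoeff α) (k + 1)
  have sign : (-1 : ℝ) ^ k * (-1) ^ k = 1 := by rw [← mul_pow]; simp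
  have value : (-1) ^ k * (((x * Q + y * Q' : ℤ) : ℝ) * α -
      ((x * convergentNum (cfCoeff α) k + y * convergentNum (cfCoeff α) (k + 1) : ℤ) : ℝ)) =
      -x * approxError α k + y * approxError α (k + 1) := by
    push_cast
    linear_combination ((-1) ^ k * x) * error + ((-1) ^ k * y) * error' +
      (-x * approxError α k + y * approxError α (k + 1)) * sign
  rw [value] at hl ⊢
  rcases le_or_gt y 0 with hy | hy
  · have hx : 1 ≤ x := by by_contra! hx; nlinarith
    have : (1 : ℝ) ≤ x := mod_cast hx
    have : (y : ℝ) ≤ 0 := mod_cast hy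
    nlinarith
  · have hx : x ≤ -1 := by by_contra! hx; nlinarith
    have : (x : ℝ) ≤ -1 := mod_cast hx
    have : (1 : ℝ) ≤ y := mod_cast hy
    nlinarith

lemma floor_add_convergentDenom_mul {k : ℕ} {m : ℤ} (hm : 0 < m)
    (hm' : m < convergentDenom (cfCoeff α) (k + 1)) :
    ⌊((m : ℝ) + convergentDenom (cfCoeff α) k) * α⌋ =
      convergentNum (cfCoeff α) k + ⌊(m : ℝ) * α⌋ := by
  have error := convergent_error hirr hα k
  have pos := approxError_pos hirr hα k
  have best := fun l ↦ approxError_lt_of_lt_convergentDenom (l := l) hirr hα hm hm'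
  have floor_le := Int.floor_le ((m : ℝ) * α)
  have lt_floor := Int.lt_floor_add_one ((m : ℝ) * α)
  rw [Int.floor_eq_iff]
  push_cast
  rcases Nat.even_or_odd k with hk | hk
  · have := best ⌊(m : ℝ) * α⌋
    rw [hk.neg_one_pow, one_mul] at this
    rw [pow_succ, hk.neg_one_pow] at error
    constructor <;> linarith [this (sub_nonneg.2 floor_le)]
  · have := best (⌊(m : ℝ) * α⌋ + 1)
    rw [hk.neg_one_pow] at this
    rw [pow_succ, hk.neg_one_pow] at error
    push_cast at this
    constructor <;> linarith [this (by linarith)]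

end Irrational

end ContinuedFractions

section SturmianWords

lemma sturmian_eq_floor_sub_floor {α : ℝ} (hα : α ∈ Set.Icc (0 : ℝ) 1) (θ : ℝ) (n : ℤ) :
    sturmian α θ n = ⌊((n : ℝ) + 1) * α + θ⌋ - ⌊(n : ℝ) * α + θ⌋ := by
  obtain ⟨nonneg, le_one⟩ := hα
  have floor_add_fract := Int.floor_add_fract ((n : ℝ) * α + θ)
  have fract_nonneg := Int.fract_nonneg ((n : ℝ) * α + θ)
  have fract_lt_one := Int.fract_lt_one ((n : ℝ) * α + θ)
  by_cases h : 1 - α ≤ Int.fract ((n : ℝ) * α + θ)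
  · have jump : ⌊((n : ℝ) + 1) * α + θ⌋ = ⌊(n : ℝ) * α + θ⌋ + 1 := by
      rw [Int.floor_eq_iff]
      push_cast
      constructor <;> linarith
    simp [sturmian, h, fract_lt_one, jump]
  · have stay : ⌊((n : ℝ) + 1) * α + θ⌋ = ⌊(n : ℝ) * α + θ⌋ := by
      rw [Int.floor_eq_iff]
      constructor <;> linarith
    simp [sturmian, h, stay]

lemma sturmianWord_eq_map_range (α θ : ℝ) (n : ℕ) :
    sturmianWord α θ n = (List.range n).map fun i : ℕ ↦ sturmian α θ (i + 1) := by
  simp [sturmianWord, ← List.map_eq_flatMap]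

lemma length_sturmianWord (α θ : ℝ) (n : ℕ) : (sturmianWord α θ n).length = n := by
  simp [sturmianWord_eq_map_range]

lemma sturmianWord_getElem {α θ : ℝ} {n i : ℕ} (hi : i < (sturmianWord α θ n).length) :
    (sturmianWord α θ n)[i] = sturmian α θ (i + 1) := by
  simp [sturmianWord_eq_map_range]

lemma sturmianWord_prefix (α θ : ℝ) {m n : ℕ} (hmn : m ≤ n) :
    sturmianWord α θ m <+: sturmianWord α θ n := by
  rw [sturmianWord_eq_map_range, sturmianWord_eq_map_range, ← Nat.min_eq_left hmn,
    ← List.take_range]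
  exact (List.take_prefix _ _).map _

lemma sturmianWord_succ (α θ : ℝ) (n : ℕ) :
    sturmianWord α θ (n + 1) = sturmianWord α θ n ++ [sturmian α θ (n + 1)] := by
  simp [sturmianWord_eq_map_range, List.range_succ]

lemma map_range_eq_flatten_replicate_append {β : Type*} {g : ℕ → β} {p q r : ℕ}
    (hg : ∀ i, i + q < p * q + r → g (i + q) = g i) :
    (List.range (p * q + r)).map g =
      (List.replicate p ((List.range q).map g)).flatten ++ (List.range r).map g := by
  induction p with
  | zero => simp
  | succ p ih =>
    have split : (p + 1) * q + r = q + (p * q + r) := by ring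
    rw [split] at hg ⊢
    have shift : (List.range (p * q + r)).map (g ∘ (q + ·)) = (List.range (p * q + r)).map g := by
      refine List.map_congr_left fun i hi ↦ ?_
      rw [Function.comp_apply, add_comm, hg i (by have := List.mem_range.1 hi; omega)]
    rw [List.range_add, List.map_append, List.map_map, shift, ih fun i hi ↦ hg i (by omega),
      List.replicate_succ, List.flatten_cons, List.append_assoc]

section Irrational

variable {α : ℝ} (hirr : Irrational α) (hα : α ∈ Set.Ioo (0 : ℝ) 1)
include hirr hα

lemma sturmian_add_convergentDenom {k : ℕ} {m : ℤ} (hm : 0 < m)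
    (hm' : m + 1 < convergentDenom (cfCoeff α) (k + 1)) :
    sturmian α 0 (m + convergentDenom (cfCoeff α) k) = sturmian α 0 m := by
  have floor := floor_add_convergentDenom_mul hirr hα hm ((lt_add_one m).trans hm')
  have floor' := floor_add_convergentDenom_mul hirr hα (m := m + 1) (by omega) hm'
  rw [sturmian_eq_floor_sub_floor (Set.Ioo_subset_Icc_self hα),
    sturmian_eq_floor_sub_floor (Set.Ioo_subset_Icc_self hα)]
  simp only [add_zero]
  push_cast at *
  rw [floor, add_right_comm, floor']
  push_cast
  ring

lemma sturmianWord_mul_convergentDenom_add {k p r : ℕ}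
    (hr : p * convergentDenom (cfCoeff α) k + r + 1 <
      convergentDenom (cfCoeff α) (k + 1) + convergentDenom (cfCoeff α) k) :
    sturmianWord α 0 (p * convergentDenom (cfCoeff α) k + r) =
      (List.replicate p (sturmianWord α 0 (convergentDenom (cfCoeff α) k))).flatten ++
        sturmianWord α 0 r := by
  simp only [sturmianWord_eq_map_range]
  refine map_range_eq_flatten_replicate_append fun i hi ↦ ?_
  rw [← sturmian_add_convergentDenom hirr hα (k := k) (m := i + 1) (by omega) (by omega)]
  congr 1
  push_cast
  ring

omit hirr in
lemma sturmian_zero_of_mul_lt_one {j : ℕ} (hj : j * α < 1) :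
    sturmian α 0 j = if 1 - α ≤ j * α then 1 else 0 := by
  have fract : Int.fract (j * α) = j * α :=
    Int.fract_eq_self.2 ⟨by have := hα.1; positivity, hj⟩
  simp [sturmian, fract, hj]

lemma sWord_two_eq_sturmianWord :
    sWord (cfCoeff α) 2 = sturmianWord α 0 (convergentDenom (cfCoeff α) 2) := by
  obtain ⟨b, hb⟩ := Nat.exists_eq_succ_of_ne_zero (cfCoeff_ne_zero hirr hα 0)
  have total := cfCoeff_one_mul hirr hα
  have pos := approxError_pos hirr hα 2
  have lt := approxError_succ_lt hirr hα 1
  rw [zero_add] at hb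
  rw [approxError_one] at lt
  rw [hb] at total
  push_cast at total
  have zeros : sturmianWord α 0 b = List.replicate b 0 := by
    refine List.eq_replicate_iff.2 ⟨length_sturmianWord α 0 b, fun x hx ↦ ?_⟩
    rw [sturmianWord_eq_map_range] at hx
    obtain ⟨i, hi, rfl⟩ := List.mem_map.1 hx
    have hib : (i : ℝ) + 1 ≤ b := mod_cast List.mem_range.1 hi
    have bound : ((i + 1 : ℕ) : ℝ) * α < 1 - α := by push_cast; nlinarith [hα.1]
    have := sturmian_zero_of_mul_lt_one hα (j := i + 1) (by linarith [hα.1])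
    rw [if_neg bound.not_ge] at this
    exact_mod_cast this
  have last : sturmian α 0 (b + 1) = 1 := by
    have := sturmian_zero_of_mul_lt_one hα (j := b + 1) (by push_cast; linarith)
    rw [if_pos (by push_cast; linarith)] at this
    exact_mod_cast this
  rw [convergentDenom_two, hb, sturmianWord_succ, zeros, last, sWord, hb, Nat.succ_sub_one]

lemma sturmian_convergentDenom_three :
    sturmian α 0 (convergentDenom (cfCoeff α) 3) = 0 := by
  have error : (convergentDenom (cfCoeff α) 3 : ℝ) * α - approxError α 3 =
      convergentNum (cfCoeff α) 3 := by linear_combination convergent_error hirr hα 3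
  have pos := approxError_pos hirr hα 3
  have small : approxError α 3 < 1 - α := by
    have lt := approxError_succ_lt hirr hα 2
    have total := cfCoeff_one_mul hirr hα
    have : (1 : ℝ) ≤ cfCoeff α 1 := mod_cast Nat.one_le_iff_ne_zero.2 (cfCoeff_ne_zero hirr hα 0)
    nlinarith [hα.1]
  have fract : Int.fract ((convergentDenom (cfCoeff α) 3 : ℝ) * α) = approxError α 3 :=
    Int.fract_eq_iff.2 ⟨pos.le, by linarith [hα.1], _, error⟩
  simp [sturmian, fract, small.not_ge]

lemma sWord_eq_sturmianWord (k : ℕ) :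
    sWord (cfCoeff α) (k + 2) = sturmianWord α 0 (convergentDenom (cfCoeff α) (k + 2)) := by
  induction k using Nat.twoStepInduction with
  | zero => exact sWord_two_eq_sturmianWord hirr hα
  | one =>
    have denom : convergentDenom (cfCoeff α) 3 =
        cfCoeff α 2 * convergentDenom (cfCoeff α) 2 + 1 := rfl
    have last := sturmian_convergentDenom_three hirr hα
    have pos : 0 < convergentDenom (cfCoeff α) 2 :=
      convergentDenom_pos (cfCoeff_ne_zero hirr hα) 1
    have periods := sturmianWord_mul_convergentDenom_add hirr hα (k := 2) (p := cfCoeff α 2)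
      (r := 0) (by rw [denom]; omega)
    rw [sWord, sWord_two_eq_sturmianWord hirr hα]
    rw [denom] at last ⊢
    rw [Nat.cast_succ] at last
    rw [add_zero] at periods
    rw [sturmianWord_succ, periods, last]
    simp [sturmianWord, sWord]
  | more k ih ih' =>
    have := le_convergentDenom (cfCoeff_ne_zero hirr hα) (k + 2)
    rw [sWord, convergentDenom, ih, ih', sturmianWord_mul_convergentDenom_add hirr hα]
    simp only [convergentDenom] at this ⊢
    omega

lemma cword_succ (i : ℕ) : cword α (i + 1) = sturmian α 0 (i + 1) := by
  have lt : i < convergentDenom (cfCoeff α) (i + 2) :=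
    Nat.lt_of_succ_le (le_convergentDenom (cfCoeff_ne_zero hirr hα) (i + 1))
  rw [cword, sWord_eq_sturmianWord hirr hα, Nat.add_sub_cancel,
    List.getD_eq_getElem _ _ (by rwa [length_sturmianWord]), sturmianWord_getElem]

lemma exists_prefix_sWord_of_isPrefC {w : List ℝ} (hw : w ≠ []) (hpre : IsPrefC α w) :
    ∃ k, w <+: sWord (cfCoeff α) (k + 2) ∧ 2 ^ k ≤ 2 * w.length ^ 2 := by
  have ha := cfCoeff_ne_zero hirr hα
  have word : w = sturmianWord α 0 w.length := by
    rw [sturmianWord_eq_map_range]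
    exact hpre.trans (by simp only [cword_succ hirr hα])
  have exists_level : ∃ k, w.length ≤ convergentDenom (cfCoeff α) (k + 2) :=
    ⟨w.length, (le_convergentDenom ha _).trans (convergentDenom_mono ha (Nat.le_succ _))⟩
  refine ⟨Nat.find exists_level, ?_, ?_⟩
  · have := sturmianWord_prefix α 0 (Nat.find_spec exists_level)
    rwa [← word, ← sWord_eq_sturmianWord hirr hα] at this
  · cases level : Nat.find exists_level with
    | zero =>
      have := List.length_pos_of_ne_nil hw
      nlinarith
    | succ k =>
      have lt : convergentDenom (cfCoeff α) (k + 2) < w.length :=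
        not_le.1 (Nat.find_min exists_level (by omega))
      calc 2 ^ (k + 1) ≤ 2 * convergentDenom (cfCoeff α) (k + 2) ^ 2 :=
            two_pow_le_convergentDenom_sq ha (k + 1)
        _ ≤ 2 * w.length ^ 2 := by gcongr

end Irrational

end SturmianWords

section Recurrence

open Filter Topology

lemma frequently_natCast_mul_sub_intCast_mem_Ioo {α : ℝ} (hirr : Irrational α) {x y : ℝ}
    (hxy : x < y) : ∃ᶠ k : ℕ in atTop, ∃ l : ℤ, k * α - l ∈ Set.Ioo x y := by
  obtain ⟨t, ht⟩ := exists_between hxy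
  have dense : DenseRange (· • (α : UnitAddCircle) : ℤ → UnitAddCircle) :=
    AddCircle.denseRange_zsmul_coe_iff.2 (by rwa [div_one])
  have cluster : MapClusterPt (t : UnitAddCircle) atTop (· • (α : UnitAddCircle) : ℕ → _) :=
    ((mapClusterPt_atTop_nsmul_tfae _ _).out 0 3).2 (dense t)
  have nhds : ((↑) '' Set.Ioo x y : Set UnitAddCircle) ∈ 𝓝 (t : UnitAddCircle) :=
    (QuotientAddGroup.isOpenMap_coe _ isOpen_Ioo).mem_nhds (Set.mem_image_of_mem _ ht)
  refine (mapClusterPt_iff_frequently.1 cluster _ nhds).mono ?_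
  rintro k ⟨s, hs, hks⟩
  obtain ⟨l, hl⟩ := (AddCircle.coe_eq_zero_iff (1 : ℝ) (x := k * α - s)).1 (by
    rw [AddCircle.coe_sub, hks, ← nsmul_eq_mul, AddCircle.coe_nsmul, sub_self])
  rw [zsmul_one] at hl
  exact ⟨l, by rwa [hl, sub_sub_cancel]⟩

lemma sturmian_zero_add_eq (α : ℝ) (k l j : ℤ) :
    sturmian α 0 (k + j) = sturmian α (k * α - l) j := by
  have phase : ((k + j : ℤ) : ℝ) * α + 0 = j * α + (k * α - l) + l := by
    push_cast
    ring
  rw [sturmian, sturmian, phase, Int.fract_add_intCast]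

lemma eventually_floor_add_eq (c θ : ℝ) : ∀ᶠ t in 𝓝[≥] θ, ⌊c + t⌋ = ⌊c + θ⌋ := by
  have shift : Tendsto (c + ·) (𝓝[≥] θ) (𝓝[≥] (c + θ)) :=
    (continuous_const_add c).continuousWithinAt.tendsto_nhdsWithin
      fun _ ht ↦ add_le_add_right (Set.mem_Ici.1 ht) c
  exact tendsto_pure.1 ((tendsto_floor_right_pure_floor (c + θ)).comp shift)

lemma eventually_sturmian_eq {α : ℝ} (hα : α ∈ Set.Icc (0 : ℝ) 1) (θ : ℝ) (S : Finset ℤ) :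
    ∀ᶠ t in 𝓝[≥] θ, ∀ j ∈ S, sturmian α t j = sturmian α θ j := by
  refine (eventually_all_finset S).2 fun j _ ↦ ?_
  filter_upwards [eventually_floor_add_eq (j * α) θ,
    eventually_floor_add_eq ((j + 1) * α) θ] with t ht ht'
  rw [sturmian_eq_floor_sub_floor hα, sturmian_eq_floor_sub_floor hα, ht, ht']

lemma frequently_sturmian_zero_add_eq {α : ℝ} (hirr : Irrational α)
    (hα : α ∈ Set.Icc (0 : ℝ) 1) (θ : ℝ) (S : Finset ℤ) :
    ∃ᶠ k : ℕ in atTop, ∀ j ∈ S, sturmian α 0 (k + j) = sturmian α θ j := by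
  obtain ⟨y, hy, hθ⟩ := mem_nhdsGE_iff_exists_Ico_subset.1 (eventually_sturmian_eq hα θ S)
  refine (frequently_natCast_mul_sub_intCast_mem_Ioo hirr hy).mono ?_
  rintro k ⟨l, hkl⟩ j hj
  rw [← hθ (Set.Ioo_subset_Ico_self hkl) j hj]
  exact_mod_cast sturmian_zero_add_eq α k l j

lemma eventually_exists_window_sWord {α : ℝ} (hirr : Irrational α)
    (hα : α ∈ Set.Ioo (0 : ℝ) 1) (θ : ℝ) (N : ℕ) :
    ∀ᶠ n in atTop, ∃ k : ℕ, N ≤ k ∧ k + N < (sWord (cfCoeff α) n).length ∧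
      ∀ i : ℕ, k ≤ i + N → i ≤ k + N →
        (sWord (cfCoeff α) n).getD i 0 = sturmian α θ (i - k) := by
  have ha := cfCoeff_ne_zero hirr hα
  obtain ⟨k, hk, hwindow⟩ := frequently_atTop.1 (frequently_sturmian_zero_add_eq hirr
    (Set.Ioo_subset_Icc_self hα) θ (Finset.Icc (-N : ℤ) N)) (N + 1)
  obtain ⟨k, rfl⟩ := Nat.exists_eq_add_one.2 (Nat.zero_lt_of_lt hk)
  filter_upwards [eventually_ge_atTop (k + N + 2)] with n hn
  obtain ⟨n, rfl⟩ := Nat.exists_eq_add_of_le' (le_of_add_le_right hn)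
  have length : k + N < (sWord (cfCoeff α) (n + 2)).length := by
    rw [length_sWord (ha 0)]
    have := le_convergentDenom ha (n + 1)
    omega
  refine ⟨k, by omega, length, fun i hi hi' ↦ ?_⟩
  rw [List.getD_eq_getElem _ _ (by omega)]
  simp only [sWord_eq_sturmianWord hirr hα, sturmianWord_getElem]
  rw [← hwindow (i - k) (Finset.mem_Icc.2 (by omega))]
  congr 1
  push_cast
  ring

end Recurrence

section ApproximateEigenvectors

lemma exists_norm_map_sub_smul_lt {F : Type*} [NormedAddCommGroup F] [InnerProductSpace ℂ F]
    [CompleteSpace F] {H : F →L[ℂ] F} (hH : IsSelfAdjoint H) {E : ℂ} (hE : E ∈ spectrum ℂ H)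
    {ε : ℝ} (hε : 0 < ε) : ∃ u, ‖H u - E • u‖ < ε * ‖u‖ := by
  by_contra! hbelow
  set T : F →L[ℂ] F := algebraMap ℂ (F →L[ℂ] F) E - H with hT
  have hTapply (u : F) : T u = E • u - H u := by
    simp [hT, Algebra.algebraMap_eq_smul_one]
  have hreal : IsSelfAdjoint E := by
    rw [hH.mem_spectrum_eq_re hE]
    exact Complex.conj_ofReal _
  have hsymm : (T : F →ₗ[ℂ] F).IsSymmetric :=
    ContinuousLinearMap.isSelfAdjoint_iff_isSymmetric.1 ((hreal.algebraMap _).sub hH)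
  suffices IsUnit (T * T) from hE ((Commute.refl T).isUnit_mul_iff.1 this).1
  refine ContinuousLinearMap.isUnit_of_forall_le_norm_inner_map (c := ⟨ε ^ 2, by positivity⟩) _
    (show (0 : ℝ) < ε ^ 2 by positivity) fun u ↦ ?_
  calc ‖u‖ ^ 2 * ε ^ 2 = (ε * ‖u‖) ^ 2 := by ring
    _ ≤ ‖T u‖ ^ 2 := by
      rw [hTapply, norm_sub_rev]
      gcongr
      exact hbelow u
    _ = ‖inner ℂ (T u) (T u)‖ := by simp [inner_self_eq_norm_sq_to_K]
    _ = ‖inner ℂ ((T * T) u) u‖ := congrArg norm (hsymm (T u) u).symm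

lemma exists_finite_support_mem_of_isOpen {ι : Type*} {G : ι → Type*}
    [∀ i, NormedAddCommGroup (G i)] {p : ENNReal} [Fact (1 ≤ p)] (hp : p ≠ ⊤) {U : Set (lp G p)}
    (hU : IsOpen U) (hne : U.Nonempty) : ∃ v ∈ U, {i | v i ≠ 0}.Finite := by
  obtain ⟨u, hu⟩ := hne
  obtain ⟨s, hs⟩ := ((lp.hasSum_single hp u).eventually (hU.mem_nhds hu)).exists
  refine ⟨_, hs, s.finite_toSet.subset fun i hi ↦ ?_⟩
  by_contra his
  rw [Finset.mem_coe] at his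
  refine hi ?_
  rw [lp.coeFn_sum, Finset.sum_apply]
  exact Finset.sum_eq_zero fun j hj ↦ lp.single_apply_ne p j _ (ne_of_mem_of_not_mem hj his).symm

lemma exists_isEigenvector_of_norm_map_sub_smul_lt {F : Type*} [NormedAddCommGroup F]
    [InnerProductSpace ℂ F] [FiniteDimensional ℂ F] {A : F →ₗ[ℂ] F} (hA : A.IsSymmetric) {E : ℂ}
    {ε : ℝ} {f : F} (hf : ‖A f - E • f‖ < ε * ‖f‖) :
    ∃ E' : ℂ, ‖E' - E‖ < ε ∧ ∃ g, Module.End.HasEigenvector A E' g := by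
  set b := hA.eigenvectorBasis rfl
  have hε : 0 ≤ ε := (pos_of_mul_pos_left ((norm_nonneg _).trans_lt hf)
    (norm_nonneg f)).le
  have coord (i) : b.repr (A f - E • f) i =
      ((hA.eigenvalues rfl i : ℂ) - E) * b.repr f i := by
    have := hA.eigenvectorBasis_apply_self_apply rfl f i
    simp only [map_sub, map_smul, PiLp.sub_apply, PiLp.smul_apply, smul_eq_mul, sub_mul]
    exact congrArg (· - _) this
  by_contra! hfar
  have hfar (i) : ε ≤ ‖(hA.eigenvalues rfl i : ℂ) - E‖ :=
    not_lt.1 fun h ↦ hfar _ h _ (hA.hasEigenvector_eigenvectorBasis rfl i)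
  refine hf.not_ge (le_of_sq_le_sq ?_ (norm_nonneg _))
  rw [mul_pow, ← b.repr.norm_map f, ← b.repr.norm_map (A f - E • f), EuclideanSpace.norm_sq_eq,
    EuclideanSpace.norm_sq_eq, Finset.mul_sum]
  refine Finset.sum_le_sum fun i _ ↦ ?_
  rw [coord, norm_mul, mul_pow]
  gcongr
  exact hfar i

end ApproximateEigenvectors

section SchrodingerOperators

/-- `H` is the discrete Schrödinger operator `(H u)(n) = u(n+1) + u(n-1) + V(n) u(n)` on `ℓ²(ℤ)`.
A predicate on bounded operators, so that no boundedness of `V` has to be carried along. -/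
def IsSchrodinger (V : ℤ → ℝ) (H : lp (fun _ : ℤ ↦ ℂ) 2 →L[ℂ] lp (fun _ : ℤ ↦ ℂ) 2) : Prop :=
  ∀ (u : lp (fun _ : ℤ ↦ ℂ) 2) (n : ℤ), H u n = u (n + 1) + u (n - 1) + (V n : ℂ) * u n

variable {V : ℤ → ℝ} {H : lp (fun _ : ℤ ↦ ℂ) 2 →L[ℂ] lp (fun _ : ℤ ↦ ℂ) 2}

lemma hasSum_norm_sq {ι : Type*} {G : ι → Type*} [∀ i, NormedAddCommGroup (G i)] (u : lp G 2) :
    HasSum (fun i ↦ ‖u i‖ ^ 2) (‖u‖ ^ 2) := by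
  simpa using lp.hasSum_norm (p := 2) (by norm_num) u

lemma summable_mul_conj_shift (u v : lp (fun _ : ℤ ↦ ℂ) 2) :
    Summable fun n : ℤ ↦ v n * (starRingEnd ℂ) (u (n + 1)) := by
  refine .of_norm_bounded (((Equiv.addRight (1 : ℤ)).summable_iff.2
    (hasSum_norm_sq u).summable).add (hasSum_norm_sq v).summable) fun n ↦ ?_
  simp only [norm_mul, RCLike.norm_conj, Function.comp_apply, Equiv.coe_addRight]
  nlinarith [sq_nonneg (‖u (n + 1)‖ - ‖v n‖), sq_nonneg ‖u (n + 1)‖, sq_nonneg ‖v n‖]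

/-- The terms of `⟪H u, v⟫ - ⟪u, H v⟫` telescope to differences of the Wronskian of `u` and `v`. -/
lemma IsSchrodinger.isSelfAdjoint (hH : IsSchrodinger V H) : IsSelfAdjoint H := by
  refine ContinuousLinearMap.isSelfAdjoint_iff_isSymmetric.2 fun u v ↦ ?_
  let wronskian (n : ℤ) : ℂ :=
    v n * (starRingEnd ℂ) (u (n + 1)) - (starRingEnd ℂ) (u n) * v (n + 1)
  have summable : Summable wronskian := by
    refine (summable_mul_conj_shift u v).sub ?_
    simpa using (summable_mul_conj_shift v u).star
  have telescope := summable.hasSum.sub ((Equiv.subRight (1 : ℤ)).hasSum_iff.2 summable.hasSum)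
  have inner_sub := (lp.hasSum_inner (𝕜 := ℂ) (H u) v).sub (lp.hasSum_inner (𝕜 := ℂ) u (H v))
  rw [sub_self] at telescope
  refine sub_eq_zero.1 (inner_sub.unique (telescope.congr_fun fun n ↦ ?_))
  simp only [wronskian, RCLike.inner_apply, hH u, hH v, Function.comp_apply, Equiv.subRight_apply,
    sub_add_cancel, map_add, map_mul, Complex.conj_ofReal]
  ring

lemma IsSchrodinger.exists_finite_support_norm_map_sub_smul_lt (hH : IsSchrodinger V H) {E : ℂ}
    (hE : E ∈ spectrum ℂ H) {ε : ℝ} (hε : 0 < ε) :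
    ∃ u, ‖H u - E • u‖ < ε * ‖u‖ ∧ {n | u n ≠ 0}.Finite :=
  exists_finite_support_mem_of_isOpen (by norm_num)
    (isOpen_lt (by fun_prop) (by fun_prop : Continuous fun u ↦ ε * ‖u‖))
    (exists_norm_map_sub_smul_lt hH.isSelfAdjoint hE hε)

end SchrodingerOperators

section Cycles

variable {q : ℕ}

/-- The discrete Schrödinger operator with potential `V` on the cycle `ℤ/q`. For `q ≤ 2` the two
neighbours of a site coincide and are counted twice. -/
def cycleSchrodinger (V : ZMod q → ℝ) :
    EuclideanSpace ℂ (ZMod q) →ₗ[ℂ] EuclideanSpace ℂ (ZMod q) where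
  toFun f := WithLp.toLp 2 fun z ↦ f (z + 1) + f (z - 1) + V z * f z
  map_add' f g := by ext z; simp; ring
  map_smul' c f := by ext z; simp; ring

lemma cycleSchrodinger_apply (V : ZMod q → ℝ) (f : EuclideanSpace ℂ (ZMod q)) (z : ZMod q) :
    cycleSchrodinger V f z = f (z + 1) + f (z - 1) + V z * f z := rfl

/-- A sequence on `ℤ` folded onto the cycle `ℤ/q`, keeping its values on `[-k, q - k)` and placing
the site `-k` at the residue `0`. -/
def foldCycle (q k : ℕ) (u : ℤ → ℂ) : EuclideanSpace ℂ (ZMod q) :=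
  WithLp.toLp 2 fun z ↦ u (z.val - k)

variable {k : ℕ} {u : ℤ → ℂ}

lemma foldCycle_apply (z : ZMod q) : foldCycle q k u z = u (z.val - k) := rfl

variable [NeZero q]

lemma isSymmetric_cycleSchrodinger (V : ZMod q → ℝ) : (cycleSchrodinger V).IsSymmetric := by
  intro f g
  have shift (f g : ZMod q → ℂ) : ∑ z, g z * (starRingEnd ℂ) (f (z + 1)) =
      ∑ z, g (z - 1) * (starRingEnd ℂ) (f z) := by
    simpa using (Equiv.sum_comp (Equiv.addRight (1 : ZMod q))
      fun z ↦ g (z - 1) * (starRingEnd ℂ) (f z))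
  have shift' : ∑ z, g z * (starRingEnd ℂ) (f (z - 1)) =
      ∑ z, g (z + 1) * (starRingEnd ℂ) (f z) := by
    simpa [mul_comm] using congrArg (starRingEnd ℂ) (shift g f).symm
  simp only [PiLp.inner_apply, RCLike.inner_apply, cycleSchrodinger_apply, map_add, map_mul,
    Complex.conj_ofReal, mul_add, add_mul, Finset.sum_add_distrib, shift f g, shift']
  rw [add_comm (∑ z, g (z - 1) * _)]
  congr 1
  exact Finset.sum_congr rfl fun z _ ↦ by ring

lemma foldCycle_apply_add_one (hleft : u (-k) = 0) (hright : u (q - k) = 0) (z : ZMod q) :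
    foldCycle q k u (z + 1) = u (z.val - k + 1) := by
  have val : (z + 1).val = (z.val + 1) % q := by
    rw [← ZMod.val_natCast, Nat.cast_add_one, ZMod.natCast_zmod_val]
  rw [foldCycle_apply, val]
  rcases (Nat.succ_le_of_lt z.val_lt).lt_or_eq with hz | hz
  · rw [Nat.mod_eq_of_lt hz]
    congr 1
    push_cast
    ring
  · rw [Nat.succ_eq_add_one] at hz
    rw [hz, Nat.mod_self, Nat.cast_zero, zero_sub, hleft,
      show (z.val : ℤ) - k + 1 = q - k by omega, hright]

lemma foldCycle_apply_sub_one (hleft : u (-k - 1) = 0) (hright : u (q - k - 1) = 0)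
    (z : ZMod q) : foldCycle q k u (z - 1) = u (z.val - k - 1) := by
  have := foldCycle_apply_add_one (u := fun n ↦ u (n - 1)) hleft hright (z - 1)
  rw [sub_add_cancel, add_sub_cancel_right] at this
  exact this.symm

lemma hasSum_foldCycle (hu : ∀ n, u n ≠ 0 → -k ≤ n ∧ n < q - k) :
    HasSum (fun n ↦ ‖u n‖ ^ 2) (‖foldCycle q k u‖ ^ 2) := by
  have injective : Function.Injective fun z : ZMod q ↦ (z.val : ℤ) - k := fun z z' h ↦
    ZMod.val_injective q (by exact_mod_cast sub_left_injective h)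
  rw [EuclideanSpace.norm_sq_eq]
  refine (injective.hasSum_iff fun n hn ↦ ?_).1
    (hasSum_fintype fun z : ZMod q ↦ ‖foldCycle q k u z‖ ^ 2)
  by_contra hne
  obtain ⟨hleft, hright⟩ := hu n fun h0 ↦ hne (by simp [h0])
  refine hn ⟨((n + k).toNat : ZMod q), ?_⟩
  simp only [ZMod.val_natCast_of_lt (show (n + k).toNat < q by omega)]
  omega

lemma norm_foldCycle {u : lp (fun _ : ℤ ↦ ℂ) 2} (hu : ∀ n, u n ≠ 0 → -k ≤ n ∧ n < q - k) :
    ‖foldCycle q k u‖ = ‖u‖ :=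
  (pow_left_inj₀ (norm_nonneg _) (norm_nonneg _) two_ne_zero).1
    ((hasSum_foldCycle hu).unique (hasSum_norm_sq u))

lemma cycleSchrodinger_foldCycle {V : ℤ → ℝ} {V' : ZMod q → ℝ}
    (hu : ∀ n, u n ≠ 0 → -k < n ∧ n + 1 < q - k)
    (hV : ∀ z : ZMod q, u (z.val - k) ≠ 0 → V' z = V (z.val - k)) :
    cycleSchrodinger V' (foldCycle q k u) =
      foldCycle q k fun n ↦ u (n + 1) + u (n - 1) + V n * u n := by
  have vanish (n : ℤ) (hn : ¬(-k < n ∧ n + 1 < q - k)) : u n = 0 := not_imp_comm.1 (hu n) hn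
  ext z
  rw [cycleSchrodinger_apply,
    foldCycle_apply_add_one (vanish _ (by omega)) (vanish _ (by omega)),
    foldCycle_apply_sub_one (vanish _ (by omega)) (vanish _ (by omega)), foldCycle_apply,
    foldCycle_apply]
  congr 1
  rcases eq_or_ne (u (z.val - k)) 0 with h0 | h0
  · rw [h0, mul_zero, mul_zero]
  · rw [hV z h0]

lemma IsSchrodinger.norm_cycleSchrodinger_foldCycle_sub_smul {V : ℤ → ℝ}
    {H : lp (fun _ : ℤ ↦ ℂ) 2 →L[ℂ] lp (fun _ : ℤ ↦ ℂ) 2} (hH : IsSchrodinger V H) (E : ℂ)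
    {u : lp (fun _ : ℤ ↦ ℂ) 2} (hu : ∀ n, u n ≠ 0 → -k < n ∧ n + 1 < q - k)
    {V' : ZMod q → ℝ} (hV : ∀ z : ZMod q, u (z.val - k) ≠ 0 → V' z = V (z.val - k)) :
    ‖cycleSchrodinger V' (foldCycle q k u) - E • foldCycle q k u‖ = ‖H u - E • u‖ := by
  have residual (n : ℤ) : (H u - E • u) n = u (n + 1) + u (n - 1) + V n * u n - E * u n := by
    rw [← hH u]
    rfl
  rw [← norm_foldCycle (q := q) (k := k) (u := H u - E • u), cycleSchrodinger_foldCycle hu hV]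
  · congr 1
    ext z
    exact (residual _).symm
  · intro n hn
    by_contra hout
    have vanish (m : ℤ) (hm : ¬(-k < m ∧ m + 1 < q - k)) : u m = 0 := not_imp_comm.1 (hu m) hm
    refine hn ?_
    simp [residual, vanish n (by omega), vanish (n + 1) (by omega), vanish (n - 1) (by omega)]

end Cycles

section Periodic

variable {lam : ℝ} {E : ℂ} {s : List ℝ}

lemma det_transferM (lam : ℝ) (E : ℂ) (w : List ℝ) : (transferM lam E w).det = 1 := by
  induction w with
  | nil => simp [transferM]
  | cons a w ih => simp [transferM, ih, transferT]

lemma transferT_mulVec (lam : ℝ) (E : ℂ) (a : ℝ) (x y : ℂ) :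
    transferT lam E a *ᵥ ![x, y] = ![(E - lam * a) * x - y, x] := by
  ext i
  fin_cases i <;> simp [transferT, mulVec, sub_eq_add_neg]

lemma transferM_take_mulVec [NeZero s.length] {f : ZMod s.length → ℂ}
    (hf : ∀ z, f (z + 1) + f (z - 1) + (lam * s.getD z.val 0 : ℝ) * f z = E * f z) {j : ℕ}
    (hj : j ≤ s.length) :
    transferM lam E (s.take j) *ᵥ ![f 0, f (-1)] = ![f j, f (j - 1)] := by
  induction j with
  | zero => simp [transferM]
  | succ j ih =>
    have eigen := hf j
    rw [ZMod.val_natCast_of_lt hj, List.getD_eq_getElem _ _ hj] at eigen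
    rw [List.take_succ_eq_append_getElem hj, transferM_append, ← mulVec_mulVec,
      ih (Nat.le_of_succ_le hj), transferM, transferM, one_mul, transferT_mulVec,
      Nat.cast_add_one, add_sub_cancel_right]
    congr 1
    push_cast at eigen
    linear_combination -eigen

lemma trace_eq_two_of_mulVec_eq_self {R : Type*} [CommRing R] [IsDomain R]
    {A : Matrix (Fin 2) (Fin 2) R} (hA : A.det = 1) {v : Fin 2 → R} (hv : v ≠ 0)
    (hfix : A *ᵥ v = v) : A.trace = 2 := by
  have singular : (A - 1).det = 0 :=
    exists_mulVec_eq_zero_iff.1 ⟨v, hv, by rw [sub_mulVec, hfix, one_mulVec, sub_self]⟩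
  simp only [det_fin_two, Matrix.sub_apply, one_apply_eq, one_apply_ne zero_ne_one,
    one_apply_ne one_ne_zero] at singular hA
  rw [trace_fin_two]
  linear_combination hA - singular

/-- Periodic extension of an eigenvector gives a vector fixed by the monodromy matrix. -/
lemma trace_transferM_eq_two_of_hasEigenvector [NeZero s.length]
    {f : EuclideanSpace ℂ (ZMod s.length)} (hf : Module.End.HasEigenvector
      (cycleSchrodinger fun z : ZMod s.length ↦ lam * s.getD z.val 0) E f) :
    (transferM lam E s).trace = 2 := by
  have transport {j : ℕ} (hj : j ≤ s.length) :=
    transferM_take_mulVec (lam := lam) (E := E) (f := f)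
      (fun z ↦ congrFun (congrArg WithLp.ofLp hf.apply_eq_smul) z) hj
  refine trace_eq_two_of_mulVec_eq_self (det_transferM lam E s) (v := ![f 0, f (-1)])
    (fun h0 ↦ hf.2 ?_) (by simpa using transport le_rfl)
  ext z
  have := congrFun (transport z.val_lt.le) 0
  rw [h0, mulVec_zero, ZMod.natCast_zmod_val] at this
  exact this.symm

lemma IsSchrodinger.exists_trace_transferM_eq_two {V : ℤ → ℝ}
    {H : lp (fun _ : ℤ ↦ ℂ) 2 →L[ℂ] lp (fun _ : ℤ ↦ ℂ) 2} (hH : IsSchrodinger V H) {ε : ℝ}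
    {u : lp (fun _ : ℤ ↦ ℂ) 2} (hu : ‖H u - E • u‖ < ε * ‖u‖) {k : ℕ} (hk : k < s.length)
    (hsupp : ∀ n, u n ≠ 0 → -k < n ∧ n + 1 < s.length - k)
    (hs : ∀ i : ℕ, u (i - k) ≠ 0 → lam * s.getD i 0 = V (i - k)) :
    ∃ E' : ℂ, ‖E' - E‖ < ε ∧ (transferM lam E' s).trace = 2 := by
  have : NeZero s.length := ⟨Nat.ne_zero_of_lt hk⟩
  have hfold : ‖foldCycle s.length k u‖ = ‖u‖ := norm_foldCycle fun n hn ↦ by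
    have := hsupp n hn
    omega
  rw [← hfold, ← hH.norm_cycleSchrodinger_foldCycle_sub_smul E hsupp fun z ↦ hs z.val] at hu
  obtain ⟨E', hE', f, hf⟩ := exists_isEigenvector_of_norm_map_sub_smul_lt
    (isSymmetric_cycleSchrodinger _) hu
  exact ⟨E', hE', trace_transferM_eq_two_of_hasEigenvector hf⟩

end Periodic

section Spectrum

open Filter

lemma continuous_standardTransfer (lam : ℝ) (a : ℕ → ℕ) (k : ℕ) :
    Continuous fun E ↦ standardTransfer lam E a k := by
  induction k using Nat.twoStepInduction with
  | zero => exact continuous_const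
  | one =>
    simp only [standardTransfer, transferT]
    fun_prop
  | more k ih₀ ih₁ => exact ih₀.mul (ih₁.pow _)

lemma isOpen_setOf_escaping_standardTransfer (lam : ℝ) (a : ℕ → ℕ) (k : ℕ) : IsOpen
    {E | Escaping (standardTransfer lam E a k) (standardTransfer lam E a (k + 1))} := by
  have cont := continuous_standardTransfer lam a
  have cont_trace (k : ℕ) := (cont k).matrix_trace.norm
  have cont_trace_mul := ((cont k).mul (cont (k + 1))).matrix_trace.norm
  exact (isOpen_lt continuous_const (cont_trace (k + 1))).inter
    ((isOpen_lt continuous_const cont_trace_mul).inter (isOpen_lt (cont_trace k) cont_trace_mul))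

lemma Escaping.standardTransfer_add {lam : ℝ} {E : ℂ} {a : ℕ → ℕ} (ha : ∀ k, a (k + 1) ≠ 0)
    {k : ℕ} (h : Escaping (standardTransfer lam E a k) (standardTransfer lam E a (k + 1)))
    (n : ℕ) :
    Escaping (standardTransfer lam E a (k + n)) (standardTransfer lam E a (k + n + 1)) := by
  induction n with
  | zero => exact h
  | succ n ih => exact ih.swap_mul_pow (det_standardTransfer lam E a _) (ha _)

variable {α lam θ : ℝ} {H : lp (fun _ : ℤ ↦ ℂ) 2 →L[ℂ] lp (fun _ : ℤ ↦ ℂ) 2} {E : ℂ}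

lemma eventually_exists_trace_transferM_sWord_eq_two (hirr : Irrational α)
    (hα : α ∈ Set.Ioo (0 : ℝ) 1) (hH : IsSchrodinger (fun n ↦ lam * sturmian α θ n) H)
    (hE : E ∈ spectrum ℂ H) {ε : ℝ} (hε : 0 < ε) : ∀ᶠ n in atTop, ∃ E' : ℂ, ‖E' - E‖ < ε ∧
      (transferM lam E' (sWord (cfCoeff α) n)).trace = 2 := by
  obtain ⟨u, hu, hfinite⟩ := hH.exists_finite_support_norm_map_sub_smul_lt hE hε
  obtain ⟨N, hN⟩ := (hfinite.image Int.natAbs).bddAbove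
  have hsupp (n : ℤ) (hn : u n ≠ 0) : n.natAbs ≤ N := hN (Set.mem_image_of_mem _ hn)
  filter_upwards [eventually_exists_window_sWord hirr hα θ (N + 1)] with n hn
  obtain ⟨k, hNk, hlength, hwindow⟩ := hn
  refine hH.exists_trace_transferM_eq_two hu (k := k) (by omega) (fun n hn ↦ ?_) fun i hi ↦ ?_
  · have := hsupp n hn
    omega
  · have := hsupp _ hi
    rw [hwindow i (by omega) (by omega)]

lemma not_escaping_standardTransfer_of_mem_spectrum (hirr : Irrational α)
    (hα : α ∈ Set.Ioo (0 : ℝ) 1) (hH : IsSchrodinger (fun n ↦ lam * sturmian α θ n) H)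
    (hE : E ∈ spectrum ℂ H) (k : ℕ) : ¬Escaping (standardTransfer lam E (cfCoeff α) k)
      (standardTransfer lam E (cfCoeff α) (k + 1)) := by
  intro hescaping
  have ha := cfCoeff_ne_zero hirr hα
  obtain ⟨ε, hε, hball⟩ := Metric.isOpen_iff.1
    (isOpen_setOf_escaping_standardTransfer lam (cfCoeff α) k) E hescaping
  obtain ⟨n, ⟨E', hE', htrace⟩, hkn⟩ := ((eventually_exists_trace_transferM_sWord_eq_two hirr hα
    hH hE hε).and (eventually_gt_atTop k)).exists
  obtain ⟨n, rfl⟩ := Nat.exists_eq_add_of_lt hkn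
  have hlarge := (Escaping.standardTransfer_add ha (hball (mem_ball_iff_norm.2 hE')) n).1
  rw [← transferM_sWord lam E' (ha 0), htrace, Complex.norm_two] at hlarge
  exact hlarge.false

lemma boundedTracePair_of_mem_spectrum (hirr : Irrational α) (hα : α ∈ Set.Ioo (0 : ℝ) 1)
    (hH : IsSchrodinger (fun n ↦ lam * sturmian α θ n) H) (hE : E ∈ spectrum ℂ H) (k : ℕ) :
    BoundedTracePair (traceBound (4 + lam ^ 2)) (standardTransfer lam E (cfCoeff α) k)
      (standardTransfer lam E (cfCoeff α) (k + 1)) :=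
  boundedTracePair_standardTransfer lam E (cfCoeff_ne_zero hirr hα)
    (not_escaping_standardTransfer_of_mem_spectrum hirr hα hH hE) k

end Spectrum

section PolynomialGrowth

lemma BoundedDensity.exists_sum_cfCoeff_le {α : ℝ} (h : BoundedDensity α) :
    ∃ B : ℕ, ∀ n, ∑ j ∈ Finset.Icc 1 n, cfCoeff α j ≤ B * n := by
  obtain ⟨b, hb⟩ := Filter.IsBoundedUnder.bddAbove_range h
  refine ⟨⌈b⌉₊, fun n ↦ ?_⟩
  rcases n.eq_zero_or_pos with rfl | hn
  · simp
  have mean : (1 / n : ℝ) * ∑ j ∈ Finset.Icc 1 n, (cfCoeff α j : ℝ) ≤ ⌈b⌉₊ :=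
    (hb (Set.mem_range_self n)).trans (Nat.le_ceil b)
  rw [one_div, inv_mul_le_iff₀' (by exact_mod_cast hn)] at mean
  exact_mod_cast mean

lemma pow_le_mul_rpow_logb {b R x : ℝ} (hb : 1 < b) (hR : 1 ≤ R) (hx : 0 ≤ x) {k : ℕ}
    (hk : b ^ k ≤ b * x ^ 2) : R ^ k ≤ R * x ^ (2 * Real.logb b R) := by
  have hb0 : 0 < b := one_pos.trans hb
  have rpow_logb : b ^ Real.logb b R = R := Real.rpow_logb hb0 hb.ne' (one_pos.trans_le hR)
  calc R ^ k = (b ^ k) ^ Real.logb b R := by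
        rw [← Real.rpow_pow_comm hb0.le, rpow_logb]
    _ ≤ (b * x ^ 2) ^ Real.logb b R :=
      Real.rpow_le_rpow (by positivity) hk (Real.logb_nonneg hb hR)
    _ = R * x ^ (2 * Real.logb b R) := by
      rw [Real.mul_rpow hb0.le (by positivity), rpow_logb, Real.rpow_mul hx, Real.rpow_two]

lemma exists_opNorm_transferM_le_pow {a : ℕ → ℕ} (ha : a 1 ≠ 0) {B : ℕ}
    (hB : ∀ n, ∑ j ∈ Finset.Icc 1 n, a j ≤ B * n) (lam : ℝ) {K : ℝ} (hK : 0 < K) :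
    ∃ C > 0, ∃ R > 1, ∀ E : ℂ,
      (∀ k, BoundedTracePair K (standardTransfer lam E a k) (standardTransfer lam E a (k + 1))) →
      ∀ k w, w <+: sWord a (k + 2) → opNorm (transferM lam E w) ≤ C * R ^ (k + 1) := by
  obtain ⟨C, hC, hnorm⟩ := exists_opNorm_le_of_combination lam K
  have hgrowth : 1 < combinationGrowth K := by
    unfold combinationGrowth
    nlinarith
  refine ⟨C, hC, combinationGrowth K ^ (2 * B + 1), one_lt_pow₀ hgrowth (by omega),
    fun E hpair k w hw ↦ ?_⟩
  have hcombination := combination_transferM_of_prefix_sWord ha hpair k (.inr hw) .one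
  have hE : ‖E‖ ≤ K := trace_standardTransfer_one lam E a ▸ (hpair 0).norm_trace_right
  rw [mul_one, one_mul] at hcombination
  refine (hnorm E _ _ _ hE hcombination).trans ?_
  rw [← pow_mul]
  gcongr
  · exact hgrowth.le
  · calc ∑ j ∈ Finset.Icc 1 (k + 1), (2 * a j + 1)
        = 2 * ∑ j ∈ Finset.Icc 1 (k + 1), a j + (k + 1) := by
          simp [Finset.sum_add_distrib, Finset.mul_sum]
      _ ≤ 2 * (B * (k + 1)) + (k + 1) := by gcongr; exact hB (k + 1)
      _ = (2 * B + 1) * (k + 1) := by ring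

end PolynomialGrowth

theorem transfer_matrices_polynomially_bounded_on_prefixes
    (α : ℝ) (hirr : Irrational α) (hα : α ∈ Set.Ioo (0 : ℝ) 1) (hbd : BoundedDensity α)
    (lam : ℝ) (hlam : lam ≠ 0) :
    ∃ C > (0 : ℝ), ∃ μ > (0 : ℝ), ∀ θ' ∈ Set.Ico (0 : ℝ) 1,
      ∀ H : lp (fun _ : ℤ => ℂ) 2 →L[ℂ] lp (fun _ : ℤ => ℂ) 2,
        (∀ u : lp (fun _ : ℤ => ℂ) 2, ∀ n : ℤ,
      H u n = u (n + 1) + u (n - 1) + (lam * sturmian α θ' n : ℝ) * u n) →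
        ∀ E ∈ spectrum ℂ H, ∀ w : List ℝ, w ≠ [] → IsPrefC α w →
          opNorm (transferM lam E w) ≤ C * (w.length : ℝ) ^ μ := by
  have hK : 0 < traceBound (4 + lam ^ 2) :=
    (by positivity : 0 < 6 + (4 + lam ^ 2)).trans_le (le_traceBound (by positivity))
  obtain ⟨B, hB⟩ := hbd.exists_sum_cfCoeff_le
  obtain ⟨C, hC, R, hR, hbound⟩ :=
    exists_opNorm_transferM_le_pow (cfCoeff_ne_zero hirr hα 0) hB lam hK
  refine ⟨C * R ^ 2, by positivity, 2 * Real.logb 2 R, mul_pos two_pos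
    (Real.logb_pos one_lt_two hR), fun θ' _ H hH E hE w hw hprefix ↦ ?_⟩
  obtain ⟨k, hwk, hlength⟩ := exists_prefix_sWord_of_isPrefC hirr hα hw hprefix
  have hpair := boundedTracePair_of_mem_spectrum (H := H) hirr hα hH hE
  have hpow : R ^ k ≤ R * (w.length : ℝ) ^ (2 * Real.logb 2 R) :=
    pow_le_mul_rpow_logb one_lt_two hR.le w.length.cast_nonneg (by exact_mod_cast hlength)
  calc opNorm (transferM lam E w) ≤ C * R ^ (k + 1) := hbound E hpair k w hwk
    _ = C * R * R ^ k := by ring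
    _ ≤ C * R * (R * (w.length : ℝ) ^ (2 * Real.logb 2 R)) := by gcongr
    _ = C * R ^ 2 * (w.length : ℝ) ^ (2 * Real.logb 2 R) := by ring
end
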